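/- arXiv:2501.11415 — 4 statements merged into one kernel-verified Lean document; each statement's English description precedes it below -/
import Mathlib

section
/- Let p be an odd prime, let G be a finite group of order divisible by p, and let S be a Sylow p-subgroup of G that is noncyclic metacyclic. Write E = Ω1(S) and suppose E is not contained in Z(S). Then Z := E ∩ Z(S) has order p, Z is invariant under every automorphism of S, and for every g ∈ G with gZg⁻¹ ≤ S one has gZg⁻¹ = Z (i.e. g ∈ N_G(Z)). -/
open Subgroup

/-- A group is metacyclic if it has a cyclic normal subgroup with cyclic quotient. -/
def IsMetacyclic (H : Type*) [Group H] : Prop :=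
  ∃ N : Subgroup H, ∃ _ : N.Normal, IsCyclic N ∧ IsCyclic (H ⧸ N)

/-- `Ω₁(S)`: the subgroup generated by the elements of `S` of order dividing `p`. -/
def omega1 {G : Type*} [Group G] (p : ℕ) (S : Subgroup G) : Subgroup G :=
  Subgroup.closure {g : G | g ∈ S ∧ g ^ p = 1}

/-- `Z = Ω₁(S) ∩ Z(S)`, as a subgroup of `G`. -/
def Zsub {G : Type*} [Group G] (p : ℕ) (S : Subgroup G) : Subgroup G :=
  omega1 p S ⊓ (S ⊓ Subgroup.centralizer (S : Set G))

theorem s12_arith (p : ℕ) [hp : Fact p.Prime] (hodd : Odd p) (r : ℕ) (μ : ℤ)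
    (h1 : ((p ^ r : ℕ) : ℤ) ∣ μ ^ p - 1) (h2 : ((p ^ r : ℕ) : ℤ) ∣ ∑ i ∈ Finset.range p, μ ^ i) :
    r ≤ 1 := by
  by_contra hr
  have hpr : ((p : ℤ) ^ 2) ∣ ((p ^ r : ℕ) : ℤ) := by
    push_cast; exact pow_dvd_pow _ (by omega)
  have hp1 : (p : ℤ) ∣ μ ^ p - 1 := ((dvd_pow_self _ two_ne_zero).trans hpr).trans h1
  have hμ : (p : ℤ) ∣ μ - 1 := by
    rw [← ZMod.intCast_zmod_eq_zero_iff_dvd] at hp1 ⊢ 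
    push_cast at hp1 ⊢
    rwa [ZMod.pow_card] at hp1
  obtain ⟨c, hc⟩ := hμ
  have hμ' : μ = 1 + p * c := by linarith
  have h3 := odd_sq_dvd_geom_sum₂_sub (R := ℤ) 1 c hodd
  simp only [one_pow, mul_one, ← hμ'] at h3
  have h4 : (p : ℤ) ^ 2 ∣ p := by
    have := dvd_sub (hpr.trans h2) h3
    simpa using this
  have h5 : p ^ 2 ∣ p := by exact_mod_cast h4
  have := Nat.le_of_dvd hp.out.pos h5
  nlinarith [hp.out.two_le]

theorem s12_conj_pow {G : Type*} [Group G] (n z : G) (μ : ℤ) (h : z * n * z⁻¹ = n ^ μ) (k : ℕ) :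
    z ^ k * n * (z ^ k)⁻¹ = n ^ (μ ^ k) := by
  induction k with
  | zero => simp
  | succ k ih =>
    have : z ^ (k + 1) * n * (z ^ (k + 1))⁻¹ = z * (z ^ k * n * (z ^ k)⁻¹) * z⁻¹ := by
      rw [pow_succ']; group
    rw [this, ih, ← conj_zpow, h, ← zpow_mul, pow_succ']

theorem s12_mul_pow {G : Type*} [Group G] (n z : G) (μ : ℤ) (h : z * n * z⁻¹ = n ^ μ) (k : ℕ) :
    (n * z) ^ k = n ^ (∑ i ∈ Finset.range k, μ ^ i) * z ^ k := by
  induction k with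
  | zero => simp
  | succ k ih =>
    have := s12_conj_pow n z μ h k
    rw [pow_succ, ih, Finset.sum_range_succ, zpow_add, ← this]
    rw [pow_succ]; group

theorem s12_core {H : Type*} [Group H] (p : ℕ) [hp : Fact p.Prime] (hodd : Odd p)
    (hH : IsPGroup p H) (n z : H) (μ : ℤ) (h : z * n * z⁻¹ = n ^ μ) (hz : z ^ p = 1)
    (hnz : (n * z) ^ p = 1) : n ^ p = 1 := by
  obtain ⟨r, hr⟩ := (IsPGroup.iff_orderOf.1 hH) n
  have h1 : ((p ^ r : ℕ) : ℤ) ∣ μ ^ p - 1 := by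
    rw [← hr, orderOf_dvd_iff_zpow_eq_one, zpow_sub, ← s12_conj_pow n z μ h p, hz]
    simp
  have h2 : ((p ^ r : ℕ) : ℤ) ∣ ∑ i ∈ Finset.range p, μ ^ i := by
    rw [← hr, orderOf_dvd_iff_zpow_eq_one]
    rw [s12_mul_pow n z μ h p, hz, mul_one] at hnz
    exact hnz
  have := s12_arith p hodd r μ h1 h2
  apply orderOf_dvd_iff_pow_eq_one.1
  rw [hr]
  exact (pow_dvd_pow p this).trans (by simp)

theorem s12_center {H : Type*} [Group H] [Finite H] (p : ℕ) [hp : Fact p.Prime]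
    (hH : IsPGroup p H) (N : Subgroup H) [N.Normal] (hN : N ≠ ⊥) :
    ∃ z ∈ N, z ≠ 1 ∧ z ∈ Subgroup.center H := by
  have hc : IsPGroup p (ConjAct H) := hH
  have hd : p ∣ Nat.card N := by
    rcases (hH.to_subgroup N).card_eq_or_dvd with h | h
    · exact absurd (Subgroup.card_eq_one.1 h) hN
    · exact h
  obtain ⟨b, hb, hb1⟩ := hc.exists_fixed_point_of_prime_dvd_card_of_fixed_point N hd (a := 1)
    (by intro g; simp)
  refine ⟨b, b.2, fun h => hb1 (Subtype.ext h.symm), ?_⟩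
  rw [Subgroup.mem_center_iff]
  intro g
  have := congrArg Subtype.val (hb (ConjAct.toConjAct g))
  rw [ConjAct.Subgroup.val_conj_smul, ConjAct.smul_def] at this
  simp at this
  exact mul_inv_eq_iff_eq_mul.1 this

theorem s12_cyc {C : Type*} [Group C] [Finite C] [IsCyclic C] (p : ℕ) (h : ∀ x : C, x ^ p = 1) :
    Nat.card C ∣ p := by
  rw [← IsCyclic.exponent_eq_card]
  exact Monoid.exponent_dvd_of_forall_pow_eq_one h

theorem s12_comm {C : Type*} [Group C] [IsCyclic C] (x y : C) : x * y = y * x := by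
  let _ := IsCyclic.commGroup (α := C)
  exact mul_comm x y

theorem s12_cyc_mem {C : Type*} [Group C] [Finite C] [IsCyclic C] (p : ℕ) [hp : Fact p.Prime]
    (x y : C) (hx : x ^ p = 1) (hy : y ^ p = 1) (hy1 : y ≠ 1) : x ∈ Subgroup.zpowers y := by
  let M : Subgroup C :=
    { carrier := {x | x ^ p = 1}
      one_mem' := one_pow _
      mul_mem' := by
        intro a b ha hb
        have : Commute a b := s12_comm a b
        change (a * b) ^ p = 1
        rw [this.mul_pow, ha, hb, one_mul]
      inv_mem' := by
        intro a ha
        change a⁻¹ ^ p = 1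
        rw [inv_pow, ha, inv_one] }
  have hcard : Nat.card M ∣ p := s12_cyc p (fun x => Subtype.ext x.2)
  have hle : Subgroup.zpowers y ≤ M := by rw [Subgroup.zpowers_le]; exact hy
  have heq : Subgroup.zpowers y = M := Subgroup.eq_of_le_of_card_ge hle (by
    rw [Nat.card_zpowers, orderOf_eq_prime hy hy1]; exact Nat.le_of_dvd hp.out.pos hcard)
  rw [heq]; exact hx

theorem s12_norm_ord {H : Type*} [Group H] [Finite H] (p : ℕ) [hp : Fact p.Prime]
    (hH : IsPGroup p H) (N : Subgroup H) [N.Normal] (hN : IsCyclic N) (n : H) (hn : n ∈ N)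
    (hnp : n ^ p = 1) : n ∈ Subgroup.center H := by
  let M : Subgroup H :=
    { carrier := {x | x ∈ N ∧ x ^ p = 1}
      one_mem' := ⟨N.one_mem, one_pow _⟩
      mul_mem' := by
        rintro a b ⟨ha, ha'⟩ ⟨hb, hb'⟩
        refine ⟨N.mul_mem ha hb, ?_⟩
        have : Commute a b := by
          exact congrArg Subtype.val (s12_comm (⟨a, ha⟩ : N) ⟨b, hb⟩)
        rw [this.mul_pow, ha', hb', one_mul]
      inv_mem' := by
        rintro a ⟨ha, ha'⟩
        exact ⟨N.inv_mem ha, by rw [inv_pow, ha', inv_one]⟩ }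
  have hM : M.Normal := ⟨by
    rintro a ⟨ha, ha'⟩ g
    exact ⟨‹N.Normal›.conj_mem a ha g, by rw [conj_pow, ha']; simp⟩⟩
  by_cases hb : M = ⊥
  · have : n ∈ M := ⟨hn, hnp⟩
    rw [hb, Subgroup.mem_bot] at this
    rw [this]; exact Subgroup.one_mem _
  · obtain ⟨z, hz, hz1, hzc⟩ := s12_center p hH M hb
    have : IsCyclic M := isCyclic_of_injective (Subgroup.inclusion (fun x hx => hx.1 : M ≤ N))
      (Subgroup.inclusion_injective _)
    have hcard : Nat.card M ∣ p := s12_cyc p (fun x => Subtype.ext x.2.2)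
    have hzo : orderOf z = p := orderOf_eq_prime hz.2 hz1
    have hle : Subgroup.zpowers z ≤ M := by rwa [Subgroup.zpowers_le]
    have heq : Subgroup.zpowers z = M := Subgroup.eq_of_le_of_card_ge hle (by
      rw [Nat.card_zpowers, hzo]; exact Nat.le_of_dvd hp.out.pos hcard)
    have : n ∈ Subgroup.zpowers z := by rw [heq]; exact ⟨hn, hnp⟩
    exact (Subgroup.zpowers_le.2 hzc) this

theorem s12_aux {H : Type*} [Group H] [Finite H] (p : ℕ) [hp : Fact p.Prime] (hodd : Odd p)
    (hH : IsPGroup p H) (N : Subgroup H) [N.Normal] (hN : IsCyclic N) (y n : H)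
    (k : ℤ) (hn : n ∈ N) (hy : y ^ p = 1) (hx : (n * y ^ k) ^ p = 1) :
    n ∈ Subgroup.center H ∧ n ^ p = 1 := by
  have hz : (y ^ k) ^ p = 1 := by
    rw [← zpow_natCast, ← zpow_mul, mul_comm, zpow_mul, zpow_natCast, hy, one_zpow]
  obtain ⟨c, hc⟩ := hN.exists_generator
  have hμ : ∃ μ : ℤ, y ^ k * n * (y ^ k)⁻¹ = n ^ μ := by
    have : c.1 ∈ N := c.2
    obtain ⟨i, hi⟩ := Subgroup.mem_zpowers_iff.1 (hc ⟨n, hn⟩)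
    obtain ⟨μ, hμ⟩ := Subgroup.mem_zpowers_iff.1 (hc ⟨_, ‹N.Normal›.conj_mem c c.2 (y ^ k)⟩)
    have hi' : c.1 ^ i = n := congrArg Subtype.val hi
    have hμ' : c.1 ^ μ = y ^ k * c.1 * (y ^ k)⁻¹ := congrArg Subtype.val hμ
    refine ⟨μ, ?_⟩
    rw [← hi', ← conj_zpow, ← hμ', ← zpow_mul, ← zpow_mul, mul_comm]
  obtain ⟨μ, hμ⟩ := hμ
  have := s12_core p hodd hH n (y ^ k) μ hμ hz hx
  exact ⟨s12_norm_ord p hH N hN n hn this, this⟩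

theorem s12_mul {H : Type*} [Group H] [Finite H] (p : ℕ) [hp : Fact p.Prime] (hodd : Odd p)
    (hH : IsPGroup p H) (hm : IsMetacyclic H) (x y : H) (hx : x ^ p = 1) (hy : y ^ p = 1) :
    (x * y) ^ p = 1 := by
  obtain ⟨N, hNn, hN, hQ⟩ := hm
  have key : ∀ x y : H, x ^ p = 1 → y ^ p = 1 → y ∉ N → ∃ (n : H) (k : ℤ), 
      n ∈ Subgroup.center H ∧ n ^ p = 1 ∧ x = n * y ^ k := by
    intro x y hx hy hyN
    -- the image of `x` lies in the subgroup generated by the image of `y`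
    have hin : (QuotientGroup.mk x : H ⧸ N) ∈ Subgroup.zpowers (QuotientGroup.mk y : H ⧸ N) := by
      apply s12_cyc_mem p
      · rw [← QuotientGroup.mk_pow, hx]; rfl
      · rw [← QuotientGroup.mk_pow, hy]; rfl
      · rwa [ne_eq, QuotientGroup.eq_one_iff]
    obtain ⟨k, hk⟩ := Subgroup.mem_zpowers_iff.1 hin
    have hn : x * (y ^ k)⁻¹ ∈ N := by
      rw [← QuotientGroup.eq_one_iff]
      simp [← hk]
    have := s12_aux p hodd hH N hN y _ k hn hy (by simpa using hx)
    exact ⟨_, k, this.1, this.2, by simp⟩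
  have zp : ∀ (y : H) (k : ℤ), y ^ p = 1 → (y ^ k) ^ p = 1 := by
    intro y k hy
    rw [← zpow_natCast, ← zpow_mul, mul_comm, zpow_mul, zpow_natCast, hy, one_zpow]
  by_cases hyN : y ∈ N
  · by_cases hxN : x ∈ N
    · have hyc := s12_norm_ord p hH N hN y hyN hy
      have : Commute x y := (Subgroup.mem_center_iff.1 hyc x)
      rw [this.mul_pow, hx, hy, one_mul]
    · obtain ⟨n, k, hn, hnp, rfl⟩ := key y x hy hx hxN
      have h1 : Commute x (n * x ^ k) :=
        Commute.mul_right (Subgroup.mem_center_iff.1 hn x) (Commute.self_zpow x k)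
      rw [h1.mul_pow, hx, hy, one_mul]
  · obtain ⟨n, k, hn, hnp, rfl⟩ := key x y hx hy hyN
    have h1 : Commute (n * y ^ k) y :=
      Commute.mul_left (Subgroup.mem_center_iff.1 hn y).symm (Commute.self_zpow y k).symm
    rw [h1.mul_pow, hx, hy, one_mul]

theorem s12_card {H : Type*} [Group H] [Finite H] (p : ℕ)
    (hm : IsMetacyclic H) (K : Subgroup H) (hK : ∀ x ∈ K, x ^ p = 1) : Nat.card K ∣ p ^ 2 := by
  obtain ⟨N, hNn, hN, hQ⟩ := hm
  let f : K →* H ⧸ N := (QuotientGroup.mk' N).comp K.subtype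
  have h1 : Nat.card f.ker ∣ p := by
    let j : f.ker →* N :=
      { toFun := fun x => ⟨x.1.1, (QuotientGroup.eq_one_iff _).1 x.2⟩
        map_one' := rfl
        map_mul' := fun _ _ => rfl }
    have hj : Function.Injective j := fun a b hab =>
      Subtype.ext (Subtype.ext (congrArg (fun t : N => (t : H)) hab))
    have := isCyclic_of_injective j hj
    exact s12_cyc p (fun x => Subtype.ext (Subtype.ext (hK _ x.1.2)))
  have h2 : Nat.card f.range ∣ p := by
    apply s12_cyc p
    rintro ⟨_, x, rfl⟩
    apply Subtype.ext
    change f x ^ p = 1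
    rw [← map_pow, show x ^ p = 1 from Subtype.ext (hK _ x.2), map_one]
  rw [← Subgroup.card_mul_index f.ker, Subgroup.index_ker, sq]
  exact mul_dvd_mul h1 h2

theorem s12_mem_omega {G : Type*} [Group G] [Finite G] (p : ℕ) [hp : Fact p.Prime] (hodd : Odd p)
    (S : Subgroup G) (hS : IsPGroup p S) (hm : IsMetacyclic S) (g : G) :
    g ∈ omega1 p S ↔ g ∈ S ∧ g ^ p = 1 := by
  constructor
  · intro hg
    refine Subgroup.closure_induction (p := fun g _ => g ∈ S ∧ g ^ p = 1) ?_ ?_ ?_ ?_ hg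
    · intro x hx; exact hx
    · exact ⟨S.one_mem, one_pow _⟩
    · rintro x y _ _ ⟨hx, hx'⟩ ⟨hy, hy'⟩
      exact ⟨S.mul_mem hx hy, congrArg (fun t : S => (t : G))
        (s12_mul p hodd hS hm ⟨x, hx⟩ ⟨y, hy⟩ (Subtype.ext hx') (Subtype.ext hy'))⟩
    · rintro x _ ⟨hx, hx'⟩
      exact ⟨S.inv_mem hx, by rw [inv_pow, hx', inv_one]⟩
  · intro h; exact Subgroup.subset_closure h

theorem s12_mem_Z {G : Type*} [Group G] [Finite G] (p : ℕ) [hp : Fact p.Prime] (hodd : Odd p)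
    (S : Subgroup G) (hS : IsPGroup p S) (hm : IsMetacyclic S) (g : G) :
    g ∈ Zsub p S ↔ g ∈ S ∧ g ^ p = 1 ∧ ∀ s ∈ S, s * g = g * s := by
  rw [Zsub, Subgroup.mem_inf, Subgroup.mem_inf, s12_mem_omega p hodd S hS hm,
    Subgroup.mem_centralizer_iff]
  constructor
  · rintro ⟨⟨h1, h2⟩, _, h3⟩; exact ⟨h1, h2, h3⟩
  · rintro ⟨h1, h2, h3⟩; exact ⟨⟨h1, h2⟩, h1, h3⟩

theorem s12_char {G : Type*} [Group G] [Finite G] (p : ℕ) [hp : Fact p.Prime] (hodd : Odd p)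
    (S : Subgroup G) (hS : IsPGroup p S) (hm : IsMetacyclic S) :
    Subgroup.Characteristic ((Zsub p S).subgroupOf S) := by
  have key : ∀ x : S, x ∈ (Zsub p S).subgroupOf S ↔ x ^ p = 1 ∧ ∀ s : S, s * x = x * s := by
    intro x
    rw [Subgroup.mem_subgroupOf, s12_mem_Z p hodd S hS hm]
    constructor
    · rintro ⟨_, h2, h3⟩
      exact ⟨Subtype.ext h2, fun s => Subtype.ext (h3 s s.2)⟩
    · rintro ⟨h2, h3⟩
      exact ⟨x.2, congrArg (fun t : S => (t : G)) h2,
        fun s hs => congrArg (fun t : S => (t : G)) (h3 ⟨s, hs⟩)⟩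
  rw [Subgroup.characteristic_iff_le_comap]
  intro φ x hx
  rw [Subgroup.mem_comap, key]
  rw [key] at hx
  refine ⟨?_, fun s => ?_⟩
  · change φ x ^ p = 1
    rw [← map_pow, hx.1, map_one]
  · obtain ⟨r, rfl⟩ := φ.surjective s
    change φ r * φ x = φ x * φ r
    rw [← map_mul, hx.2, map_mul]

theorem s12_cards {G : Type*} [Group G] [Finite G] (p : ℕ) [hp : Fact p.Prime] (hodd : Odd p)
    (S : Subgroup G) (hS : IsPGroup p S) (hm : IsMetacyclic S)
    (hE : ¬omega1 p S ≤ S ⊓ Subgroup.centralizer (S : Set G)) :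
    Nat.card (omega1 p S) = p ^ 2 ∧ Nat.card (Zsub p S) = p := by
  have hmE := s12_mem_omega p hodd S hS hm
  have hmZ := s12_mem_Z p hodd S hS hm
  have hES : omega1 p S ≤ S := fun x hx => ((hmE x).1 hx).1
  have hZE : Zsub p S ≤ omega1 p S := inf_le_left
  have hEd : Nat.card (omega1 p S) ∣ p ^ 2 := by
    have := s12_card p hm ((omega1 p S).subgroupOf S) (by
      intro x hx
      exact Subtype.ext ((hmE x).1 (Subgroup.mem_subgroupOf.1 hx)).2)
    rwa [Nat.card_congr (Subgroup.subgroupOfEquivOfLe hES).toEquiv] at this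
  have hne : Zsub p S ≠ omega1 p S := by
    intro h
    apply hE
    rw [← h]
    exact inf_le_right
  have hZ1 : Zsub p S ≠ ⊥ := by
    have hn : ((omega1 p S).subgroupOf S).Normal := ⟨by
      intro n hn g
      rw [Subgroup.mem_subgroupOf, hmE] at hn ⊢
      refine ⟨(g * n * g⁻¹).2, ?_⟩
      have : ((g * n * g⁻¹ : S) : G) = g * n * (g : G)⁻¹ := rfl
      rw [this, conj_pow, hn.2]; simp⟩
    have hb : (omega1 p S).subgroupOf S ≠ ⊥ := by
      intro h
      apply hE
      intro x hx
      have : (⟨x, hES hx⟩ : S) ∈ (omega1 p S).subgroupOf S := hx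
      rw [h, Subgroup.mem_bot] at this
      have hx1 : x = 1 := congrArg (fun t : S => (t : G)) this
      rw [hx1]; exact Subgroup.one_mem _
    obtain ⟨z, hz, hz1, hzc⟩ := s12_center p hS _ hb
    intro h
    apply hz1
    have : (z : G) ∈ Zsub p S := by
      rw [hmZ]
      refine ⟨z.2, ((hmE z).1 hz).2, fun s hs => ?_⟩
      exact congrArg (fun t : S => (t : G)) (Subgroup.mem_center_iff.1 hzc ⟨s, hs⟩)
    rw [h, Subgroup.mem_bot] at this
    exact Subtype.ext this
  have hlt : Nat.card (Zsub p S) < Nat.card (omega1 p S) := by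
    by_contra hlt
    exact hne (Subgroup.eq_of_le_of_card_ge hZE (not_lt.1 hlt))
  have hZd := Subgroup.card_dvd_of_le hZE
  have hZ1' : Nat.card (Zsub p S) ≠ 1 := fun h => hZ1 (Subgroup.card_eq_one.1 h)
  obtain ⟨i, hi, hi'⟩ := (Nat.dvd_prime_pow hp.out).1 hEd
  rw [hi'] at hZd hlt ⊢
  obtain ⟨j, hj, hj'⟩ := (Nat.dvd_prime_pow hp.out).1 hZd
  rw [hj'] at hlt hZ1' ⊢
  have h1 : j < i := (Nat.pow_lt_pow_iff_right hp.out.one_lt).1 hlt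
  have h2 : j ≠ 0 := by rintro rfl; simp at hZ1'
  have h3 : j = 1 := by omega
  have h4 : i = 2 := by omega
  subst h3 h4
  simp

/-- Sylow conjugation inside a subgroup. -/
theorem s12_sylow {G : Type*} [Group G] [Finite G] (p : ℕ) [hp : Fact p.Prime] (T : Sylow p G)
    (K Q : Subgroup G) (hT : (T : Subgroup G) ≤ K) (hQ : IsPGroup p Q) (hQK : Q ≤ K) :
    ∃ k ∈ K, ∀ q ∈ Q, k * q * k⁻¹ ∈ (T : Subgroup G) := by
  have hQ' : IsPGroup p (Q.subgroupOf K) := hQ.comap_subtype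
  obtain ⟨R, hR⟩ := hQ'.exists_le_sylow
  obtain ⟨k, hk⟩ := MulAction.exists_smul_eq K R (T.subtype hT)
  refine ⟨k, k.2, fun q hq => ?_⟩
  have h1 : (⟨q, hQK hq⟩ : K) ∈ R := hR hq
  have h2 : k * ⟨q, hQK hq⟩ * k⁻¹ ∈ (k • R : Sylow p K) := by
    have := Subgroup.smul_mem_pointwise_smul _ (MulAut.conj k) (R : Subgroup K) h1
    exact this
  rw [hk] at h2
  exact h2

/-- coordinates -/
theorem s12_coord {G : Type*} [Group G] [Finite G] (p : ℕ) [hp : Fact p.Prime] (E : Subgroup G)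
    (hE : Nat.card E = p ^ 2) (hEp : ∀ x ∈ E, x ^ p = 1) (a z : G) (ha : a ∈ E) (hz : z ∈ E)
    (ha1 : a ≠ 1) (haz : z ∉ Subgroup.zpowers a) (e : G) (he : e ∈ E) :
    ∃ i j : ℤ, e = a ^ i * z ^ j := by
  have hcomm : ∀ x ∈ E, ∀ y ∈ E, x * y = y * x := by
    have := IsPGroup.isMulCommutative_of_card_eq_prime_sq hE
    intro x hx y hy
    exact congrArg (fun t : E => (t : G)) (mul_comm' (⟨x, hx⟩ : E) ⟨y, hy⟩)
  have hc : Commute a z := hcomm a ha z hz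
  let K : Subgroup G :=
    { carrier := {x | ∃ i j : ℤ, x = a ^ i * z ^ j}
      one_mem' := ⟨0, 0, by simp⟩
      mul_mem' := by
        rintro _ _ ⟨i, j, rfl⟩ ⟨i', j', rfl⟩
        refine ⟨i + i', j + j', ?_⟩
        rw [zpow_add, zpow_add, mul_assoc, mul_assoc, ← mul_assoc (z ^ j),
          ((hc.zpow_zpow i' j).eq).symm, mul_assoc]
      inv_mem' := by
        rintro _ ⟨i, j, rfl⟩
        refine ⟨-i, -j, ?_⟩
        rw [zpow_neg, zpow_neg, (hc.zpow_zpow i j).eq, mul_inv_rev] }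
  have hKE : K ≤ E := by
    rintro _ ⟨i, j, rfl⟩
    exact E.mul_mem (E.zpow_mem ha _) (E.zpow_mem hz _)
  have haK : Subgroup.zpowers a ≤ K := by
    rw [Subgroup.zpowers_le]; exact ⟨1, 0, by simp⟩
  have hzK : z ∈ K := ⟨0, 1, by simp⟩
  have hca : Nat.card (Subgroup.zpowers a) = p := by
    rw [Nat.card_zpowers, orderOf_eq_prime (hEp a ha) ha1]
  have hd := Subgroup.card_dvd_of_le hKE
  rw [hE] at hd
  have hlt : p < Nat.card K := by
    by_contra hlt
    apply haz
    rw [Subgroup.eq_of_le_of_card_ge haK (by rw [hca]; exact not_lt.1 hlt)]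
    exact hzK
  obtain ⟨i, hi, hi'⟩ := (Nat.dvd_prime_pow hp.out).1 hd
  have : i = 2 := by
    rw [hi'] at hlt
    have := (Nat.pow_lt_pow_iff_right hp.out.one_lt).1 ((pow_one p).trans_lt hlt)
    omega
  have heq : K = E := Subgroup.eq_of_le_of_card_ge hKE (by rw [hE, hi', this])
  rw [← heq] at he
  exact he

/-- a `p`-element normalizing `E` and centralizing `a` acts by a transvection; some power
is the given one -/
theorem s12_transv {G : Type*} [Group G] [Finite G] (p : ℕ) [hp : Fact p.Prime] (E : Subgroup G)
    (hE : Nat.card E = p ^ 2) (hEp : ∀ x ∈ E, x ^ p = 1) (a z : G) (ha : a ∈ E) (hz : z ∈ E)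
    (ha1 : a ≠ 1) (haz : z ∉ Subgroup.zpowers a) (u : G) (n : ℕ) (hu : u ^ p ^ n = 1)
    (huE : ∀ e ∈ E, u * e * u⁻¹ ∈ E) (hua : u * a * u⁻¹ = a) (huz : u * z * u⁻¹ ≠ z) (l : ℤ) :
    ∃ k : ℕ, u ^ k * a * (u ^ k)⁻¹ = a ∧ u ^ k * z * (u ^ k)⁻¹ = z * a ^ l := by
  have hcomm : ∀ x ∈ E, ∀ y ∈ E, x * y = y * x := by
    have := IsPGroup.isMulCommutative_of_card_eq_prime_sq hE
    intro x hx y hy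
    exact congrArg (fun t : E => (t : G)) (mul_comm' (⟨x, hx⟩ : E) ⟨y, hy⟩)
  have hc : Commute a z := hcomm a ha z hz
  have hao : orderOf a = p := orderOf_eq_prime (hEp a ha) ha1
  obtain ⟨i, j, hij⟩ := s12_coord p E hE hEp a z ha hz ha1 haz _ (huE z hz)
  have hza : ∀ k : ℕ, u ^ k * a * (u ^ k)⁻¹ = a := by
    intro k
    have h : Commute u a := mul_inv_eq_iff_eq_mul.1 hua
    rw [mul_inv_eq_iff_eq_mul]; exact h.pow_left k
  have hpow : ∀ k : ℕ, ∃ m : ℤ, u ^ k * z * (u ^ k)⁻¹ = a ^ m * z ^ (j ^ k) := by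
    intro k
    induction k with
    | zero => exact ⟨0, by simp⟩
    | succ k ih =>
      obtain ⟨m, hm⟩ := ih
      refine ⟨m + i * j ^ k, ?_⟩
      have : u ^ (k + 1) * z * (u ^ (k + 1))⁻¹ = u * (u ^ k * z * (u ^ k)⁻¹) * u⁻¹ := by
        rw [pow_succ']; group
      rw [this, hm]
      have : u * (a ^ m * z ^ j ^ k) * u⁻¹ = (u * a * u⁻¹) ^ m * (u * z * u⁻¹) ^ (j ^ k) := by
        rw [conj_zpow, conj_zpow]; group
      rw [this, hua, hij, (hc.zpow_zpow i j).mul_zpow, ← zpow_mul, ← zpow_mul, zpow_add, pow_succ',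
        mul_assoc]
  have hj : z ^ j = z := by
    obtain ⟨m, hm⟩ := hpow (p ^ n)
    rw [hu] at hm
    have h1 : z ^ (1 - j ^ p ^ n) = a ^ m := by
      rw [zpow_sub, zpow_one, mul_inv_eq_iff_eq_mul]
      simpa using hm
    have hz1 : z ≠ 1 := by rintro rfl; exact haz (Subgroup.one_mem _)
    have hzo : orderOf z = p := orderOf_eq_prime (hEp z hz) hz1
    have h2 : (p : ℤ) ∣ 1 - j ^ p ^ n := by
      by_contra hnd
      apply haz
      have hcop : IsCoprime (p : ℤ) (1 - j ^ p ^ n) :=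
        (Nat.prime_iff_prime_int.1 hp.out).coprime_iff_not_dvd.2 hnd
      obtain ⟨r, s, hrs⟩ := hcop
      have : z = (a ^ m) ^ s := by
        rw [← h1, ← zpow_mul]
        have h3 : (1 - j ^ p ^ n) * s = 1 - p * r := by linarith
        rw [h3, zpow_sub, zpow_mul, zpow_natCast, hEp z hz]; simp
      rw [this]
      exact Subgroup.zpow_mem _ (Subgroup.zpow_mem _ (Subgroup.mem_zpowers a) _) _
    have h3 : (p : ℤ) ∣ j - 1 := by
      rw [← ZMod.intCast_zmod_eq_zero_iff_dvd] at h2 ⊢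
      push_cast at h2 ⊢
      rw [ZMod.pow_card_pow] at h2
      rw [← neg_sub, h2, neg_zero]
    rw [← hzo, orderOf_dvd_iff_zpow_eq_one, zpow_sub, zpow_one, mul_inv_eq_one] at h3
    exact h3
  rw [hj] at hij
  have hit : ∀ k : ℕ, u ^ k * z * (u ^ k)⁻¹ = z * a ^ (i * k) := by
    intro k
    induction k with
    | zero => simp
    | succ k ih =>
      have : u ^ (k + 1) * z * (u ^ (k + 1))⁻¹ = u * (u ^ k * z * (u ^ k)⁻¹) * u⁻¹ := by
        rw [pow_succ']; group
      rw [this, ih]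
      have : u * (z * a ^ (i * k)) * u⁻¹ = (u * z * u⁻¹) * (u * a * u⁻¹) ^ (i * k) := by
        rw [conj_zpow]; group
      rw [this, hua, hij, (hc.zpow_left i).eq, mul_assoc, ← zpow_add]
      congr 2
      push_cast; ring
  have hi : ¬ (p : ℤ) ∣ i := by
    intro h
    rw [← hao, orderOf_dvd_iff_zpow_eq_one] at h
    rw [h, one_mul] at hij
    exact huz hij
  obtain ⟨r, s, hrs⟩ : IsCoprime (p : ℤ) i :=
    (Nat.prime_iff_prime_int.1 hp.out).coprime_iff_not_dvd.2 hi
  refine ⟨((s * l) % p).toNat, hza _, ?_⟩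
  rw [hit]
  congr 1
  have hnn : 0 ≤ (s * l) % (p : ℤ) := Int.emod_nonneg _ (by exact_mod_cast hp.out.ne_zero)
  rw [Int.toNat_of_nonneg hnn, ← mul_inv_eq_one, ← zpow_neg, ← zpow_add,
    ← orderOf_dvd_iff_zpow_eq_one, hao]
  have h1 := Int.emod_add_mul_ediv (s * l) p
  refine ⟨- i * ((s * l) / p) - r * l, ?_⟩
  have h2 : (s * l) % (p : ℤ) = s * l - p * ((s * l) / p) := by linarith
  rw [h2]
  linear_combination l * hrs

theorem s12_weyl {G : Type*} [Group G] (a z x y : G) (hc : a * z = z * a)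
    (hxz : x * z * x⁻¹ = z) (hxa : x * a * x⁻¹ = a * z)
    (hya : y * a * y⁻¹ = a) (hyz : y * z * y⁻¹ = z * a⁻¹) :
    ∃ n : G, n * a * n⁻¹ = a⁻¹ ∧ n * z * n⁻¹ = z⁻¹ := by
  have e1 : MulAut.conj x z = z := hxz
  have e2 : MulAut.conj x a = a * z := hxa
  have e3 : MulAut.conj y a = a := hya
  have e4 : MulAut.conj y z = z * a⁻¹ := hyz
  have hwz : MulAut.conj (x * y * x) z = a⁻¹ := by
    simp only [map_mul, MulAut.mul_apply, map_inv, e1, e2, e3, e4]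
    group
  have hwa : MulAut.conj (x * y * x) a = z := by
    simp only [map_mul, MulAut.mul_apply, map_inv, e1, e2, e3, e4]
    have : a * z * (z * (a * z)⁻¹) = a * z * a⁻¹ := by group
    rw [this, hc]; group
  refine ⟨(x * y * x) * (x * y * x), ?_, ?_⟩
  · change MulAut.conj _ a = _
    rw [map_mul, MulAut.mul_apply, hwa, hwz]
  · change MulAut.conj _ z = _
    rw [map_mul, MulAut.mul_apply, hwz, map_inv, hwa]

/-- no element normalizing `S` inverts `E` unless `S` centralizes `E` -/
theorem s12_fpf {G : Type*} [Group G] [Finite G] (p : ℕ) [hp : Fact p.Prime] (hodd : Odd p)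
    (S E : Subgroup G) (hS : IsPGroup p S) (hmE : ∀ g, g ∈ E ↔ g ∈ S ∧ g ^ p = 1)
    (t : G) (htS : ∀ s ∈ S, t * s * t⁻¹ ∈ S) (htE : ∀ e ∈ E, t * e * t⁻¹ = e⁻¹) :
    ∀ s ∈ S, ∀ e ∈ E, s * e * s⁻¹ = e := by
  have hfix : ∀ c ∈ S, t * c * t⁻¹ = c → c = 1 := by
    intro c hc htc
    by_contra hc1
    obtain ⟨k, hk⟩ := (IsPGroup.iff_orderOf.1 hS) ⟨c, hc⟩
    rw [Subgroup.orderOf_mk] at hk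
    cases k with
    | zero => rw [pow_zero, orderOf_eq_one_iff] at hk; exact hc1 hk
    | succ k =>
      have h1 : c ^ p ^ k ≠ 1 := by
        intro h
        have := orderOf_dvd_of_pow_eq_one h
        rw [hk] at this
        have := (Nat.pow_dvd_pow_iff_le_right hp.out.one_lt).1 this
        omega
      have h2 : (c ^ p ^ k) ^ p = 1 := by
        rw [← pow_mul, ← pow_succ, ← hk, pow_orderOf_eq_one]
      have h3 : c ^ p ^ k ∈ E := (hmE _).2 ⟨S.pow_mem hc _, h2⟩
      have h4 := htE _ h3
      rw [← conj_pow, htc] at h4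
      have h5 : (c ^ p ^ k) ^ 2 = 1 := by
        rw [sq]; nth_rewrite 1 [h4]; simp
      have h6 : orderOf (c ^ p ^ k) = p := orderOf_eq_prime h2 h1
      have h7 := orderOf_dvd_of_pow_eq_one h5
      rw [h6] at h7
      have := (Nat.prime_dvd_prime_iff_eq hp.out Nat.prime_two).1 h7
      subst this
      exact absurd hodd (by decide)
  let φ : S → S := fun s => ⟨(s : G)⁻¹ * (t * s * t⁻¹), S.mul_mem (S.inv_mem s.2) (htS s s.2)⟩
  have hinj : Function.Injective φ := by
    intro r s hrs
    have h : (r : G)⁻¹ * (t * r * t⁻¹) = (s : G)⁻¹ * (t * s * t⁻¹) :=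
      congrArg (fun t : S => (t : G)) hrs
    have := hfix (r * (s : G)⁻¹) (S.mul_mem r.2 (S.inv_mem s.2)) (by
      have h' : t * r * t⁻¹ = r * ((s : G)⁻¹ * (t * s * t⁻¹)) := by rw [← h]; group
      have : t * (r * (s : G)⁻¹) * t⁻¹ = (t * r * t⁻¹) * (t * s * t⁻¹)⁻¹ := by group
      rw [this, h']; group)
    exact Subtype.ext (mul_inv_eq_one.1 this)
  have hsurj := Finite.surjective_of_injective hinj
  intro s hs e he
  obtain ⟨r, hr⟩ := hsurj ⟨s, hs⟩
  have hr' : s = (r : G)⁻¹ * (t * r * t⁻¹) := (congrArg (fun t : S => (t : G)) hr).symm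
  have hcE : ∀ q ∈ S, ∀ e ∈ E, q * e * q⁻¹ ∈ E := by
    intro q hq e he
    have := (hmE e).1 he
    rw [hmE]
    exact ⟨S.mul_mem (S.mul_mem hq this.1) (S.inv_mem hq), by rw [conj_pow, this.2]; simp⟩
  have ht' : t⁻¹ * e * t = e⁻¹ := by
    have := htE _ (E.inv_mem he)
    rw [inv_inv] at this
    nth_rewrite 1 [← this]; group
  have h1 : s * e * s⁻¹ = (r : G)⁻¹ * (t * (r * (t⁻¹ * e * t) * (r : G)⁻¹) * t⁻¹) * r := by
    rw [hr']; group
  rw [h1, ht', htE _ (hcE r r.2 _ (E.inv_mem he))]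
  group

theorem s12_main {G : Type*} [Group G] [Finite G] (p : ℕ) [hp : Fact p.Prime] (hodd : Odd p)
    (S : Sylow p G) (E : Subgroup G) (hmE : ∀ g, g ∈ E ↔ g ∈ (S : Subgroup G) ∧ g ^ p = 1)
    (hE : Nat.card E = p ^ 2) (z g : G) (hzE : z ∈ E) (hz1 : z ≠ 1)
    (hzc : ∀ s ∈ (S : Subgroup G), s * z = z * s)
    (haS : g * z * g⁻¹ ∈ (S : Subgroup G)) (hza : g * z * g⁻¹ ∉ Subgroup.zpowers z)
    (hnc : ∃ s ∈ (S : Subgroup G), s * (g * z * g⁻¹) * s⁻¹ ≠ g * z * g⁻¹) : False := by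
  obtain ⟨a, ha⟩ : ∃ a, a = g * z * g⁻¹ := ⟨_, rfl⟩
  rw [← ha] at haS hza hnc
  have hEp : ∀ x ∈ E, x ^ p = 1 := fun x hx => ((hmE x).1 hx).2
  have hES : E ≤ S := fun x hx => ((hmE x).1 hx).1
  have hcomm : ∀ x ∈ E, ∀ y ∈ E, x * y = y * x := by
    have := IsPGroup.isMulCommutative_of_card_eq_prime_sq hE
    intro x hx y hy
    exact congrArg (fun t : E => (t : G)) (mul_comm' (⟨x, hx⟩ : E) ⟨y, hy⟩)
  have hcE : ∀ q ∈ (S : Subgroup G), ∀ e ∈ E, q * e * q⁻¹ ∈ E := by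
    intro q hq e he
    have := (hmE e).1 he
    rw [hmE]
    exact ⟨mul_mem (mul_mem hq this.1) (inv_mem hq), by rw [conj_pow, this.2]; simp⟩
  have haE : a ∈ E := (hmE a).2 ⟨haS, by rw [ha, conj_pow, hEp z hzE]; simp⟩
  have ha1 : a ≠ 1 := by intro h; rw [h] at hza; exact hza (one_mem _)
  have hzo : orderOf z = p := orderOf_eq_prime (hEp z hzE) hz1
  have hao : orderOf a = p := orderOf_eq_prime (hEp a haE) ha1
  have hzna : z ∉ Subgroup.zpowers a := by
    intro h
    apply hza
    have hle : Subgroup.zpowers z ≤ Subgroup.zpowers a := Subgroup.zpowers_le.2 h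
    rw [Subgroup.eq_of_le_of_card_ge hle (by rw [Nat.card_zpowers, Nat.card_zpowers, hzo, hao])]
    exact Subgroup.mem_zpowers a
  have hpel : ∀ s ∈ (S : Subgroup G), ∃ n : ℕ, s ^ p ^ n = 1 := by
    intro s hs
    obtain ⟨n, hn⟩ := (isPGroup_iff_pow_pow_eq_one.1 S.isPGroup') ⟨s, hs⟩
    exact ⟨n, congrArg (fun t : (S : Subgroup G) => (t : G)) hn⟩
  -- an element conjugating `z` to `a` and normalizing `E`
  have hg' : ∃ g' : G, a = g' * z * g'⁻¹ ∧ ∀ e ∈ E, g'⁻¹ * e * g' ∈ E := by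
    have hmemT : ∀ x, x ∈ ((g • S : Sylow p G) : Subgroup G) ↔ g⁻¹ * x * g ∈ (S : Subgroup G) := by
      intro x
      rw [Sylow.coe_subgroup_smul, Subgroup.mem_pointwise_smul_iff_inv_smul_mem]
      simp [MulAut.smul_def]
    obtain ⟨k, hk, hkE⟩ := s12_sylow p (g • S) (Subgroup.centralizer {a}) E
      (by
        intro x hx
        have h1 := hzc _ ((hmemT x).1 hx)
        rw [Subgroup.mem_centralizer_singleton_iff]
        have h2 : x * a = g * ((g⁻¹ * x * g) * z) * g⁻¹ := by rw [ha]; group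
        rw [h2, h1, ha]; group)
      (S.isPGroup'.to_le hES)
      (by
        intro x hx
        rw [Subgroup.mem_centralizer_singleton_iff]
        exact hcomm x hx a haE)
    rw [Subgroup.mem_centralizer_singleton_iff] at hk
    refine ⟨k⁻¹ * g, ?_, ?_⟩
    · have : k⁻¹ * g * z * (k⁻¹ * g)⁻¹ = k⁻¹ * (a * k) := by rw [ha]; group
      rw [this, ← hk]; group
    · intro e he
      have h1 := (hmemT _).1 (hkE e he)
      have h2 : (k⁻¹ * g)⁻¹ * e * (k⁻¹ * g) = g⁻¹ * (k * e * k⁻¹) * g := by group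
      rw [h2, hmE]
      refine ⟨h1, ?_⟩
      have h3 : g⁻¹ * (k * e * k⁻¹) * g = (g⁻¹ * k) * e * (g⁻¹ * k)⁻¹ := by group
      rw [h3, conj_pow, hEp e he]; simp
  obtain ⟨g', hag, hg'⟩ := hg'
  have hg'' : ∀ e ∈ E, g' * e * g'⁻¹ ∈ E := by
    let φ : E → E := fun e => ⟨g'⁻¹ * e * g', hg' e e.2⟩
    have hinj : Function.Injective φ := by
      intro r s hrs
      have h : g'⁻¹ * r * g' = g'⁻¹ * s * g' := congrArg (fun t : E => (t : G)) hrs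
      exact Subtype.ext (by simpa using h)
    intro e he
    obtain ⟨r, hr⟩ := Finite.surjective_of_injective hinj ⟨e, he⟩
    have hr' : g'⁻¹ * r * g' = e := congrArg (fun t : E => (t : G)) hr
    have : g' * e * g'⁻¹ = r := by rw [← hr']; group
    rw [this]; exact r.2
  obtain ⟨s, hs, hsa⟩ := hnc
  have hsz : s * z * s⁻¹ = z := by rw [hzc s hs]; group
  obtain ⟨m, hm⟩ := hpel s hs
  obtain ⟨k1, hx1, hx2⟩ := s12_transv p E hE hEp z a hzE haE hz1 hza s m hm (hcE s hs) hsz hsa 1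
  -- the conjugate of `s`
  have hum : (g' * s * g'⁻¹) ^ p ^ m = 1 := by rw [conj_pow, hm]; simp
  have huE : ∀ e ∈ E, (g' * s * g'⁻¹) * e * (g' * s * g'⁻¹)⁻¹ ∈ E := by
    intro e he
    have : (g' * s * g'⁻¹) * e * (g' * s * g'⁻¹)⁻¹ = g' * (s * (g'⁻¹ * e * g') * s⁻¹) * g'⁻¹ := by
      group
    rw [this]
    exact hg'' _ (hcE s hs _ (hg' e he))
  have hua : (g' * s * g'⁻¹) * a * (g' * s * g'⁻¹)⁻¹ = a := by
    have : (g' * s * g'⁻¹) * a * (g' * s * g'⁻¹)⁻¹ = g' * (s * z * s⁻¹) * g'⁻¹ := by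
      rw [hag]; group
    rw [this, hsz, hag]
  have huz : (g' * s * g'⁻¹) * z * (g' * s * g'⁻¹)⁻¹ ≠ z := by
    intro h
    have hc1 : Commute (g' * s * g'⁻¹) z := mul_inv_eq_iff_eq_mul.1 h
    have hc2 : Commute (g' * s * g'⁻¹) a := mul_inv_eq_iff_eq_mul.1 hua
    obtain ⟨i, j, hij⟩ := s12_coord p E hE hEp a z haE hzE ha1 hzna _ (hg'' a haE)
    have hc3 : Commute (g' * s * g'⁻¹) (g' * a * g'⁻¹) := by
      rw [hij]; exact (hc2.zpow_right i).mul_right (hc1.zpow_right j)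
    apply hsa
    have h4 : s * a * s⁻¹ = g'⁻¹ * ((g' * s * g'⁻¹) * (g' * a * g'⁻¹)) * (s * g'⁻¹)⁻¹ := by group
    rw [h4, hc3.eq]; group
  obtain ⟨k2, hy1, hy2⟩ := s12_transv p E hE hEp a z haE hzE ha1 hzna (g' * s * g'⁻¹) m hum huE
    hua huz (-1)
  obtain ⟨n, hna, hnz⟩ := s12_weyl a z (s ^ k1) ((g' * s * g'⁻¹) ^ k2) (hcomm a haE z hzE)
    hx1 (by rw [hx2, zpow_one]) hy1 (by rw [hy2, zpow_neg_one])
  have hnE : ∀ e ∈ E, n * e * n⁻¹ = e⁻¹ := by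
    intro e he
    obtain ⟨i, j, rfl⟩ := s12_coord p E hE hEp a z haE hzE ha1 hzna e he
    have h1 : n * (a ^ i * z ^ j) * n⁻¹ = (n * a * n⁻¹) ^ i * (n * z * n⁻¹) ^ j := by
      rw [conj_zpow, conj_zpow]; group
    have hc : Commute a z := hcomm a haE z hzE
    rw [h1, hna, hnz, (hc.zpow_zpow i j).eq, mul_inv_rev, inv_zpow, inv_zpow]
  -- Frattini
  let K : Subgroup G :=
    { carrier := {k | ∃ s ∈ (S : Subgroup G), ∀ e ∈ E, k * e * k⁻¹ = s * e * s⁻¹}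
      one_mem' := ⟨1, one_mem _, fun _ _ => rfl⟩
      mul_mem' := by
        rintro k l ⟨s, hs, hks⟩ ⟨r, hr, hlr⟩
        refine ⟨s * r, mul_mem hs hr, fun e he => ?_⟩
        have h1 : k * l * e * (k * l)⁻¹ = k * (l * e * l⁻¹) * k⁻¹ := by group
        rw [h1, hlr e he, hks _ (hcE r hr e he)]; group
      inv_mem' := by
        rintro k ⟨s, hs, hks⟩
        refine ⟨s⁻¹, inv_mem hs, fun e he => ?_⟩
        have h1 := hks _ (hcE _ (inv_mem hs) e he)
        have h2 : s * (s⁻¹ * e * s⁻¹⁻¹) * s⁻¹ = e := by group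
        rw [h2] at h1
        nth_rewrite 1 [← h1]; group }
  have hSK : (S : Subgroup G) ≤ K := fun s hs => ⟨s, hs, fun _ _ => rfl⟩
  have hninv : ∀ e ∈ E, n⁻¹ * e * n = e⁻¹ := by
    intro e he
    have := hnE _ (inv_mem he)
    rw [inv_inv] at this
    nth_rewrite 1 [← this]; group
  obtain ⟨k, ⟨r, hr, hkr⟩, hkS⟩ := s12_sylow p S K
    ((S : Subgroup G).map (MulAut.conj n).toMonoidHom) hSK (S.isPGroup'.map _) (by
      rintro _ ⟨q, hq, rfl⟩
      refine ⟨q, hq, fun e he => ?_⟩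
      change (n * q * n⁻¹) * e * (n * q * n⁻¹)⁻¹ = _
      have h1 : (n * q * n⁻¹) * e * (n * q * n⁻¹)⁻¹ = n * (q * (n⁻¹ * e * n) * q⁻¹) * n⁻¹ := by
        group
      rw [h1, hninv e he, hnE _ (hcE q hq _ (inv_mem he))]; group)
  have hfin := s12_fpf p hodd S E S.isPGroup' hmE (r⁻¹ * k * n)
    (by
      intro q hq
      have h1 : k * (n * q * n⁻¹) * k⁻¹ ∈ (S : Subgroup G) := hkS _ ⟨q, hq, rfl⟩
      have h2 : (r⁻¹ * k * n) * q * (r⁻¹ * k * n)⁻¹ = r⁻¹ * (k * (n * q * n⁻¹) * k⁻¹) * r := by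
        group
      rw [h2]
      exact mul_mem (mul_mem (inv_mem hr) h1) hr)
    (by
      intro e he
      have h2 : (r⁻¹ * k * n) * e * (r⁻¹ * k * n)⁻¹ = r⁻¹ * (k * (n * e * n⁻¹) * k⁻¹) * r := by
        group
      rw [h2, hnE e he, hkr _ (inv_mem he)]; group)
  exact hsa (hfin s hs a haE)

theorem stmt12 (p : ℕ) [Fact p.Prime] (hodd : Odd p) {G : Type*} [Group G] [Fintype G]
    (hdvd : p ∣ Fintype.card G) (S : Sylow p G)
    (hnc : ¬IsCyclic (S : Subgroup G)) (hmc : IsMetacyclic (S : Subgroup G))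
    (hE : ¬omega1 p (S : Subgroup G) ≤
      (S : Subgroup G) ⊓ Subgroup.centralizer ((S : Subgroup G) : Set G)) :
    Nat.card (Zsub p (S : Subgroup G)) = p ∧
      Subgroup.Characteristic ((Zsub p (S : Subgroup G)).subgroupOf (S : Subgroup G)) ∧
      ∀ g : G,
        Subgroup.map (MulAut.conj g).toMonoidHom (Zsub p (S : Subgroup G)) ≤ (S : Subgroup G) →
        Subgroup.map (MulAut.conj g).toMonoidHom (Zsub p (S : Subgroup G)) =
          Zsub p (S : Subgroup G) := by
  have hS : IsPGroup p (S : Subgroup G) := S.isPGroup'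
  have hmE := s12_mem_omega p hodd (S : Subgroup G) hS hmc
  have hmZ := s12_mem_Z p hodd (S : Subgroup G) hS hmc
  obtain ⟨hcE, hcZ⟩ := s12_cards p hodd (S : Subgroup G) hS hmc hE
  refine ⟨hcZ, s12_char p hodd (S : Subgroup G) hS hmc, fun g hg => ?_⟩
  have hp : p.Prime := Fact.out
  have hnt : Nontrivial (Zsub p (S : Subgroup G)) := by
    rw [← Finite.one_lt_card_iff_nontrivial, hcZ]; exact hp.one_lt
  obtain ⟨⟨z, hz⟩, hz1⟩ := exists_ne (1 : Zsub p (S : Subgroup G))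
  have hz1 : z ≠ 1 := fun h => hz1 (Subtype.ext h)
  have hzZ := (hmZ z).1 hz
  have hzz : Subgroup.zpowers z = Zsub p (S : Subgroup G) :=
    Subgroup.eq_of_le_of_card_ge (Subgroup.zpowers_le.2 hz) (by
      rw [hcZ, Nat.card_zpowers, orderOf_eq_prime hzZ.2.1 hz1])
  have haS : g * z * g⁻¹ ∈ (S : Subgroup G) := hg ⟨z, hz, rfl⟩
  by_cases hza : g * z * g⁻¹ ∈ Subgroup.zpowers z
  · apply Subgroup.eq_of_le_of_card_ge
    · rw [← hzz, MonoidHom.map_zpowers, Subgroup.zpowers_le]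
      exact hza
    · exact (Nat.card_congr (Subgroup.equivMapOfInjective _ _
        (MulAut.conj g).injective).toEquiv).le
  · exfalso
    refine s12_main p hodd S (omega1 p S) hmE hcE z g ((hmE z).2 ⟨hzZ.1, hzZ.2.1⟩) hz1 hzZ.2.2
      haS hza ?_
    by_contra hcon
    push Not at hcon
    apply hza
    rw [hzz, hmZ]
    refine ⟨haS, by rw [conj_pow, hzZ.2.1]; simp, fun s hs => ?_⟩
    exact mul_inv_eq_iff_eq_mul.1 (hcon s hs)
end

section
/- Let p be an odd prime and let l, m, n, q be positive integers with l ≤ m, q ≤ m ≤ l + n, q + l ≥ m and (1+p^l)^{p^n} ≡ 1 (mod p^m). Let S be a finite group of order p^{m+n} generated by elements x, y such that x has order p^m, y^{p^n} = x^{p^q} and y·x·y⁻¹ = x^{1+p^l}. Then Z(S) = ⟨x^{p^{m−l}}, y^{p^{m−l}}⟩ and Ω1(S) = ⟨x^{p^{m−1}}, x^{−p^{q−1}}·y^{p^{n−1}}⟩. In particular, if q = m then Ω1(S) = ⟨x^{p^{m−1}}, y^{p^{n−1}}⟩. -/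
open Subgroup

/-- `Ω₁(S)`: the subgroup generated by the elements of `S` of order dividing `p`. -/
def omega1Grp (p : ℕ) (S : Type*) [Group S] : Subgroup S :=
  Subgroup.closure {g : S | g ^ p = 1}

lemma aux_dvd {d a b : ℤ} (h : d ∣ a) (e : b = a) : d ∣ b := e ▸ h

lemma aux_lte (p l M b : ℕ) [hp : Fact p.Prime] (hodd : Odd p) (hl : 0 < l) :
    ((p : ℤ) ^ M ∣ (1 + (p : ℤ) ^ l) ^ b - 1) ↔ p ^ (M - l) ∣ b := by
  have h1 : (p : ℤ) ∣ (1 + (p : ℤ) ^ l) - 1 := by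
    simpa using dvd_pow_self (p : ℤ) hl.ne'
  have h2 : ¬ (p : ℤ) ∣ (1 + (p : ℤ) ^ l) := by
    intro h
    have h3 := dvd_sub h h1
    have : (p : ℤ) ∣ 1 := by simpa using h3
    have h4 : p ∣ 1 := by exact_mod_cast this
    exact hp.out.one_lt.ne' (Nat.dvd_one.1 h4)
  have h := Int.emultiplicity_pow_sub_pow hp.out hodd h1 h2 b
  rw [one_pow] at h
  have h5 : emultiplicity (p : ℤ) ((1 + (p : ℤ) ^ l) - 1) = l := by
    rw [add_sub_cancel_left]
    exact emultiplicity_pow_self_of_prime (Nat.prime_iff_prime_int.1 hp.out) l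
  rw [pow_dvd_iff_le_emultiplicity, pow_dvd_iff_le_emultiplicity, h, h5]
  cases he : emultiplicity p b with
  | top => simp
  | coe k => norm_cast; omega

lemma aux_sum (v w P : ℤ) (hv : v = 1 + w) (hP : P ∣ w * w) (k : ℕ) :
    P ∣ (∑ i ∈ Finset.range k, v ^ i) - (k + w * (∑ i ∈ Finset.range k, (i : ℤ))) := by
  have hpow : ∀ i : ℕ, P ∣ v ^ i - (1 + i * w) := by
    intro i
    induction i with
    | zero => simp
    | succ i ih =>
      have : v ^ (i + 1) - (1 + ((i + 1 : ℕ) : ℤ) * w)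
          = (v ^ i - (1 + i * w)) * v + i * (w * w) := by
        subst hv; push_cast; ring
      rw [this]
      exact dvd_add (Dvd.dvd.mul_right ih _) (Dvd.dvd.mul_left hP _)
  induction k with
  | zero => simp
  | succ k ih =>
    rw [Finset.sum_range_succ, Finset.sum_range_succ]
    have := dvd_add ih (hpow k)
    exact aux_dvd this (by push_cast; ring)

lemma aux_sum_p (p : ℕ) (hodd : Odd p) : (p : ℤ) ∣ ∑ i ∈ Finset.range p, (i : ℤ) := by
  have h := Finset.sum_range_id_mul_two p
  obtain ⟨k, hk⟩ := hodd
  have h2 : (∑ i ∈ Finset.range p, i) = p * k := by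
    have : p - 1 = 2 * k := by omega
    rw [this] at h
    nlinarith
  have : (∑ i ∈ Finset.range p, (i : ℤ)) = p * k := by
    rw [← Nat.cast_sum, h2, Nat.cast_mul]
  exact ⟨k, this⟩

section
variable {S : Type*} [Group S] {x y : S} {u : ℕ}

lemma aux_comm (hconj : y * x * y⁻¹ = x ^ u) (a : ℤ) (b : ℕ) :
    y ^ b * x ^ a = x ^ (a * (u : ℤ) ^ b) * y ^ b := by
  have h1 : ∀ a : ℤ, y * x ^ a = x ^ (a * (u : ℤ)) * y := by
    intro a
    have : (y * x * y⁻¹) ^ a = y * x ^ a * y⁻¹ := conj_zpow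
    rw [hconj, ← zpow_natCast, ← zpow_mul, mul_comm] at this
    rw [this]; group
  induction b generalizing a with
  | zero => simp
  | succ b ih =>
    rw [pow_succ, mul_assoc, h1, ← mul_assoc, ih, mul_assoc]
    congr 2
    ring

lemma aux_pow (hconj : y * x * y⁻¹ = x ^ u) (a : ℤ) (b k : ℕ) :
    (x ^ a * y ^ b) ^ k
      = x ^ (a * ∑ i ∈ Finset.range k, ((u : ℤ) ^ b) ^ i) * y ^ (b * k) := by
  induction k with
  | zero => simp
  | succ k ih =>
    rw [pow_succ, ih, mul_assoc, ← mul_assoc (y ^ (b * k)), aux_comm hconj, mul_assoc,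
      ← mul_assoc, ← zpow_add, ← pow_add]
    congr 2
    rw [Finset.sum_range_succ, pow_mul]; ring

lemma aux_rep [Finite S] (hgen : Subgroup.closure {x, y} = ⊤)
    (hconj : y * x * y⁻¹ = x ^ u) (g : S) : ∃ (a : ℤ) (b : ℕ), g = x ^ a * y ^ b := by
  have hg : g ∈ Subgroup.closure {x, y} := hgen ▸ Subgroup.mem_top g
  induction hg using Subgroup.closure_induction with
  | mem z hz =>
    rcases hz with rfl | rfl
    · exact ⟨1, 0, by simp⟩
    · exact ⟨0, 1, by simp⟩
  | one => exact ⟨0, 0, by simp⟩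
  | mul g h _ _ hg hh =>
    obtain ⟨a, b, rfl⟩ := hg
    obtain ⟨c, d, rfl⟩ := hh
    refine ⟨a + c * (u : ℤ) ^ b, b + d, ?_⟩
    rw [mul_assoc, ← mul_assoc (y ^ b), aux_comm hconj, zpow_add, pow_add]
    simp only [mul_assoc]
  | inv g _ hg =>
    obtain ⟨a, b, rfl⟩ := hg
    obtain ⟨d, hd⟩ : ∃ d : ℕ, y ^ d = (y ^ b)⁻¹ := by
      have : (y ^ b)⁻¹ ∈ Submonoid.powers y := by
        rw [mem_powers_iff_mem_zpowers]
        exact inv_mem (pow_mem (Subgroup.mem_zpowers y) b)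
      exact this
    refine ⟨(-a) * (u : ℤ) ^ d, d, ?_⟩
    rw [← aux_comm hconj, hd, mul_inv_rev, zpow_neg]

lemma aux_inj [Finite S] (A B : ℕ) (hA : 0 < A) (hB : 0 < B) (hcard : Nat.card S = A * B)
    (hgen : Subgroup.closure {x, y} = ⊤) (hx : orderOf x = A)
    (r : ℤ) (hxy : y ^ B = x ^ r)
    (hconj : y * x * y⁻¹ = x ^ u) (b : ℕ) (s : ℤ) (h : y ^ b = x ^ s) : B ∣ b := by
  have hred : ∀ s : ℤ, ∃ c : Fin A, x ^ s = x ^ (c : ℕ) := by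
    intro s
    have : x ^ s ∈ Submonoid.powers x := by
      rw [mem_powers_iff_mem_zpowers]
      exact zpow_mem (Subgroup.mem_zpowers x) s
    obtain ⟨d, hd⟩ := this
    refine ⟨⟨d % A, Nat.mod_lt _ hA⟩, ?_⟩
    simp only
    rw [← hx, pow_mod_orderOf]; exact hd.symm
  have hyred : ∀ b : ℕ, y ^ b = x ^ (r * (b / B : ℕ)) * y ^ (b % B) := by
    intro b
    conv_lhs => rw [← Nat.div_add_mod b B, pow_add, pow_mul, hxy]
    rw [zpow_mul, zpow_natCast]
  let f : Fin A × Fin B → S := fun t => x ^ (t.1 : ℕ) * y ^ (t.2 : ℕ)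
  have hsurj : Function.Surjective f := by
    intro g
    obtain ⟨a, b, rfl⟩ := aux_rep hgen hconj g
    obtain ⟨c, hc⟩ := hred (a + r * (b / B : ℕ))
    refine ⟨(c, ⟨b % B, Nat.mod_lt _ hB⟩), ?_⟩
    simp only [f]
    rw [← hc, hyred b, zpow_add, mul_assoc]
  have hbij : Function.Bijective f := by
    rw [Nat.bijective_iff_surjective_and_card]
    refine ⟨hsurj, ?_⟩
    rw [hcard]; simp
  obtain ⟨c, hc⟩ := hred (s - r * (b / B : ℕ))
  have h1 : f (⟨0, hA⟩, ⟨b % B, Nat.mod_lt _ hB⟩) = f (c, ⟨0, hB⟩) := by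
    simp only [f]
    rw [← hc, pow_zero, pow_zero, one_mul, mul_one, sub_eq_neg_add, zpow_add, ← h, hyred b,
      zpow_neg]
    group
  have h2 := hbij.1 h1
  simp only [Prod.mk.injEq, Fin.mk.injEq] at h2
  exact Nat.dvd_of_mod_eq_zero h2.2

end

theorem stmt13 (p l m n q : ℕ) [Fact p.Prime] (hodd : Odd p)
    (hl : 0 < l) (hm : 0 < m) (hn : 0 < n) (hq : 0 < q)
    (hlm : l ≤ m) (hqm : q ≤ m) (hmln : m ≤ l + n) (hmql : m ≤ q + l)
    (hmod : (1 + p ^ l) ^ p ^ n ≡ 1 [MOD p ^ m])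
    (S : Type*) [Group S] [Fintype S] (hcard : Nat.card S = p ^ (m + n))
    (x y : S) (hgen : Subgroup.closure {x, y} = ⊤)
    (hx : orderOf x = p ^ m) (hxy : y ^ p ^ n = x ^ p ^ q)
    (hconj : y * x * y⁻¹ = x ^ (1 + p ^ l)) :
    Subgroup.center S = Subgroup.closure {x ^ p ^ (m - l), y ^ p ^ (m - l)} ∧
      omega1Grp p S =
        Subgroup.closure {x ^ p ^ (m - 1), (x ^ p ^ (q - 1))⁻¹ * y ^ p ^ (n - 1)} ∧
      (q = m → omega1Grp p S = Subgroup.closure {x ^ p ^ (m - 1), y ^ p ^ (n - 1)}) := by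
  have hp : p.Prime := Fact.out
  have hp0 : (p : ℤ) ≠ 0 := by exact_mod_cast hp.ne_zero
  set u := 1 + p ^ l with hu
  have hucast : (u : ℤ) = 1 + (p : ℤ) ^ l := by rw [hu]; push_cast; rfl
  have hone : ∀ a : ℤ, x ^ a = 1 ↔ (p : ℤ) ^ m ∣ a := by
    intro a
    rw [← orderOf_dvd_iff_zpow_eq_one, hx]; push_cast; rfl
  have hcomm := fun a b => aux_comm (a := a) (b := b) hconj
  have hrep := aux_rep hgen hconj
  have hlte : ∀ M b : ℕ, ((p : ℤ) ^ M ∣ (u : ℤ) ^ b - 1) ↔ p ^ (M - l) ∣ b := by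
    intro M b; rw [hucast]; exact aux_lte p l M b hodd hl
  have hinj : ∀ (b : ℕ) (s : ℤ), y ^ b = x ^ s → p ^ n ∣ b :=
    aux_inj (p ^ m) (p ^ n) (pow_pos hp.pos _) (pow_pos hp.pos _) (by rw [hcard, pow_add])
      hgen hx (p ^ q : ℕ) (by rw [zpow_natCast]; exact hxy) hconj
  -- membership for powers of x
  have hxmem : ∀ (k : ℕ) (a : ℤ) (H : Subgroup S), x ^ p ^ k ∈ H → (p : ℤ) ^ k ∣ a →
      x ^ a ∈ H := by
    rintro k a H hH ⟨c, rfl⟩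
    rw [zpow_mul]
    apply zpow_mem
    have : x ^ ((p : ℤ) ^ k) = x ^ p ^ k := by
      rw [← zpow_natCast]; push_cast; rfl
    rw [this]; exact hH
  have hcen : Subgroup.center S = Subgroup.closure {x ^ p ^ (m - l), y ^ p ^ (m - l)} := by
    apply le_antisymm
    · intro g hg
      obtain ⟨a, b, rfl⟩ := hrep g
      rw [Subgroup.mem_center_iff] at hg
      have hy := hg y
      have hx' := hg x
      have ha : (p : ℤ) ^ (m - l) ∣ a := by
        have h1 := hcomm a 1
        rw [pow_one, pow_one] at h1
        rw [← mul_assoc, h1, mul_assoc, ← pow_succ', mul_assoc, ← pow_succ] at hy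
        have h2 := mul_right_cancel hy
        have h3 : x ^ (a * (u : ℤ) - a) = 1 := by rw [zpow_sub, h2, mul_inv_cancel]
        rw [hone, hucast] at h3
        have h4 : (p : ℤ) ^ l * (p : ℤ) ^ (m - l) ∣ (p : ℤ) ^ l * a := by
          rw [← pow_add, Nat.add_sub_cancel' hlm]
          exact aux_dvd h3 (by ring)
        exact (mul_dvd_mul_iff_left (pow_ne_zero l hp0)).1 h4
      have hb : p ^ (m - l) ∣ b := by
        rw [← hlte, ← hone]
        have h1 := hcomm 1 b
        rw [zpow_one, one_mul] at h1
        rw [mul_assoc, h1, ← mul_assoc, ← mul_assoc] at hx'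
        have h2 := mul_right_cancel hx'
        rw [zpow_sub, zpow_one]
        have h3 : x * x ^ a = x ^ a * x := by
          rw [← zpow_one_add, ← zpow_add_one, add_comm]
        rw [h3] at h2
        rw [← mul_left_cancel h2, mul_inv_cancel]
      apply mul_mem
      · exact hxmem (m - l) a _ (Subgroup.subset_closure (by simp)) ha
      · obtain ⟨c, rfl⟩ := hb
        rw [pow_mul]
        exact pow_mem (Subgroup.subset_closure (by simp)) c
    · rw [Subgroup.closure_le]
      have hZ : ∀ z : S, Commute x z → Commute y z → z ∈ Subgroup.center S := by
        intro z h1 h2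
        rw [Subgroup.mem_center_iff]
        intro g
        obtain ⟨a, b, rfl⟩ := hrep g
        exact (Commute.mul_left (h1.zpow_left a) (h2.pow_left b)).eq
      rintro z (rfl | rfl)
      · refine hZ _ (Commute.self_pow x _) ?_
        have h1 := hcomm (p ^ (m - l) : ℕ) 1
        rw [pow_one, pow_one, zpow_natCast] at h1
        show y * _ = _ * y
        rw [h1]
        congr 1
        have : ((p ^ (m - l) : ℕ) : ℤ) * (u : ℤ) = (p ^ (m - l) : ℕ) + (p : ℤ) ^ m := by
          rw [hucast]; push_cast
          rw [mul_add, mul_one, ← pow_add, Nat.sub_add_cancel hlm]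
        rw [this, zpow_add, (hone _).2 dvd_rfl, mul_one, zpow_natCast]
      · refine hZ _ ?_ (Commute.self_pow y _)
        have h1 := hcomm 1 (p ^ (m - l))
        rw [zpow_one, one_mul] at h1
        show x * _ = _ * x
        rw [h1]
        congr 1
        have h2 := (hone _).2 ((hlte m (p ^ (m - l))).2 dvd_rfl)
        rw [zpow_sub, zpow_one, mul_inv_eq_one] at h2
        exact h2.symm
  -- facts on v = u ^ (p^(n-1) * c)
  have hv1 : ∀ c : ℕ, (p : ℤ) ^ (m - 1) ∣ (u : ℤ) ^ (p ^ (n - 1) * c) - 1 := by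
    intro c
    rw [hlte]
    exact Dvd.dvd.mul_right (pow_dvd_pow p (by omega)) c
  have hv2 : ∀ c : ℕ, (p : ℤ) ∣ (u : ℤ) ^ (p ^ (n - 1) * c) - 1 := by
    intro c
    have := (hlte 1 (p ^ (n - 1) * c)).2 (by
      rw [show 1 - l = 0 by omega, pow_zero]; exact one_dvd _)
    simpa using this
  have hpm : (p : ℤ) ^ (m - 1) * p = (p : ℤ) ^ m := by
    rw [← pow_succ]; congr 1; omega
  have hpq : (p : ℤ) ^ (q - 1) * p = (p : ℤ) ^ q := by
    rw [← pow_succ]; congr 1; omega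
  have hpn : p ^ (n - 1) * p = p ^ n := by
    rw [← pow_succ]; congr 1; omega
  have hww : ∀ c : ℕ, (p : ℤ) ^ m ∣
      ((u : ℤ) ^ (p ^ (n - 1) * c) - 1) * ((u : ℤ) ^ (p ^ (n - 1) * c) - 1) := by
    intro c
    rw [← hpm]
    exact mul_dvd_mul (hv1 c) (hv2 c)
  have hsum : ∀ c k : ℕ, (p : ℤ) ^ (m - 1) ∣
      (∑ i ∈ Finset.range k, ((u : ℤ) ^ (p ^ (n - 1) * c)) ^ i) - k := by
    intro c k
    have h := aux_sum _ _ _ (add_sub_cancel 1 ((u : ℤ) ^ (p ^ (n - 1) * c))).symm (hww c) k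
    have h2 := (pow_dvd_pow (p : ℤ) (Nat.sub_le m 1)).trans h
    have h3 := dvd_add h2 (Dvd.dvd.mul_right (hv1 c) (∑ i ∈ Finset.range k, (i : ℤ)))
    exact aux_dvd h3 (by ring)
  have hsump : ∀ c : ℕ, (p : ℤ) ^ m ∣
      (∑ i ∈ Finset.range p, ((u : ℤ) ^ (p ^ (n - 1) * c)) ^ i) - p := by
    intro c
    have h := aux_sum _ _ _ (add_sub_cancel 1 ((u : ℤ) ^ (p ^ (n - 1) * c))).symm (hww c) p
    have h2 := mul_dvd_mul (hv1 c) (aux_sum_p p hodd)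
    rw [hpm] at h2
    have h3 := dvd_add h h2
    exact aux_dvd h3 (by ring)
  -- the p-th power formula
  have hpp : ∀ (a : ℤ) (c : ℕ), (x ^ a * y ^ (p ^ (n - 1) * c)) ^ p = 1 ↔
      (p : ℤ) ^ m ∣ a * p + (p : ℤ) ^ q * c := by
    intro a c
    rw [aux_pow hconj]
    have : y ^ (p ^ (n - 1) * c * p) = x ^ ((p : ℤ) ^ q * c) := by
      rw [mul_right_comm, hpn, pow_mul, hxy, zpow_mul, zpow_natCast]
      congr 1
      rw [← zpow_natCast]; push_cast; rfl
    rw [this, ← zpow_add, hone]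
    have h2 := Dvd.dvd.mul_left (hsump c) a
    constructor
    · intro h
      have h3 := dvd_sub h h2
      exact aux_dvd h3 (by ring)
    · intro h
      have h3 := dvd_add h h2
      exact aux_dvd h3 (by ring)
  have hom : omega1Grp p S =
        Subgroup.closure {x ^ p ^ (m - 1), (x ^ p ^ (q - 1))⁻¹ * y ^ p ^ (n - 1)} := by
    have hw : (x ^ p ^ (q - 1))⁻¹ * y ^ p ^ (n - 1)
        = x ^ (-(p : ℤ) ^ (q - 1)) * y ^ (p ^ (n - 1) * 1) := by
      rw [mul_one, zpow_neg, ← zpow_natCast x]; push_cast; rfl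
    apply le_antisymm
    · unfold omega1Grp
      rw [Subgroup.closure_le]
      intro g hg
      obtain ⟨a, b, rfl⟩ := hrep g
      have hg' : (x ^ a * y ^ b) ^ p = 1 := hg
      have hb : p ^ (n - 1) ∣ b := by
        have h := hg'
        rw [aux_pow hconj, mul_eq_one_iff_eq_inv', ← zpow_neg] at h
        have h2 := hinj _ _ h
        rw [← hpn] at h2
        exact Nat.dvd_of_mul_dvd_mul_right hp.pos h2
      obtain ⟨c, rfl⟩ := hb
      rw [hpp] at hg'
      rw [hw]
      set w := x ^ (-(p : ℤ) ^ (q - 1)) * y ^ (p ^ (n - 1) * 1) with hwdef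
      have hwc : w ^ c ∈ Subgroup.closure {x ^ p ^ (m - 1), w} :=
        pow_mem (Subgroup.subset_closure (by simp)) c
      have hwe := aux_pow hconj (-(p : ℤ) ^ (q - 1)) (p ^ (n - 1) * 1) c
      rw [← hwdef] at hwe
      have hs := hsum 1 c
      set σ := ∑ i ∈ Finset.range c, ((u : ℤ) ^ (p ^ (n - 1) * 1)) ^ i
      have hge : x ^ a * y ^ (p ^ (n - 1) * c) = x ^ (a + (p : ℤ) ^ (q - 1) * σ) * w ^ c := by
        rw [hwe, ← mul_assoc, ← zpow_add, mul_one]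
        congr 2; ring
      rw [hge]
      refine mul_mem (hxmem (m - 1) _ _ (Subgroup.subset_closure (by simp)) ?_) hwc
      have h1 : (p : ℤ) ^ (m - 1) ∣ a + (p : ℤ) ^ (q - 1) * c := by
        rw [← mul_dvd_mul_iff_right hp0, hpm]
        exact aux_dvd hg' (by rw [← hpq]; ring)
      have h2 := dvd_add h1 (Dvd.dvd.mul_left hs ((p : ℤ) ^ (q - 1)))
      exact aux_dvd h2 (by ring)
    · rw [Subgroup.closure_le]
      rintro z (rfl | rfl)
      · apply Subgroup.subset_closure
        show (x ^ p ^ (m - 1)) ^ p = 1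
        rw [← pow_mul, ← pow_succ, Nat.sub_add_cancel hm, ← hx, pow_orderOf_eq_one]
      · apply Subgroup.subset_closure
        rw [hw]
        show _ ^ p = 1
        rw [hpp, neg_mul, hpq]
        simp
  refine ⟨hcen, hom, ?_⟩
  rintro rfl
  rw [hom]
  apply le_antisymm
  · rw [Subgroup.closure_le]
    rintro z (rfl | rfl)
    · exact Subgroup.subset_closure (by simp)
    · exact mul_mem (inv_mem (Subgroup.subset_closure (by simp)))
        (Subgroup.subset_closure (by simp))
  · rw [Subgroup.closure_le]
    rintro z (rfl | rfl)
    · exact Subgroup.subset_closure (by simp)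
    · have h := mul_mem (s := Subgroup.closure {x ^ p ^ (q - 1),
        (x ^ p ^ (q - 1))⁻¹ * y ^ p ^ (n - 1)}) (a := x ^ p ^ (q - 1))
        (b := (x ^ p ^ (q - 1))⁻¹ * y ^ p ^ (n - 1))
        (Subgroup.subset_closure (by simp)) (Subgroup.subset_closure (by simp))
      rw [mul_inv_cancel_left] at h
      exact h
end

section
/- Let p be an odd prime, let G be a finite group, and let S be a Sylow p-subgroup of G that is nonabelian split metacyclic. Then the quotient N_G(S)/(S·C_G(S)) is cyclic of order dividing p − 1. Moreover, for every nontrivial characteristic subgroup Q of S one has N_G(Q) = N_G(S)·C_G(Q), and the natural homomorphism N_G(S)/C_G(S) → N_G(Q)/C_G(Q) induced by inclusion is surjective. -/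
open Subgroup Pointwise

/-- A `p`-group is split metacyclic if it is the internal semidirect product of a
cyclic normal subgroup by a cyclic subgroup. -/
def IsSplitMetacyclic (H : Type*) [Group H] : Prop :=
  ∃ C K : Subgroup H, ∃ _ : C.Normal,
    IsCyclic C ∧ IsCyclic K ∧ C ⊓ K = ⊥ ∧ C ⊔ K = ⊤

/-- `S·C_G(S)` is a normal subgroup of `N_G(S)`. -/
instance normalSC {G : Type*} [Group G] (H : Subgroup G) :
    ((H ⊔ Subgroup.centralizer (H : Set G)).subgroupOf (Subgroup.normalizer (H : Set G))).Normal := by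
  have hconjH : ∀ g ∈ Subgroup.normalizer (H : Set G), ∀ h ∈ H, g * h * g⁻¹ ∈ H := fun g hg h hh =>
    (Subgroup.mem_normalizer_iff.mp hg h).mp hh
  have hconjC : ∀ g ∈ Subgroup.normalizer (H : Set G), ∀ c ∈ Subgroup.centralizer (H : Set G),
      g * c * g⁻¹ ∈ Subgroup.centralizer (H : Set G) := by
    intro g hg c hc
    rw [Subgroup.mem_centralizer_iff] at hc ⊢
    intro h hh
    have hh' : g⁻¹ * h * g ∈ H := by
      have := (Subgroup.mem_normalizer_iff.mp ((Subgroup.normalizer (H : Set G)).inv_mem hg) h).mp hh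
      simpa using this
    have hc' := hc _ hh'
    have e : h * (g * c * g⁻¹) = g * (g⁻¹ * h * g * c) * g⁻¹ := by group
    rw [e, hc']
    group
  constructor
  rintro ⟨m, hmN⟩ hm ⟨n, hnN⟩
  rw [Subgroup.mem_subgroupOf] at hm ⊢
  have key : n * m * n⁻¹ ∈ H ⊔ Subgroup.centralizer (H : Set G) := by
    have hsup : H ⊔ Subgroup.centralizer (H : Set G) =
        Subgroup.closure ((H : Set G) ∪ (Subgroup.centralizer (H : Set G) : Set G)) := by
      rw [Subgroup.closure_union, Subgroup.closure_eq, Subgroup.closure_eq]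
    rw [hsup] at hm ⊢
    refine Subgroup.closure_induction
      (p := fun x _ => n * x * n⁻¹ ∈
        Subgroup.closure ((H : Set G) ∪ (Subgroup.centralizer (H : Set G) : Set G)))
      ?_ ?_ ?_ ?_ hm
    · rintro x (hx | hx)
      · exact Subgroup.subset_closure (Or.inl (hconjH n hnN x hx))
      · exact Subgroup.subset_closure (Or.inr (hconjC n hnN x hx))
    · simpa using Subgroup.one_mem _
    · intro x y _ _ hx hy
      have := Subgroup.mul_mem _ hx hy
      have e : n * x * n⁻¹ * (n * y * n⁻¹) = n * (x * y) * n⁻¹ := by group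
      rwa [e] at this
    · intro x _ hx
      have := Subgroup.inv_mem _ hx
      have e : (n * x * n⁻¹)⁻¹ = n * x⁻¹ * n⁻¹ := by group
      rwa [e] at this
  simpa using key

theorem mc_fix {G : Type*} [Group G] [Finite G] {p q e : ℕ} (hp : p.Prime) (hq : q.Prime)
    (hpq : q ≠ p) (g : G) (hg : orderOf g = q ^ e) (W : Subgroup G) (hW : IsPGroup p W)
    (hgW : ∀ w ∈ W, g * w * g⁻¹ ∈ W) (x : G) (hx : x⁻¹ * (g * x * g⁻¹) ∈ W) :
    ∃ w ∈ W, g * (x * w) * g⁻¹ = x * w := by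
  classical
  have := Fact.mk hp
  have := Fact.mk hq
  have key : ∀ w : W, x⁻¹ * g * x * w * g⁻¹ ∈ W := by
    intro w
    have := W.mul_mem hx (hgW w w.2)
    convert this using 1
    group
  let f : W → W := fun w => ⟨x⁻¹ * g * x * w * g⁻¹, key w⟩
  have finj : Function.Injective f := by
    intro a b h
    have := congrArg Subtype.val h
    simp only [f] at this
    exact Subtype.ext (mul_left_cancel (mul_right_cancel this))
  let σ : Equiv.Perm W := Equiv.ofBijective f (Finite.injective_iff_bijective.mp finj)
  have hσn : ∀ n : ℕ, ∀ w : W, (((σ ^ n) w : W) : G) = x⁻¹ * g ^ n * x * w * (g ^ n)⁻¹ := by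
    intro n
    induction n with
    | zero => intro w; simp
    | succ n ih =>
      intro w
      rw [pow_succ', Equiv.Perm.mul_apply]
      change x⁻¹ * g * x * ((σ ^ n) w : W) * g⁻¹ = _
      rw [ih, pow_succ']
      group
  have hσ : σ ^ q ^ e = 1 := by
    ext w
    rw [hσn, ← hg, pow_orderOf_eq_one]
    simp
  have : Fintype W := Fintype.ofFinite W
  have hcard : ¬ q ∣ Fintype.card W := by
    intro h
    obtain ⟨n, hn⟩ := IsPGroup.iff_card.mp hW
    rw [← Nat.card_eq_fintype_card, hn] at h
    exact hpq ((Nat.prime_dvd_prime_iff_eq hq hp).mp (hq.dvd_of_dvd_pow h))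
  obtain ⟨w, hw⟩ := Equiv.Perm.exists_fixed_point_of_prime hcard hσ
  refine ⟨w, w.2, ?_⟩
  have := congrArg Subtype.val hw
  change x⁻¹ * g * x * w * g⁻¹ = w at this
  calc g * (x * w) * g⁻¹ = x * (x⁻¹ * g * x * w * g⁻¹) := by group
    _ = _ := by rw [this]

theorem mc_conj {G : Type*} [Group G] [Finite G] {p : ℕ} [Fact p.Prime] (S : Sylow p G)
    (U : Subgroup G) (hS : (S : Subgroup G) ≤ U) (g : G) (hg : ∀ s ∈ S, g * s * g⁻¹ ∈ U) :
    ∃ u ∈ U, u * g ∈ normalizer ((S : Subgroup G) : Set G) := by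
  have h2 : ((g • S : Sylow p G) : Subgroup G) ≤ U := by
    intro x hx
    rw [Sylow.coe_subgroup_smul, Subgroup.mem_pointwise_smul_iff_inv_smul_mem] at hx
    have := hg _ hx
    simpa [mul_assoc] using this
  obtain ⟨u, hu⟩ := MulAction.exists_smul_eq U ((g • S).subtype h2) (S.subtype hS)
  refine ⟨u, u.2, ?_⟩
  rw [Sylow.smul_subtype] at hu
  have := Sylow.subtype_injective hu
  refine Sylow.smul_eq_iff_mem_normalizer.mp ?_
  rw [mul_smul]
  exact this

theorem mc_pgrp {G : Type*} [Group G] [Finite G] {p : ℕ} [hp : Fact p.Prime] (S : Sylow p G)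
    (U D : Subgroup G) (hS : (S : Subgroup G) ≤ U)
    (h : ∀ q e : ℕ, q.Prime → q ≠ p → ∀ g ∈ U, orderOf g = q ^ e → g ∈ D) :
    U ≤ (S : Subgroup G) ⊔ D := by
  rw [← Subgroup.relIndex_eq_one]
  by_contra hne
  obtain ⟨q, hq, hqd⟩ := Nat.exists_prime_and_dvd hne
  by_cases hqp : q = p
  · subst hqp
    apply S.not_dvd_index
    exact (hqd.trans (Subgroup.relIndex_dvd_of_le_left U le_sup_left)).trans (Subgroup.relIndex_dvd_index_of_le hS)
  · have := Fact.mk hq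
    obtain ⟨R⟩ : Nonempty (Sylow q U) := inferInstance
    apply R.not_dvd_index
    refine hqd.trans ?_
    rw [Subgroup.relIndex]
    apply Subgroup.index_dvd_of_le
    intro x hx
    rw [Subgroup.mem_subgroupOf]
    obtain ⟨e, he⟩ := (IsPGroup.iff_orderOf.mp R.isPGroup') ⟨x, hx⟩
    refine le_sup_right (a := (S : Subgroup G)) (h q e hq hqp x x.2 ?_)
    rw [← he]
    simp

theorem mc_geom {p : ℕ} (hodd : Odd p) (σ : ℤ) :
    ∃ t : ℤ, ∑ l ∈ Finset.range p, (1 + (p : ℤ) * σ) ^ l = p * (1 + p * t) := by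
  obtain ⟨t, ht⟩ := @odd_sq_dvd_geom_sum₂_sub ℤ _ 1 σ p hodd
  refine ⟨t, ?_⟩
  simp only [one_pow, mul_one] at ht
  linear_combination ht

/-- Presentation data of a split metacyclic `p`-subgroup. -/
structure MC {G : Type*} [Group G] (p : ℕ) (S : Subgroup G) (a b : G) (ρ m n : ℕ) : Prop where
  ha : a ∈ S
  hb : b ∈ S
  hab : b⁻¹ * a * b = a ^ (1 + p * ρ)
  oa : orderOf a = p ^ m
  ob : orderOf b = p ^ n
  gen : ∀ x ∈ S, ∃ (j : ℕ) (i : ℤ), x = b ^ j * a ^ i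
  ind : ∀ j i : ℤ, b ^ j = a ^ i → b ^ j = 1

namespace MC

variable {G : Type*} [Group G] {p : ℕ} {S : Subgroup G} {a b : G} {ρ m n : ℕ}

theorem conjA (h : MC p S a b ρ m n) (i : ℤ) : b⁻¹ * a ^ i * b = a ^ (i * (1 + p * ρ)) := by
  have h1 : b⁻¹ * a ^ i * b = (b⁻¹ * a * b) ^ i := by
    have := conj_zpow (a := b⁻¹) (b := a) (i := i)
    simpa using this.symm
  rw [h1, h.hab, ← zpow_natCast, ← zpow_mul]
  congr 1
  push_cast
  ring

theorem conjB (h : MC p S a b ρ m n) (j : ℕ) : ∃ σ : ℤ, ∀ i : ℤ,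
    (b ^ j)⁻¹ * a ^ i * b ^ j = a ^ (i * (1 + p * σ)) := by
  induction j with
  | zero => exact ⟨0, fun i => by simp⟩
  | succ j ih =>
    obtain ⟨σ, hσ⟩ := ih
    refine ⟨σ + ρ + p * σ * ρ, fun i => ?_⟩
    have : (b ^ (j+1))⁻¹ * a ^ i * b ^ (j+1) = b⁻¹ * ((b ^ j)⁻¹ * a ^ i * b ^ j) * b := by
      rw [pow_succ]; group
    rw [this, hσ, h.conjA]
    congr 1
    ring

/-- move `a^i` past `b^j`. -/
theorem swap (h : MC p S a b ρ m n) (j : ℕ) : ∃ σ : ℤ, ∀ i : ℤ,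
    a ^ i * b ^ j = b ^ j * a ^ (i * (1 + p * σ)) := by
  obtain ⟨σ, hσ⟩ := h.conjB j
  refine ⟨σ, fun i => ?_⟩
  rw [← hσ]; group

theorem powAux (h : MC p S a b ρ m n) (hodd : Odd p) (j : ℕ) (i : ℤ) :
    ∃ t : ℤ, (b ^ j * a ^ i) ^ p = b ^ (j * p) * a ^ (i * (p * (1 + p * t))) := by
  obtain ⟨σ, hσ⟩ := h.swap j
  obtain ⟨t, ht⟩ := mc_geom hodd σ
  refine ⟨t, ?_⟩
  rw [← ht]
  have key : ∀ l : ℕ, (b ^ j * a ^ i) ^ l =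
      b ^ (j * l) * a ^ (i * ∑ k ∈ Finset.range l, (1 + (p : ℤ) * σ) ^ k) := by
    intro l
    induction l with
    | zero => simp
    | succ l ih =>
      rw [pow_succ, ih, geom_sum_succ]
      have e1 : ∀ A B C D : G, A * B * (C * D) = A * (B * C) * D := by intros; group
      rw [e1, hσ, Nat.mul_succ, pow_add]
      have e2 : ∀ A B C D : G, A * (B * C) * D = A * B * (C * D) := by intros; group
      rw [e2, ← zpow_add]
      congr 2
      ring
  exact key p

theorem powK (h : MC p S a b ρ m n) (hodd : Odd p) (k : ℕ) (j : ℕ) (i : ℤ) :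
    ∃ t : ℤ, (b ^ j * a ^ i) ^ (p ^ k) =
      b ^ (j * p ^ k) * a ^ (i * (p ^ k * (1 + p * t))) := by
  induction k with
  | zero => exact ⟨0, by simp⟩
  | succ k ih =>
    obtain ⟨t, ht⟩ := ih
    obtain ⟨t', ht'⟩ := h.powAux hodd (j * p ^ k) (i * (p ^ k * (1 + p * t)))
    refine ⟨t + t' + p * t * t', ?_⟩
    rw [pow_succ, pow_mul, ht, ht']
    congr 2
    · ring
    · ring

theorem ind' (h : MC p S a b ρ m n) {j j' : ℕ} {i i' : ℤ}
    (e : b ^ j * a ^ i = b ^ j' * a ^ i') : b ^ j = b ^ j' ∧ a ^ i = a ^ i' := by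
  have e' : (b ^ j')⁻¹ * b ^ j = a ^ (i' - i) := by
    have : b ^ j = b ^ j' * a ^ i' * (a ^ i)⁻¹ := by rw [← e]; group
    rw [this, sub_eq_add_neg, zpow_add, zpow_neg]; group
  have e'' : b ^ (-(j':ℤ) + j) = a ^ (i' - i) := by
    rw [zpow_add, zpow_neg, zpow_natCast, zpow_natCast]; exact e'
  have h2 := h.ind _ _ e''
  have h3 : b ^ j = b ^ j' := by
    rw [zpow_add, zpow_neg, zpow_natCast, zpow_natCast, inv_mul_eq_one] at h2
    exact h2.symm
  refine ⟨h3, ?_⟩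
  rw [h3] at e
  exact mul_left_cancel e

theorem unitA (h : MC p S a b ρ m n) (hp : p.Prime) {i t : ℤ} (e : a ^ (i * (1 + p * t)) = 1) :
    a ^ i = 1 := by
  rw [← orderOf_dvd_iff_zpow_eq_one] at e ⊢
  rw [h.oa] at e ⊢
  refine IsCoprime.dvd_of_dvd_mul_right ?_ e
  push_cast
  apply IsCoprime.pow_left
  exact ⟨-t, 1, by ring⟩

theorem pow_eq_one (h : MC p S a b ρ m n) (hp : p.Prime) (hodd : Odd p) (k : ℕ) (j : ℕ) (i : ℤ) :
    (b ^ j * a ^ i) ^ (p ^ k) = 1 ↔ b ^ (j * p ^ k) = 1 ∧ a ^ (i * p ^ k) = 1 := by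
  obtain ⟨t, ht⟩ := h.powK hodd k j i
  rw [ht]
  constructor
  · intro e
    have : b ^ (j * p ^ k) * a ^ (i * (p ^ k * (1 + p * t))) = b ^ 0 * a ^ (0:ℤ) := by simpa using e
    obtain ⟨h1, h2⟩ := h.ind' this
    refine ⟨by simpa using h1, ?_⟩
    rw [← mul_assoc, zpow_zero] at h2
    exact h.unitA hp h2
  · rintro ⟨h1, h2⟩
    rw [h1, ← mul_assoc, zpow_mul, h2]
    simp

theorem mul_om (h : MC p S a b ρ m n) (hp : p.Prime) (hodd : Odd p) (k : ℕ) {x y : G}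
    (hx : x ∈ S) (hy : y ∈ S) (hx1 : x ^ p ^ k = 1) (hy1 : y ^ p ^ k = 1) :
    (x * y) ^ p ^ k = 1 := by
  obtain ⟨j, i, rfl⟩ := h.gen x hx
  obtain ⟨j', i', rfl⟩ := h.gen y hy
  rw [h.pow_eq_one hp hodd] at hx1 hy1
  obtain ⟨σ, hσ⟩ := h.swap j'
  have e1 : ∀ A B C D : G, A * B * (C * D) = A * (B * C) * D := by intros; group
  have e2 : ∀ A B C D : G, A * (B * C) * D = A * B * (C * D) := by intros; group
  rw [e1, hσ, e2, ← pow_add, ← zpow_add, h.pow_eq_one hp hodd]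
  constructor
  · rw [add_mul, pow_add, hx1.1, hy1.1, one_mul]
  · rw [add_mul, zpow_add, hy1.2, mul_right_comm, zpow_mul, hx1.2]; simp

/-- Elements of `S` of order dividing `p^k`. -/
def Om (h : MC p S a b ρ m n) (hp : p.Prime) (hodd : Odd p) (k : ℕ) : Subgroup G where
  carrier := {x | x ∈ S ∧ x ^ p ^ k = 1}
  mul_mem' := fun hx hy => ⟨S.mul_mem hx.1 hy.1, h.mul_om hp hodd k hx.1 hy.1 hx.2 hy.2⟩
  one_mem' := ⟨S.one_mem, one_pow _⟩
  inv_mem' := fun hx => ⟨S.inv_mem hx.1, by rw [inv_pow, hx.2, inv_one]⟩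

theorem mem_Om (h : MC p S a b ρ m n) {hp : p.Prime} {hodd : Odd p} {k : ℕ} {x : G} :
    x ∈ h.Om hp hodd k ↔ x ∈ S ∧ x ^ p ^ k = 1 := Iff.rfl

theorem keystep (h : MC p S a b ρ m n) (hp : p.Prime) (hodd : Odd p) (k : ℕ) {x y : G}
    (hx : x ∈ S) (hy : y ∈ S) (hxy : x ^ p = y ^ p) (hx1 : x ^ p ^ (k + 2) = 1) :
    (x⁻¹ * y) ^ p ^ (k + 1) = 1 := by
  have hy1 : y ^ p ^ (k + 2) = 1 := by
    rw [pow_succ', pow_mul, ← hxy, ← pow_mul, ← pow_succ', hx1]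
  obtain ⟨j, i, rfl⟩ := h.gen x hx
  obtain ⟨j', i', rfl⟩ := h.gen y hy
  rw [h.pow_eq_one hp hodd] at hx1 hy1
  obtain ⟨t, ht⟩ := h.powAux hodd j i
  obtain ⟨t', ht'⟩ := h.powAux hodd j' i'
  rw [ht, ht'] at hxy
  obtain ⟨hb1, ha1⟩ := h.ind' hxy
  have ha2 : a ^ (i * p ^ (k + 1)) = a ^ (i' * p ^ (k + 1)) := by
    have e1 : ∀ i t : ℤ, a ^ (i * p ^ (k + 2)) = 1 →
        (a ^ (i * (p * (1 + p * t)))) ^ (p ^ k) = a ^ (i * p ^ (k + 1)) := by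
      intro i t e
      rw [← zpow_natCast, ← zpow_mul]
      have : i * (p * (1 + p * t)) * ((p ^ k : ℕ) : ℤ) = i * p ^ (k + 2) * t + i * p ^ (k + 1) := by
        push_cast; ring
      rw [this, zpow_add, zpow_mul, e, one_zpow, one_mul]
    rw [← e1 i t hx1.2, ← e1 i' t' hy1.2, ha1]
  -- express b ^ (j' - j) with natural exponent
  have hbo : b ^ (p ^ n) = 1 := by rw [← h.ob]; exact pow_orderOf_eq_one b
  have hpn : 1 ≤ p ^ n := Nat.one_le_pow _ _ hp.pos
  set l : ℕ := j' + j * (p ^ n - 1) with hl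
  have hbl : (b ^ j)⁻¹ * b ^ j' = b ^ l := by
    rw [inv_mul_eq_iff_eq_mul, ← pow_add]
    have : j + l = j' + p ^ n * j := by
      rw [hl]; zify [hpn]; ring
    rw [this, pow_add, pow_mul, hbo]; simp
  obtain ⟨σ, hσ⟩ := h.swap l
  have hfin : (b ^ j * a ^ i)⁻¹ * (b ^ j' * a ^ i') = b ^ l * a ^ (-i * (1 + p * σ) + i') := by
    rw [zpow_add, ← mul_assoc (b ^ l), ← hσ, ← hbl, zpow_neg]; group
  rw [hfin, h.pow_eq_one hp hodd]
  constructor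
  · rw [pow_mul, ← hbl]
    have hc : Commute (b ^ j)⁻¹ (b ^ j') := ((Commute.refl b).pow_pow j j').inv_left
    rw [hc.mul_pow, inv_pow, pow_succ', ← pow_mul, ← pow_mul, ← mul_assoc, ← mul_assoc, pow_mul b (j * p), hb1,
      ← pow_mul, inv_mul_cancel]
  · have : (-i * (1 + p * σ) + i') * (p : ℤ) ^ (k + 1) =
        i' * p ^ (k + 1) - i * p ^ (k + 1) - i * p ^ (k + 2) * σ := by ring
    rw [this, zpow_sub, zpow_sub, ← ha2, zpow_mul a (i * p ^ (k + 2)), hx1.2]; simp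

theorem isP [Finite G] (h : MC p S a b ρ m n) (hp : p.Prime) (hodd : Odd p) (k : ℕ) :
    IsPGroup p (h.Om hp hodd k) := fun x => ⟨k, Subtype.ext x.2.2⟩

/-- `p'`-elements centralizing `Ω₁(Q)` centralize `Q`. -/
theorem cent [Finite G] (h : MC p S a b ρ m n) (hp : p.Prime) (hodd : Odd p) (hS : IsPGroup p S)
    {q e : ℕ} (hq : q.Prime) (hqp : q ≠ p) (g : G) (hg : orderOf g = q ^ e)
    (Q : Subgroup G) (hQ : Q ≤ S) (hgQ : ∀ x ∈ Q, g * x * g⁻¹ ∈ Q)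
    (hV : ∀ x ∈ Q, x ^ p = 1 → g * x * g⁻¹ = x) : ∀ x ∈ Q, g * x * g⁻¹ = x := by
  have key : ∀ k : ℕ, ∀ x ∈ Q, x ^ p ^ (k + 1) = 1 → g * x * g⁻¹ = x := by
    intro k
    induction k with
    | zero => simpa using hV
    | succ k ih =>
      intro x hx hx1
      have h1 : g * x ^ p * g⁻¹ = x ^ p := by
        apply ih _ (Q.pow_mem hx p)
        rw [← pow_mul, ← pow_succ', hx1]
      have h2 : x ^ p = (g * x * g⁻¹) ^ p := by rw [conj_pow, h1]
      have h3 := h.keystep hp hodd k (hQ hx) (hQ (hgQ x hx)) h2 hx1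
      have hW : ∀ w ∈ Q ⊓ h.Om hp hodd (k + 1), g * w * g⁻¹ = w := fun w hw =>
        ih w hw.1 hw.2.2
      obtain ⟨w, hw, hw2⟩ := mc_fix hp hq hqp g hg (Q ⊓ h.Om hp hodd (k + 1))
        ((h.isP hp hodd (k + 1)).to_le inf_le_right)
        (fun w hw => by rw [hW w hw]; exact hw) x
        ⟨Q.mul_mem (Q.inv_mem hx) (hgQ x hx), S.mul_mem (S.inv_mem (hQ hx)) (hQ (hgQ x hx)), h3⟩
      have hw3 := hW w hw
      have : g * (x * w) * g⁻¹ = (g * x * g⁻¹) * (g * w * g⁻¹) := by group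
      rw [this, hw3] at hw2
      exact mul_right_cancel hw2
  intro x hx
  obtain ⟨k, hk⟩ := hS ⟨x, hQ hx⟩
  have hk' : x ^ p ^ k = 1 := congrArg Subtype.val hk
  apply key k x hx
  rw [pow_succ, pow_mul, hk', one_pow]

end MC

theorem mc_unitgen {G : Type*} [Group G] {p M : ℕ} {y : G} (hy : y ^ p ^ M = 1) {c : ℤ}
    (hc : IsCoprime c p) : y ∈ zpowers (y ^ c) := by
  have h1 : IsCoprime c ((p ^ M : ℕ) : ℤ) := by push_cast; exact hc.pow_right
  obtain ⟨u, v, huv⟩ := h1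
  refine ⟨u, ?_⟩
  change (y ^ c) ^ u = y
  have : y ^ (u * c + v * ((p ^ M : ℕ) : ℤ)) = y := by rw [huv, zpow_one]
  rw [zpow_add, mul_comm v, zpow_mul y ((p ^ M : ℕ) : ℤ), zpow_natCast, hy, one_zpow, mul_one, mul_comm u,
    zpow_mul] at this
  exact this

namespace MC

variable {G : Type*} [Group G] {p : ℕ} {S : Subgroup G} {a b : G} {ρ m n : ℕ}

theorem comm_mem (h : MC p S a b ρ m n) {x y : G} (hx : x ∈ S) (hy : y ∈ S) :
    x * y * x⁻¹ * y⁻¹ ∈ zpowers a := by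
  have key : ∀ x ∈ S, ∀ y ∈ S, (y * x)⁻¹ * (x * y) ∈ zpowers a := by
    intro x hx y hy
    obtain ⟨j, i, rfl⟩ := h.gen x hx
    obtain ⟨j', i', rfl⟩ := h.gen y hy
    obtain ⟨σ, hσ⟩ := h.swap j
    obtain ⟨τ, hτ⟩ := h.swap j'
    have e1 : ∀ A B C D : G, A * B * (C * D) = A * (B * C) * D := by intros; group
    have e2 : ∀ A B C D : G, A * (B * C) * D = A * B * (C * D) := by intros; group
    rw [e1, hσ, e2, e1 (b ^ j), hτ, e2 (b ^ j), ← pow_add, ← pow_add, ← zpow_add, ← zpow_add,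
      add_comm j j']
    refine ⟨-(i' * (1 + p * σ) + i) + (i * (1 + p * τ) + i'), ?_⟩
    change a ^ _ = _
    rw [zpow_add, zpow_neg]; group
  have := key x⁻¹ (S.inv_mem hx) y⁻¹ (S.inv_mem hy)
  convert this using 1
  group

theorem pa (h : MC p S a b ρ m n) : a ^ p ^ m = 1 := by rw [← h.oa]; exact pow_orderOf_eq_one a
theorem pb (h : MC p S a b ρ m n) : b ^ p ^ n = 1 := by rw [← h.ob]; exact pow_orderOf_eq_one b

theorem comm_of (h : MC p S a b ρ m n) (hab : a * b = b * a) {x y : G} (hx : x ∈ S) (hy : y ∈ S) :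
    x * y = y * x := by
  obtain ⟨j, i, rfl⟩ := h.gen x hx
  obtain ⟨j', i', rfl⟩ := h.gen y hy
  have c : Commute a b := hab
  have c1 : Commute (b ^ j) (b ^ j' * a ^ i') :=
    (((Commute.refl b).pow_pow _ _)).mul_right ((c.symm.zpow_right i').pow_left j)
  have c2 : Commute (a ^ i) (b ^ j' * a ^ i') :=
    ((c.pow_right j').zpow_left i).mul_right ((Commute.refl a).zpow_zpow _ _)
  exact c1.mul_left c2

theorem W0iff (h : MC p S a b ρ m n) (hp : p.Prime) (hodd : Odd p) {k : ℕ} (hk : k < m) (j : ℕ) (i : ℤ) :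
    (b ^ j * a ^ i) ^ p ^ k ∈ zpowers ((a ^ p ^ k) ^ p) ↔ b ^ (j * p ^ k) = 1 ∧ (p : ℤ) ∣ i := by
  obtain ⟨t, ht⟩ := h.powK hodd k j i
  rw [ht]
  have hp0 : (p : ℤ) ≠ 0 := by exact_mod_cast hp.ne_zero
  constructor
  · rintro ⟨l, hl⟩
    have e : b ^ 0 * a ^ ((p : ℤ) ^ k * p * l) = b ^ (j * p ^ k) * a ^ (i * (p ^ k * (1 + p * t))) := by
      rw [← hl]
      change _ = ((a ^ p ^ k) ^ p) ^ l
      rw [zpow_mul, zpow_mul, pow_zero, one_mul, ← zpow_natCast, ← zpow_natCast]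
      push_cast; rfl
    obtain ⟨h1, h2⟩ := h.ind' e
    refine ⟨by rw [← h1, pow_zero], ?_⟩
    rw [eq_comm, ← mul_inv_eq_one, ← zpow_neg, ← zpow_add, ← orderOf_dvd_iff_zpow_eq_one, h.oa] at h2
    have h3 : ((p : ℤ) ^ k * p) ∣ (i * (p ^ k * (1 + p * t)) + -(p ^ k * p * l)) := by
      refine dvd_trans ?_ h2
      rw [← pow_succ]; push_cast
      exact pow_dvd_pow _ hk
    have h4 : (i * (p ^ k * (1 + p * t)) + -(p ^ k * p * l)) = (p : ℤ) ^ k * (i + p * (i * t - l)) := by ring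
    rw [h4] at h3
    have h5 := Int.dvd_of_mul_dvd_mul_left (pow_ne_zero k hp0) h3
    exact (Int.dvd_add_left (Dvd.intro _ rfl)).mp h5
  · rintro ⟨h1, l, rfl⟩
    rw [h1, one_mul]
    refine ⟨l * (1 + p * t), ?_⟩
    change ((a ^ p ^ k) ^ p) ^ (l * (1 + p * t)) = _
    rw [← zpow_natCast, ← zpow_natCast, ← zpow_mul, ← zpow_mul]
    congr 1
    push_cast; ring

theorem swapmul (h : MC p S a b ρ m n) (j : ℕ) : ∃ σ : ℤ, ∀ i i' : ℤ,
    a ^ i * (b ^ j * a ^ i') = b ^ j * a ^ (i * (1 + p * σ) + i') := by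
  obtain ⟨σ, hσ⟩ := h.swap j
  refine ⟨σ, fun i i' => ?_⟩
  rw [← mul_assoc, hσ, zpow_add, mul_assoc]

theorem cent_of_comm [Finite G] (h : MC p S a b ρ m n) (hp : p.Prime) (hodd : Odd p)
    (hS : IsPGroup p S)
    {q e : ℕ} (hq : q.Prime) (hqp : q ≠ p) (g : G) (hg : orderOf g = q ^ e)
    (hgS : ∀ x ∈ S, g * x * g⁻¹ ∈ S) {k : ℕ} (hk : k < m) (hs : g * a ^ p ^ k * g⁻¹ = a ^ p ^ k)
    (hcomm : ∀ x ∈ S, ∀ y ∈ S, x * y * x⁻¹ * y⁻¹ ∈ zpowers (a ^ p ^ k))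
    (hnab : a * b ≠ b * a) : ∀ x ∈ S, g * x * g⁻¹ = x := by
  have hp0 : (p : ℤ) ≠ 0 := by exact_mod_cast hp.ne_zero
  have cop : ∀ τ : ℤ, IsCoprime (1 + p * τ) (p : ℤ) := fun τ => ⟨1, -τ, by ring⟩
  let W : Subgroup G :=
    { carrier := {x | x ∈ S ∧ x ^ p ^ k ∈ zpowers ((a ^ p ^ k) ^ p)}
      mul_mem' := by
        rintro x y ⟨hx, hx1⟩ ⟨hy, hy1⟩
        refine ⟨S.mul_mem hx hy, ?_⟩
        obtain ⟨j, i, rfl⟩ := h.gen x hx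
        obtain ⟨j', i', rfl⟩ := h.gen y hy
        rw [h.W0iff hp hodd hk] at hx1 hy1
        obtain ⟨σ, hσ⟩ := h.swapmul j'
        rw [mul_assoc, hσ, ← mul_assoc, ← pow_add, h.W0iff hp hodd hk]
        refine ⟨by rw [add_mul, pow_add, hx1.1, hy1.1, one_mul], ?_⟩
        exact dvd_add (dvd_mul_of_dvd_left hx1.2 _) hy1.2
      one_mem' := ⟨S.one_mem, by rw [one_pow]; exact Subgroup.one_mem _⟩
      inv_mem' := by
        rintro x ⟨hx, hx1⟩
        exact ⟨S.inv_mem hx, by rw [inv_pow]; exact Subgroup.inv_mem _ hx1⟩ }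
  have hzp : ∀ l ∈ zpowers (a ^ p ^ k), g * l * g⁻¹ = l := by
    rintro _ ⟨l, rfl⟩
    change g * (a ^ p ^ k) ^ l * g⁻¹ = (a ^ p ^ k) ^ l
    rw [← conj_zpow, hs]
  have hle : zpowers ((a ^ p ^ k) ^ p) ≤ zpowers (a ^ p ^ k) := by
    rw [zpowers_le]; exact Subgroup.pow_mem _ (mem_zpowers _) _
  obtain ⟨w, hw, hwg⟩ := mc_fix hp hq hqp g hg W (hS.to_le (fun x hx => hx.1))
    (fun w hw => ⟨hgS w hw.1, by rw [conj_pow, hzp _ (hle hw.2)]; exact hw.2⟩) a (by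
      refine ⟨S.mul_mem (S.inv_mem h.ha) (hgS a h.ha), ?_⟩
      obtain ⟨j, i, hji⟩ := h.gen _ (hgS a h.ha)
      have e1 : (g * a * g⁻¹) ^ p ^ k = a ^ p ^ k := by rw [conj_pow, hs]
      obtain ⟨t, ht⟩ := h.powK hodd k j i
      rw [hji, ht] at e1
      have e2 : b ^ (j * p ^ k) * a ^ (i * (p ^ k * (1 + p * t))) = b ^ 0 * a ^ ((p ^ k : ℕ) : ℤ) := by
        rw [e1, zpow_natCast]; simp
      obtain ⟨h1, h2⟩ := h.ind' e2
      rw [← mul_inv_eq_one, ← zpow_neg, ← zpow_add, ← orderOf_dvd_iff_zpow_eq_one, h.oa] at h2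
      have h3 : ((p : ℤ) ^ k * p) ∣ (i * (p ^ k * (1 + p * t)) + -((p ^ k : ℕ) : ℤ)) := by
        refine dvd_trans ?_ h2
        rw [← pow_succ]; push_cast
        exact pow_dvd_pow _ hk
      have h4 : (i * (p ^ k * (1 + p * t)) + -((p ^ k : ℕ) : ℤ)) = (p : ℤ) ^ k * ((i - 1) + p * (i * t)) := by
        push_cast; ring
      rw [h4] at h3
      have h5 := Int.dvd_of_mul_dvd_mul_left (pow_ne_zero k hp0) h3
      have h6 := (Int.dvd_add_left (Dvd.intro _ rfl)).mp h5
      obtain ⟨σ, hσ⟩ := h.swapmul j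
      rw [hji]
      have := hσ (-1) i
      rw [zpow_neg_one] at this
      rw [this, h.W0iff hp hodd hk]
      refine ⟨by simpa using h1, ?_⟩
      have e3 : -1 * (1 + p * σ) + i = (i - 1) - p * σ := by ring
      rw [e3]
      exact dvd_sub h6 (Dvd.intro _ rfl))
  set x := a * w with hx
  have hxS : x ∈ S := S.mul_mem h.ha hw.1
  obtain ⟨j, τ, hjx, hx2⟩ : ∃ (j : ℕ) (τ : ℤ), b ^ (j * p ^ k) = 1 ∧ x = b ^ j * a ^ (1 + p * τ) := by
    obtain ⟨j, i, hji⟩ := h.gen w hw.1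
    have := hw.2
    rw [hji, h.W0iff hp hodd hk] at this
    obtain ⟨h1, l, rfl⟩ := this
    obtain ⟨σ, hσ⟩ := h.swapmul j
    refine ⟨j, σ + l, h1, ?_⟩
    have := hσ 1 (p * l)
    rw [zpow_one] at this
    rw [hx, hji, this]
    congr 2
    ring
  -- s is a power of x
  have hsx : a ^ p ^ k ∈ zpowers x := by
    obtain ⟨t, ht⟩ := h.powK hodd k j (1 + p * τ)
    rw [← hx2, hjx, one_mul] at ht
    have e1 : x ^ p ^ k = (a ^ p ^ k) ^ (1 + p * (τ + t + p * τ * t)) := by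
      rw [ht, ← zpow_natCast, ← zpow_mul]
      congr 1
      push_cast; ring
    have e2 : a ^ p ^ k ∈ zpowers ((a ^ p ^ k) ^ (1 + p * (τ + t + p * τ * t))) :=
      mc_unitgen (M := m) (by rw [← pow_mul, mul_comm, pow_mul, h.pa, one_pow]) (cop _)
    rw [← e1] at e2
    exact (zpowers_le.mpr (Subgroup.pow_mem _ (mem_zpowers x) _)) e2
  have hcomx : ∀ y ∈ S, y * x * y⁻¹ ∈ zpowers x := by
    intro y hy
    have h1 := (zpowers_le.mpr hsx) (hcomm y hy x hxS)
    have h2 := Subgroup.mul_mem _ h1 (mem_zpowers x)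
    simpa using h2
  have hacl : ∀ H : Subgroup G, x ∈ H → b ∈ H → a ∈ H := by
    intro H h1 h2
    have e1 : a ^ (1 + p * τ) ∈ H := by
      have : a ^ (1 + p * τ) = (b ^ j)⁻¹ * x := by rw [hx2]; group
      rw [this]
      exact H.mul_mem (H.inv_mem (H.pow_mem h2 j)) h1
    exact (zpowers_le.mpr e1) (mc_unitgen h.pa (cop τ))
  have hxb : x * b ≠ b * x := by
    intro hc
    apply hnab
    have : a ∈ centralizer {b} := hacl _ (by rw [mem_centralizer_singleton_iff]; exact hc)
      (by rw [mem_centralizer_singleton_iff])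
    rw [mem_centralizer_singleton_iff] at this
    exact this
  -- the fixed element over b
  have hbx : g * (b * x * b⁻¹) * g⁻¹ = b * x * b⁻¹ := by
    have h1 := hzp _ (hcomm b h.hb x hxS)
    have e1 : b * x * b⁻¹ = (b * x * b⁻¹ * x⁻¹) * x := by group
    calc g * (b * x * b⁻¹) * g⁻¹ = (g * (b * x * b⁻¹ * x⁻¹) * g⁻¹) * (g * x * g⁻¹) := by group
      _ = _ := by rw [h1, hwg]; group
  obtain ⟨y, hy, hyg⟩ := mc_fix hp hq hqp g hg (S ⊓ centralizer {x}) (hS.to_le inf_le_left)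
    (fun w hw => ⟨hgS w hw.1, by
      have := mem_centralizer_singleton_iff.mp hw.2
      refine mem_centralizer_singleton_iff.mpr ?_
      calc g * w * g⁻¹ * x = g * w * g⁻¹ * (g * x * g⁻¹) := by rw [hwg]
        _ = g * (w * x) * g⁻¹ := by group
        _ = (g * x * g⁻¹) * (g * w * g⁻¹) := by rw [this]; group
        _ = _ := by rw [hwg]⟩) b (by
      refine ⟨S.mul_mem (S.inv_mem h.hb) (hgS b h.hb), ?_⟩
      refine mem_centralizer_singleton_iff.mpr ?_
      have e1 : g * b * g⁻¹ * x * (g * b * g⁻¹)⁻¹ = b * x * b⁻¹ := by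
        calc g * b * g⁻¹ * x * (g * b * g⁻¹)⁻¹ = g * b * g⁻¹ * (g * x * g⁻¹) * (g * b * g⁻¹)⁻¹ := by rw [hwg]
          _ = g * (b * x * b⁻¹) * g⁻¹ := by group
          _ = _ := hbx
      calc b⁻¹ * (g * b * g⁻¹) * x = b⁻¹ * (g * b * g⁻¹ * x * (g * b * g⁻¹)⁻¹) * (g * b * g⁻¹) := by group
        _ = _ := by rw [e1]; group)
  obtain ⟨l, c, hlc⟩ : ∃ l c : ℤ, y = b ^ l * x ^ c := by
    have hn : zpowers b ≤ normalizer ((zpowers x : Subgroup G) : Set G) := by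
      have hb1 : ∀ v ∈ S, ∀ u ∈ zpowers x, v * u * v⁻¹ ∈ zpowers x := by
        rintro v hv _ ⟨l, rfl⟩
        change v * x ^ l * v⁻¹ ∈ _
        rw [← conj_zpow]
        exact Subgroup.zpow_mem _ (hcomx v hv) l
      rw [zpowers_le, Subgroup.mem_normalizer_iff]
      intro u
      refine ⟨hb1 b h.hb u, fun hu => ?_⟩
      have := hb1 b⁻¹ (S.inv_mem h.hb) _ hu
      simpa [mul_assoc] using this
    have hbs : b ∈ zpowers b ⊔ zpowers x := le_sup_left (a := zpowers b) (mem_zpowers b)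
    have hxs : x ∈ zpowers b ⊔ zpowers x := le_sup_right (a := zpowers b) (mem_zpowers x)
    have hy1 : y ∈ zpowers b ⊔ zpowers x := by
      obtain ⟨j1, i1, e1⟩ := h.gen y hy.1
      rw [e1]
      exact Subgroup.mul_mem _ (Subgroup.pow_mem _ hbs _) (Subgroup.zpow_mem _ (hacl _ hxs hbs) _)
    rw [← SetLike.mem_coe, coe_mul_of_left_le_normalizer_right _ _ hn] at hy1
    obtain ⟨_, ⟨l, rfl⟩, _, ⟨c, rfl⟩, e1⟩ := hy1
    exact ⟨l, c, e1.symm⟩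
  have hyx : y * x = x * y := mem_centralizer_singleton_iff.mp hy.2
  have hpl : (p : ℤ) ∣ l := by
    by_contra hnd
    have hcop : IsCoprime l (p : ℤ) :=
      ((Nat.prime_iff_prime_int.mp hp).coprime_iff_not_dvd.mpr hnd).symm
    have h1 : b ^ l ∈ centralizer {x} := by
      have : b ^ l = y * (x ^ c)⁻¹ := by rw [hlc]; group
      rw [this]
      refine Subgroup.mul_mem _ hy.2 (Subgroup.inv_mem _ (Subgroup.zpow_mem _ ?_ _))
      rw [mem_centralizer_singleton_iff]
    have h2 := (zpowers_le.mpr h1) (mc_unitgen h.pb hcop)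
    rw [mem_centralizer_singleton_iff] at h2
    exact hxb h2.symm
  obtain ⟨l', rfl⟩ := hpl
  have cg : ∀ u : G, u ∈ centralizer {g} ↔ g * u * g⁻¹ = u := by
    intro u
    rw [mem_centralizer_singleton_iff, mul_inv_eq_iff_eq_mul, eq_comm]
  have hxg : x ∈ centralizer {g} := (cg x).mpr hwg
  have hbg : b ∈ centralizer {g} := by
    have h1 : b ^ (1 + p * l') ∈ centralizer {g} := by
      have : b ^ (1 + p * l') = (b * y) * (x ^ c)⁻¹ := by
        rw [hlc, zpow_add, zpow_one]; group
      rw [this]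
      exact Subgroup.mul_mem _ ((cg _).mpr hyg) (Subgroup.inv_mem _ (Subgroup.zpow_mem _ hxg _))
    exact (zpowers_le.mpr h1) (mc_unitgen h.pb (cop _))
  have hag := hacl _ hxg hbg
  intro v hv
  rw [← cg]
  obtain ⟨j1, i1, e1⟩ := h.gen v hv
  rw [e1]
  exact Subgroup.mul_mem _ (Subgroup.pow_mem _ hbg _) (Subgroup.zpow_mem _ hag _)

end MC

theorem mc_exists {G : Type*} [Group G] [Finite G] {p : ℕ} [hp : Fact p.Prime] (S : Subgroup G)
    (hS : IsPGroup p S) (hsplit : IsSplitMetacyclic S) :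
    ∃ (a b : G) (ρ m n : ℕ), MC p S a b ρ m n := by
  obtain ⟨C, K, hC, hCc, hKc, hinf, hsup⟩ := hsplit
  obtain ⟨a, ha⟩ := (Subgroup.isCyclic_iff_exists_zpowers_eq_top C).mp hCc
  obtain ⟨b, hb⟩ := (Subgroup.isCyclic_iff_exists_zpowers_eq_top K).mp hKc
  have haC : a ∈ C := ha ▸ mem_zpowers a
  have hbK : b ∈ K := hb ▸ mem_zpowers b
  obtain ⟨m, hm⟩ := (IsPGroup.iff_orderOf.mp hS) a
  obtain ⟨n, hn⟩ := (IsPGroup.iff_orderOf.mp hS) b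
  have hconj : b⁻¹ * a * b ∈ C := by
    have := hC.conj_mem a haC b⁻¹
    simpa using this
  obtain ⟨ρ, hρ⟩ : ∃ ρ : ℕ, b⁻¹ * a * b = a ^ (1 + p * ρ) := by
    rcases Nat.eq_zero_or_pos m with h0 | hpos
    · refine ⟨0, ?_⟩
      rw [h0, pow_zero, orderOf_eq_one_iff] at hm
      simp [hm]
    · rw [← ha, ← mem_powers_iff_mem_zpowers] at hconj
      obtain ⟨r, hr⟩ := hconj
      change a ^ r = _ at hr
      have hit : ∀ l : ℕ, (b ^ l)⁻¹ * a * b ^ l = a ^ (r ^ l) := by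
        intro l
        induction l with
        | zero => simp
        | succ l ih =>
          have e1 : (b ^ (l + 1))⁻¹ * a * b ^ (l + 1) = b⁻¹ * ((b ^ l)⁻¹ * a * b ^ l) * b := by
            rw [pow_succ]; group
          have e2 : b⁻¹ * a ^ (r ^ l) * b = (b⁻¹ * a * b) ^ (r ^ l) := by
            have := conj_pow (a := b⁻¹) (b := a) (i := r ^ l)
            simpa using this.symm
          rw [e1, ih, e2, ← hr, ← pow_mul, pow_succ']
      have h1 := hit (p ^ n)
      rw [← hn, pow_orderOf_eq_one, hn] at h1
      have h2 : a ^ (r ^ p ^ n) = a ^ 1 := by rw [← h1]; simp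
      rw [pow_eq_pow_iff_modEq, hm] at h2
      have h3 : r ^ p ^ n ≡ 1 [MOD p] := h2.of_dvd (dvd_pow_self p hpos.ne')
      have h4 : ((r : ℕ) : ZMod p) = 1 := by
        have := (ZMod.natCast_eq_natCast_iff _ _ _).mpr h3
        push_cast at this
        rwa [ZMod.pow_card_pow] at this
      have h5 : 1 ≤ r := by
        rcases Nat.eq_zero_or_pos r with h | h
        · subst h; simp at h4
        · exact h
      have h6 : 1 ≡ r [MOD p] := by
        rw [← ZMod.natCast_eq_natCast_iff]; simp [h4]
      obtain ⟨ρ, hρ⟩ := (Nat.modEq_iff_dvd' h5).mp h6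
      refine ⟨ρ, ?_⟩
      rw [← hr, ← hρ]
      congr 1
      omega
  refine ⟨a, b, ρ, m, n, a.2, b.2, ?_, by simpa using hm, by simpa using hn, ?_, ?_⟩
  · exact_mod_cast congrArg Subtype.val hρ
  · intro x hx
    have h1 : (⟨x, hx⟩ : S) ∈ K ⊔ C := by rw [sup_comm, hsup]; trivial
    obtain ⟨k, hk, c, hc, hkc⟩ := Subgroup.mem_sup_of_normal_right.mp h1
    rw [← hb, ← mem_powers_iff_mem_zpowers] at hk
    rw [← ha] at hc
    obtain ⟨j, rfl⟩ := hk
    obtain ⟨i, rfl⟩ := hc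
    refine ⟨j, i, ?_⟩
    have := congrArg Subtype.val hkc
    simpa using this.symm
  · intro j i hji
    have h1 : b ^ j = a ^ i := Subtype.ext (by simpa using hji)
    have h2 : b ^ j ∈ C ⊓ K := ⟨by rw [h1]; exact C.zpow_mem haC i, K.zpow_mem hbK j⟩
    rw [hinf, Subgroup.mem_bot] at h2
    simpa using congrArg Subtype.val h2

namespace MC

variable {G : Type*} [Group G] {p : ℕ} {S : Subgroup G} {a b : G} {ρ m n : ℕ}

theorem memL (h : MC p S a b ρ (m + 1) n) (hp : p.Prime) {x : G} (hx : x ∈ zpowers a)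
    (hx1 : x ^ p = 1) : x ∈ zpowers (a ^ p ^ m) := by
  obtain ⟨i, rfl⟩ := hx
  change (a ^ i) ^ p = 1 at hx1
  change a ^ i ∈ _
  rw [← zpow_natCast, ← zpow_mul, ← orderOf_dvd_iff_zpow_eq_one, h.oa, pow_succ] at hx1
  push_cast at hx1
  have hp0 : (p : ℤ) ≠ 0 := by exact_mod_cast hp.ne_zero
  obtain ⟨l, rfl⟩ := Int.dvd_of_mul_dvd_mul_right hp0 hx1
  refine ⟨l, ?_⟩
  change (a ^ p ^ m) ^ l = _
  rw [zpow_mul, ← zpow_natCast]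
  push_cast; rfl

theorem zp (h : MC p S a b ρ (m + 1) n) : (a ^ p ^ m) ^ p = 1 := by
  rw [← pow_mul, ← pow_succ, h.pa]

theorem zord (h : MC p S a b ρ (m + 1) n) (hp : p.Prime) : orderOf (a ^ p ^ m) = p := by
  have := Fact.mk hp
  apply orderOf_eq_prime h.zp
  intro e
  have := orderOf_dvd_of_pow_eq_one e
  rw [h.oa] at this
  have := (Nat.pow_dvd_pow_iff_le_right hp.one_lt).mp this
  omega

theorem zS (h : MC p S a b ρ (m + 1) n) : a ^ p ^ m ∈ S := S.pow_mem h.ha _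

theorem zcent (h : MC p S a b ρ (m + 1) n) {x : G} (hx : x ∈ S) :
    x * a ^ p ^ m * x⁻¹ = a ^ p ^ m := by
  have h1 : b ∈ centralizer {a ^ p ^ m} := by
    rw [mem_centralizer_singleton_iff]
    have e2 : b⁻¹ * a ^ p ^ m * b = a ^ p ^ m := by
      have := h.conjA ((p ^ m : ℕ) : ℤ)
      rw [zpow_natCast] at this
      rw [this, mul_add, mul_one, zpow_add, zpow_natCast, ← mul_assoc, zpow_mul, zpow_mul, zpow_natCast,
        zpow_natCast, zpow_natCast, h.zp]
      simp
    calc b * a ^ p ^ m = b * (b⁻¹ * a ^ p ^ m * b) := by rw [e2]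
      _ = _ := by group
  have h2 : a ∈ centralizer {a ^ p ^ m} := by
    rw [mem_centralizer_singleton_iff]
    exact (Commute.refl a).pow_right _
  obtain ⟨j, i, rfl⟩ := h.gen x hx
  have := Subgroup.mul_mem _ (Subgroup.pow_mem _ h1 j) (Subgroup.zpow_mem _ h2 i)
  rw [mem_centralizer_singleton_iff] at this
  rw [this]; group

/-- `S' = ⟨a^(p^k)⟩`. -/
theorem exists_comm (h : MC p S a b ρ m n) (hp : p.Prime) (hnab : a * b ≠ b * a) :
    ∃ k < m, ⁅S, S⁆ = zpowers (a ^ p ^ k) := by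
  have hle : ⁅S, S⁆ ≤ zpowers a := by
    rw [Subgroup.commutator_le]
    intro x hx y hy
    exact h.comm_mem hx hy
  have hfin : Finite (zpowers a) := by
    apply Nat.finite_of_card_ne_zero
    rw [Nat.card_zpowers, h.oa]; exact pow_ne_zero _ hp.ne_zero
  have h1 : ∃ d : ℕ, d ∣ p ^ m ∧ ⁅S, S⁆ = zpowers (a ^ d) := by
    obtain ⟨y, hy⟩ : ∃ y, ⁅S, S⁆ = zpowers y := by
      have : IsCyclic (⁅S, S⁆.subgroupOf (zpowers a)) := inferInstance
      have : IsCyclic (⁅S, S⁆ : Subgroup G) := isCyclic_of_surjective (Subgroup.subgroupOfEquivOfLe hle)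
        (Subgroup.subgroupOfEquivOfLe hle).surjective
      obtain ⟨y, hy⟩ := (Subgroup.isCyclic_iff_exists_zpowers_eq_top _).mp this
      exact ⟨y, hy.symm⟩
    have hya : y ∈ zpowers a := hle (hy ▸ mem_zpowers y)
    obtain ⟨i, rfl⟩ := hya
    refine ⟨Int.gcd i (p ^ m : ℕ), ?_, ?_⟩
    · exact_mod_cast Int.gcd_dvd_right i (p ^ m : ℕ)
    · rw [hy]
      change zpowers (a ^ i) = _
      apply le_antisymm
      · rw [zpowers_le]
        obtain ⟨l, hl⟩ := Int.gcd_dvd_left i (p ^ m : ℕ)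
        refine ⟨l, ?_⟩
        change (a ^ (Int.gcd i (p ^ m : ℕ))) ^ l = a ^ i
        rw [← zpow_natCast, ← zpow_mul, ← hl]
      · rw [zpowers_le]
        refine ⟨Int.gcdA i (p ^ m : ℕ), ?_⟩
        change (a ^ i) ^ _ = _
        rw [← zpow_natCast, Int.gcd_eq_gcd_ab, zpow_add, zpow_mul, zpow_mul a ((p ^ m : ℕ) : ℤ), zpow_natCast a (p ^ m),
          h.pa]
        simp
  obtain ⟨d, hd, hdS⟩ := h1
  obtain ⟨k, hk, rfl⟩ := (Nat.dvd_prime_pow hp).mp hd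
  refine ⟨k, lt_of_le_of_ne hk ?_, hdS⟩
  rintro rfl
  rw [h.pa, zpowers_one_eq_bot] at hdS
  apply hnab
  have := Subgroup.commutator_mem_commutator h.ha h.hb
  rw [hdS, Subgroup.mem_bot, commutatorElement_eq_one_iff_mul_comm] at this
  exact this

end MC

theorem mc_norm_comm {G : Type*} [Group G] {S : Subgroup G} {g : G}
    (hg : ∀ x ∈ S, g * x * g⁻¹ ∈ S) : ∀ x ∈ ⁅S, S⁆, g * x * g⁻¹ ∈ ⁅S, S⁆ := by
  have h1 : S.map (MulAut.conj g).toMonoidHom ≤ S := by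
    rintro _ ⟨x, hx, rfl⟩
    simpa using hg x hx
  have h2 : ⁅S, S⁆.map (MulAut.conj g).toMonoidHom ≤ ⁅S, S⁆ := by
    rw [Subgroup.map_commutator]
    exact Subgroup.commutator_mono h1 h1
  intro x hx
  have := h2 ⟨x, hx, rfl⟩
  simpa using this

namespace MC

variable {G : Type*} [Group G] {p : ℕ} {S : Subgroup G} {a b : G} {ρ m n : ℕ}

theorem zcomm (h : MC p S a b ρ (m + 1) n) (hp : p.Prime) (hnab : a * b ≠ b * a) :
    a ^ p ^ m ∈ ⁅S, S⁆ := by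
  obtain ⟨k, hk, hkS⟩ := h.exists_comm hp hnab
  rw [hkS]
  obtain ⟨l, rfl⟩ := Nat.exists_eq_add_of_le (Nat.lt_succ_iff.mp hk)
  rw [pow_add, pow_mul]
  exact Subgroup.pow_mem _ (mem_zpowers _) _

theorem commL (h : MC p S a b ρ (m + 1) n) (hp : p.Prime) (hnab : a * b ≠ b * a) {x : G}
    (hx : x ∈ ⁅S, S⁆) (hx1 : x ^ p = 1) : x ∈ zpowers (a ^ p ^ m) := by
  apply h.memL hp _ hx1
  obtain ⟨k, hk, hkS⟩ := h.exists_comm hp hnab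
  rw [hkS] at hx
  exact (zpowers_le.mpr (Subgroup.pow_mem _ (mem_zpowers a) _)) hx

theorem partA [Finite G] (h : MC p S a b ρ (m + 1) n) (hp : p.Prime) (hodd : Odd p)
    (hS : IsPGroup p S) (hnab : a * b ≠ b * a)
    {q e : ℕ} (hq : q.Prime) (hqp : q ≠ p) (g : G) (hg : orderOf g = q ^ e)
    (hgS : ∀ x ∈ S, g * x * g⁻¹ ∈ S) (hz : g * a ^ p ^ m * g⁻¹ = a ^ p ^ m) :
    ∀ x ∈ S, g * x * g⁻¹ = x := by
  have hSS : ⁅S, S⁆ ≤ S := by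
    rw [Subgroup.commutator_le]
    intro x hx y hy
    exact S.mul_mem (S.mul_mem (S.mul_mem hx hy) (S.inv_mem hx)) (S.inv_mem hy)
  have h1 := h.cent hp hodd hS hq hqp g hg ⁅S, S⁆ hSS (mc_norm_comm hgS) (by
    intro x hx hx1
    obtain ⟨l, rfl⟩ := h.commL hp hnab hx hx1
    change g * (a ^ p ^ m) ^ l * g⁻¹ = (a ^ p ^ m) ^ l
    rw [← conj_zpow, hz])
  obtain ⟨k, hk, hkS⟩ := h.exists_comm hp hnab
  refine h.cent_of_comm hp hodd hS hq hqp g hg hgS hk (h1 _ (hkS ▸ mem_zpowers _)) ?_ hnab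
  intro x hx y hy
  rw [← hkS]
  exact Subgroup.commutator_mem_commutator hx hy

end MC

theorem mc_conj_cent {G : Type*} [Group G] {Q : Subgroup G} {x c : G}
    (hx : x ∈ normalizer (Q : Set G)) (hc : c ∈ centralizer (Q : Set G)) :
    x * c * x⁻¹ ∈ centralizer (Q : Set G) := by
  rw [Subgroup.mem_centralizer_iff] at hc ⊢
  intro y hy
  have hy' : x⁻¹ * y * x ∈ Q := by
    have := (Subgroup.mem_normalizer_iff.mp (Subgroup.inv_mem _ hx) y).mp hy
    simpa using this
  have h1 := hc _ hy'
  calc y * (x * c * x⁻¹) = x * (x⁻¹ * y * x * c) * x⁻¹ := by group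
    _ = x * (c * (x⁻¹ * y * x)) * x⁻¹ := by rw [h1]
    _ = _ := by group

theorem mc_sup_mem {G : Type*} [Group G] {Q S : Subgroup G} (hS : S ≤ normalizer (Q : Set G))
    {u : G} (hu : u ∈ S ⊔ centralizer (Q : Set G)) : ∃ s ∈ S, ∃ c ∈ centralizer (Q : Set G), u = s * c := by
  have hn : S ≤ normalizer ((centralizer (Q : Set G) : Subgroup G) : Set G) := by
    intro x hx
    rw [Subgroup.mem_normalizer_iff]
    intro c
    refine ⟨fun hc => mc_conj_cent (hS hx) hc, fun hc => ?_⟩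
    have := mc_conj_cent (Subgroup.inv_mem _ (hS hx)) hc
    simpa [mul_assoc] using this
  rw [← SetLike.mem_coe, coe_mul_of_left_le_normalizer_right _ _ hn] at hu
  obtain ⟨s, hs, c, hc, e⟩ := hu
  exact ⟨s, hs, c, hc, e.symm⟩

theorem mc_mem_cent {G : Type*} [Group G] {Q : Subgroup G} {g : G}
    (h : ∀ x ∈ Q, g * x * g⁻¹ = x) : g ∈ centralizer (Q : Set G) := by
  rw [Subgroup.mem_centralizer_iff]
  intro x hx
  have := h x hx
  rw [mul_inv_eq_iff_eq_mul] at this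
  exact this.symm

theorem mc_cent_le {G : Type*} [Group G] {Q : Subgroup G} :
    centralizer (Q : Set G) ≤ normalizer (Q : Set G) := by
  intro c hc
  rw [Subgroup.mem_centralizer_iff] at hc
  rw [Subgroup.mem_normalizer_iff]
  have key : ∀ x ∈ Q, c * x * c⁻¹ = x := fun x hx => by rw [← hc x hx]; group
  intro x
  refine ⟨fun hx => by rw [key x hx]; exact hx, fun hx => ?_⟩
  have h1 := hc _ hx
  have h2 : c * x * c⁻¹ = x := by
    have : c * x = c * (c * x * c⁻¹) := by rw [← h1]; group
    exact (mul_left_cancel this).symm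
  rwa [h2] at hx

theorem mc_finish {G : Type*} [Group G] [Finite G] {p : ℕ} [hp : Fact p.Prime] (hodd : Odd p)
    (S : Sylow p G) {a b : G} {ρ m n : ℕ} (h : MC p (S : Subgroup G) a b ρ m n)
    (Q : Subgroup G) (hQ : Q ≤ (S : Subgroup G))
    (U : Subgroup G) (hUN : U ≤ normalizer (Q : Set G))
    (hU : ∀ x ∈ normalizer (Q : Set G), ∀ u ∈ U, x * u * x⁻¹ ∈ U) (hSU : (S : Subgroup G) ≤ U)
    (hV : ∀ q e : ℕ, q.Prime → q ≠ p → ∀ g ∈ U, orderOf g = q ^ e →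
      ∀ x ∈ Q, x ^ p = 1 → g * x * g⁻¹ = x) :
    ∀ g ∈ normalizer (Q : Set G), ∃ x ∈ normalizer ((S : Subgroup G) : Set G),
      x⁻¹ * g ∈ centralizer (Q : Set G) := by
  have hle : U ≤ (S : Subgroup G) ⊔ centralizer (Q : Set G) := by
    apply mc_pgrp S U _ hSU
    intro q e hq hqp g hg ho
    apply mc_mem_cent
    exact h.cent hp.out hodd S.isPGroup' hq hqp g ho Q hQ
      (fun x hx => (Subgroup.mem_normalizer_iff.mp (hUN hg) x).mp hx) (hV q e hq hqp g hg ho)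
  intro g hg
  obtain ⟨u, hu, hug⟩ := mc_conj S U hSU g (fun s hs => hU g hg s (hSU hs))
  obtain ⟨s, hs, c, hc, rfl⟩ := mc_sup_mem (hSU.trans hUN) (hle hu)
  refine ⟨c * g, ?_, ?_⟩
  · have h1 : s⁻¹ ∈ normalizer ((S : Subgroup G) : Set G) := le_normalizer (Subgroup.inv_mem _ hs)
    have := Subgroup.mul_mem _ h1 hug
    convert this using 1
    group
  · have := mc_conj_cent (Subgroup.inv_mem _ hg) (Subgroup.inv_mem _ hc)
    convert this using 1
    group

theorem mc_zpow_adj {G : Type*} [Group G] {p : ℕ} (hp : p.Prime) {s e f : G} (he : e ^ p = 1)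
    (hef : e * f = f * e) (hse : s * e * s⁻¹ = e) {w : G} (hw : w ∈ zpowers e) (hsf : s * f * s⁻¹ = f * w)
    (hne : w ≠ 1) : ∀ μ : ℤ, ∃ κ : ℤ, s ^ κ * f * (s ^ κ)⁻¹ = f * e ^ μ ∧ s ^ κ * e * (s ^ κ)⁻¹ = e := by
  obtain ⟨l, rfl⟩ := hw
  change s * f * s⁻¹ = f * e ^ l at hsf
  change e ^ l ≠ 1 at hne
  have hse' : ∀ i : ℤ, Commute s (e ^ i) := fun i => by
    have : Commute s e := by
      rw [mul_inv_eq_iff_eq_mul] at hse; exact hse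
    exact this.zpow_right i
  have hc : ∀ κ : ℤ, Commute (s ^ κ) e := fun κ => by
    have := (hse' 1).zpow_left κ
    rwa [zpow_one] at this
  have hn : ∀ κ : ℕ, s ^ κ * f * (s ^ κ)⁻¹ = f * e ^ (κ * l) := by
    intro κ
    induction κ with
    | zero => simp
    | succ κ ih =>
      have e1 : s ^ (κ + 1) * f * (s ^ (κ + 1))⁻¹ = s * (s ^ κ * f * (s ^ κ)⁻¹) * s⁻¹ := by
        rw [pow_succ']; group
      rw [e1, ih]
      calc s * (f * e ^ (κ * l)) * s⁻¹ = (s * f * s⁻¹) * (s * e ^ (κ * l) * s⁻¹) := by group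
        _ = f * e ^ l * e ^ (κ * l) := by rw [hsf, (hse' (κ * l)).eq]; group
        _ = _ := by rw [mul_assoc, ← zpow_add]; congr 2; push_cast; ring
  intro μ
  have hpl : ¬ (p : ℤ) ∣ l := by
    rintro ⟨c, rfl⟩
    apply hne
    rw [zpow_mul, zpow_natCast, he, one_zpow]
  obtain ⟨u, v, huv⟩ := ((Nat.prime_iff_prime_int.mp hp).coprime_iff_not_dvd.mpr hpl)
  -- u * p + v * l = 1
  have hp0 : (p : ℤ) ≠ 0 := by exact_mod_cast hp.ne_zero
  obtain ⟨κ, hκ⟩ : ∃ κ : ℕ, (κ : ℤ) = (v * μ) % p :=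
    ⟨((v * μ) % p).toNat, Int.toNat_of_nonneg (Int.emod_nonneg _ hp0)⟩
  refine ⟨κ, ?_, ?_⟩
  · rw [zpow_natCast, hn]
    congr 1
    have : (κ : ℤ) * l = μ + p * (-(u * μ) - (v * μ) / p * l) := by
      rw [hκ, Int.emod_def]
      linear_combination (μ) * huv
    rw [this, zpow_add, zpow_mul, zpow_natCast, he]; simp
  · rw [(hc κ).eq]; group

/-- From two opposite transvections one gets an element inverting. -/
theorem mc_inverter {G : Type*} [Group G] {e f u v : G} (hef : e * f = f * e)
    (h1 : u * e * u⁻¹ = e) (h2 : u * f * u⁻¹ = f * e)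
    (h3 : v * f * v⁻¹ = f) (h4 : v * e * v⁻¹ = e * f⁻¹) :
    ((u * v * u) * (u * v * u)) * e * ((u * v * u) * (u * v * u))⁻¹ = e⁻¹ ∧
    ((u * v * u) * (u * v * u)) * f * ((u * v * u) * (u * v * u))⁻¹ = f⁻¹ := by
  have a1 : (u * v * u) * e * (u * v * u)⁻¹ = f⁻¹ := by
    calc (u * v * u) * e * (u * v * u)⁻¹ = u * (v * (u * e * u⁻¹) * v⁻¹) * u⁻¹ := by group
      _ = u * (e * f⁻¹) * u⁻¹ := by rw [h1, h4]
      _ = (u * e * u⁻¹) * (u * f * u⁻¹)⁻¹ := by group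
      _ = _ := by rw [h1, h2]; group
  have a2 : (u * v * u) * f * (u * v * u)⁻¹ = e := by
    calc (u * v * u) * f * (u * v * u)⁻¹ = u * (v * (u * f * u⁻¹) * v⁻¹) * u⁻¹ := by group
      _ = u * ((v * f * v⁻¹) * (v * e * v⁻¹)) * u⁻¹ := by rw [h2]; group
      _ = u * (f * e * f⁻¹) * u⁻¹ := by rw [h3, h4]; group
      _ = _ := by rw [← hef, mul_inv_cancel_right, h1]
  set w := u * v * u
  constructor
  · calc w * w * e * (w * w)⁻¹ = w * (w * e * w⁻¹) * w⁻¹ := by group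
      _ = (w * f * w⁻¹)⁻¹ := by rw [a1]; group
      _ = _ := by rw [a2]
  · calc w * w * f * (w * w)⁻¹ = w * (w * f * w⁻¹) * w⁻¹ := by group
      _ = _ := by rw [a2, a1]

/-- No element can invert `Ω₁(S)`. -/
theorem mc_no_inverter {G : Type*} [Group G] [Finite G] {p : ℕ} [hp : Fact p.Prime] (hodd : Odd p)
    (S : Sylow p G) {a b : G} {ρ m n : ℕ} (h : MC p (S : Subgroup G) a b ρ m n)
    (hnab : a * b ≠ b * a) (g : G)
    (hg : ∀ x ∈ (S : Subgroup G), x ^ p = 1 → g * x * g⁻¹ = x⁻¹) : False := by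
  have hp2 : p ≠ 2 := by rintro rfl; exact absurd hodd (by decide)
  set V := h.Om hp.out hodd 1 with hVdef
  have hV : ∀ x, x ∈ V ↔ x ∈ (S : Subgroup G) ∧ x ^ p = 1 := by
    intro x; rw [hVdef, h.mem_Om, pow_one]
  have hSV : (S : Subgroup G) ≤ normalizer (V : Set G) := by
    have key : ∀ s ∈ (S : Subgroup G), ∀ x ∈ V, s * x * s⁻¹ ∈ V := by
      intro s hs x hx
      rw [hV] at hx ⊢
      exact ⟨Subgroup.mul_mem _ (Subgroup.mul_mem _ hs hx.1) (Subgroup.inv_mem _ hs), by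
        rw [conj_pow, hx.2]; group⟩
    intro s hs
    rw [Subgroup.mem_normalizer_iff]
    intro x
    refine ⟨key s hs x, fun hx => ?_⟩
    have := key s⁻¹ (Subgroup.inv_mem _ hs) _ hx
    simpa [mul_assoc] using this
  have hinv : ∀ x ∈ V, g * x * g⁻¹ = x⁻¹ := fun x hx => hg x ((hV x).mp hx).1 ((hV x).mp hx).2
  have hinv' : ∀ x ∈ V, g⁻¹ * x * g = x⁻¹ := by
    intro x hx
    have := hinv x hx
    have e : x = (g * x * g⁻¹)⁻¹ := by rw [this, inv_inv]
    calc g⁻¹ * x * g = g⁻¹ * (g * x * g⁻¹)⁻¹ * g := by rw [← e]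
      _ = _ := by group
  obtain ⟨u, hu, hug⟩ := mc_conj S ((S : Subgroup G) ⊔ centralizer (V : Set G)) le_sup_left g (by
    intro s hs
    have e : g * s * g⁻¹ = s * (s⁻¹ * (g * s * g⁻¹)) := by group
    rw [e]
    refine Subgroup.mul_mem _ (Subgroup.mem_sup_left hs) (Subgroup.mem_sup_right ?_)
    apply mc_mem_cent
    intro x hx
    have hsx : s * x⁻¹ * s⁻¹ ∈ V := (Subgroup.mem_normalizer_iff.mp (hSV hs) _).mp (V.inv_mem hx)
    calc s⁻¹ * (g * s * g⁻¹) * x * (s⁻¹ * (g * s * g⁻¹))⁻¹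
        = s⁻¹ * (g * (s * (g⁻¹ * x * g) * s⁻¹) * g⁻¹) * s := by group
      _ = s⁻¹ * (s * x⁻¹ * s⁻¹)⁻¹ * s := by rw [hinv' x hx, hinv _ hsx]
      _ = _ := by group)
  obtain ⟨s, hs, c, hc, rfl⟩ := mc_sup_mem hSV hu
  have ht0S : c * g ∈ normalizer ((S : Subgroup G) : Set G) := by
    have h1 : s⁻¹ ∈ normalizer ((S : Subgroup G) : Set G) := le_normalizer (Subgroup.inv_mem _ hs)
    have := Subgroup.mul_mem _ h1 hug
    convert this using 1
    group
  have ht0 : ∀ x ∈ V, (c * g) * x * (c * g)⁻¹ = x⁻¹ := by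
    intro x hx
    have h1 := Subgroup.mem_centralizer_iff.mp hc x⁻¹ (V.inv_mem hx)
    calc (c * g) * x * (c * g)⁻¹ = c * (g * x * g⁻¹) * c⁻¹ := by group
      _ = _ := by rw [hinv x hx, ← h1]; group
  set t0 := c * g
  obtain ⟨e, o, ho, heo⟩ := Nat.exists_eq_two_pow_mul_odd (orderOf_pos t0).ne'
  set t := t0 ^ o with ht
  have htS : t ∈ normalizer ((S : Subgroup G) : Set G) := Subgroup.pow_mem _ ht0S _
  have htpow : ∀ k : ℕ, ∀ x ∈ V, t0 ^ (2 * k + 1) * x * (t0 ^ (2 * k + 1))⁻¹ = x⁻¹ := by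
    intro k
    induction k with
    | zero => simpa using ht0
    | succ k ih =>
      intro x hx
      have e1 : t0 ^ (2 * (k + 1) + 1) * x * (t0 ^ (2 * (k + 1) + 1))⁻¹
          = t0 * (t0 * (t0 ^ (2 * k + 1) * x * (t0 ^ (2 * k + 1))⁻¹) * t0⁻¹) * t0⁻¹ := by
        rw [show 2 * (k + 1) + 1 = (2 * k + 1) + 1 + 1 by ring, pow_succ' t0 (2 * k + 1 + 1),
          pow_succ' t0 (2 * k + 1)]
        group
      rw [e1, ih x hx, ht0 _ (V.inv_mem hx), inv_inv, ht0 x hx]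
  have htV : ∀ x ∈ V, t * x * t⁻¹ = x⁻¹ := by
    obtain ⟨k, hk⟩ := ho
    rw [ht, hk]; exact htpow k
  have hoddo : o ≠ 0 := by rintro rfl; simp at ho
  have hto : orderOf t = 2 ^ e := by
    rw [ht, orderOf_pow_of_dvd hoddo (by rw [heo]; exact Dvd.intro_left _ rfl), heo]
    exact Nat.mul_div_cancel _ (Nat.pos_of_ne_zero hoddo)
  obtain ⟨e2, -, hto2⟩ := (Nat.dvd_prime_pow Nat.prime_two).mp (hto ▸ orderOf_pow_dvd (x := t) 2)
  have ht2 : ∀ x ∈ (S : Subgroup G), t ^ 2 * x * (t ^ 2)⁻¹ = x := by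
    refine h.cent hp.out hodd S.isPGroup' Nat.prime_two hp2.symm (t ^ 2) hto2 S le_rfl
      (fun x hx => (Subgroup.mem_normalizer_iff.mp (Subgroup.pow_mem _ htS 2) x).mp hx) ?_
    intro x hx hx1
    have hxV := (hV x).mpr ⟨hx, hx1⟩
    calc t ^ 2 * x * (t ^ 2)⁻¹ = t * (t * x * t⁻¹) * t⁻¹ := by rw [pow_two]; group
      _ = _ := by rw [htV x hxV, htV _ (V.inv_mem hxV), inv_inv]
  let φ : MulAut (S : Subgroup G) := (S : Subgroup G).normalizerMonoidHom ⟨t, htS⟩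
  have hφ : ∀ x : (S : Subgroup G), ((φ x : (S : Subgroup G)) : G) = t * x * t⁻¹ := fun x => rfl
  have hinvol : Function.Involutive φ := by
    intro x
    apply Subtype.ext
    rw [hφ, hφ]
    have := ht2 x x.2
    rw [← this]
    rw [this]
    calc t * (t * x * t⁻¹) * t⁻¹ = t ^ 2 * x * (t ^ 2)⁻¹ := by rw [pow_two]; group
      _ = _ := this
  have hfpf : MonoidHom.FixedPointFree φ := by
    intro x hx
    by_contra hne
    have hxo : orderOf x ≠ 1 := by rwa [Ne, orderOf_eq_one_iff]
    obtain ⟨k, hk⟩ := (IsPGroup.iff_orderOf.mp S.isPGroup') x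
    have hk0 : k ≠ 0 := by rintro rfl; simp at hk; exact hne hk
    obtain ⟨k, rfl⟩ := Nat.exists_eq_succ_of_ne_zero hk0
    set y := x ^ p ^ k with hy
    have hyp : y ^ p = 1 := by
      rw [hy, ← pow_mul, ← pow_succ]; rw [← Nat.succ_eq_add_one, ← hk]; exact pow_orderOf_eq_one x
    have hy1 : y ≠ 1 := by
      intro hy1
      have := orderOf_dvd_of_pow_eq_one hy1
      rw [hk] at this
      have := (Nat.pow_dvd_pow_iff_le_right hp.out.one_lt).mp this
      omega
    have hφy : φ y = y := by rw [hy, map_pow, hx]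
    have hyV : (y : G) ∈ V := (hV _).mpr ⟨y.2, by exact_mod_cast congrArg Subtype.val hyp⟩
    have hφy2 : φ y = y⁻¹ := Subtype.ext (by rw [hφ, htV _ hyV]; rfl)
    rw [hφy] at hφy2
    have hy2 : y ^ 2 = 1 := by rw [pow_two]; nth_rw 1 [hφy2]; group
    have hd := Nat.dvd_gcd (orderOf_dvd_of_pow_eq_one hy2) (orderOf_dvd_of_pow_eq_one hyp)
    have : Nat.gcd 2 p = 1 := (Nat.coprime_primes Nat.prime_two hp.out).mpr hp2.symm
    rw [this, Nat.dvd_one, orderOf_eq_one_iff] at hd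
    exact hy1 hd
  have := hfpf.commute_all_of_involutive hinvol ⟨a, h.ha⟩ ⟨b, h.hb⟩
  exact hnab (congrArg Subtype.val this)

theorem MC.omgen {G : Type*} [Group G] [Finite G] {p : ℕ} {S : Subgroup G} {a b : G} {ρ m n : ℕ}
    (h : MC p S a b ρ (m + 1) n) (hp : p.Prime) (hodd : Odd p) {v0 : G} (hv0 : v0 ∈ S)
    (hv01 : v0 ^ p = 1) (hL : v0 ∉ zpowers (a ^ p ^ m)) {v : G} (hv : v ∈ S) (hv1 : v ^ p = 1) :
    ∃ k : ℕ, ∃ l : ℤ, v = v0 ^ k * (a ^ p ^ m) ^ l := by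
  have hv0' := hv0
  have hv' := hv
  have hv01' := hv01
  have hv1' := hv1
  obtain ⟨j, i, rfl⟩ := h.gen v0 hv0
  obtain ⟨j', i', rfl⟩ := h.gen v hv
  have P0 := (h.pow_eq_one hp hodd 1 j i).mp (by rw [pow_one]; exact hv01)
  have P1 := (h.pow_eq_one hp hodd 1 j' i').mp (by rw [pow_one]; exact hv1)
  rw [pow_one] at P0 P1
  have hbj : b ^ j ≠ 1 := by
    intro e
    apply hL
    rw [e, one_mul] at hv01 ⊢
    exact h.memL hp ⟨i, rfl⟩ hv01
  have hn : n ≠ 0 := by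
    rintro rfl
    have := h.pb
    rw [pow_zero, pow_one] at this
    exact hbj (by rw [this, one_pow])
  obtain ⟨n, rfl⟩ := Nat.exists_eq_succ_of_ne_zero hn
  have d0 := orderOf_dvd_of_pow_eq_one P0.1
  have d1 := orderOf_dvd_of_pow_eq_one P1.1
  rw [h.ob, pow_succ] at d0 d1
  obtain ⟨r, rfl⟩ := Nat.dvd_of_mul_dvd_mul_right hp.pos d0
  obtain ⟨r', rfl⟩ := Nat.dvd_of_mul_dvd_mul_right hp.pos d1
  have hyp : (b ^ p ^ n) ^ p ^ 1 = 1 := by rw [pow_one, ← pow_mul, ← pow_succ]; exact h.pb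
  have hr : IsCoprime (r : ℤ) p := by
    rw [Nat.isCoprime_iff_coprime]
    refine ((Nat.Prime.coprime_iff_not_dvd hp).mpr ?_).symm
    rintro ⟨c, rfl⟩
    apply hbj
    rw [← mul_assoc, ← pow_succ, pow_mul, h.pb, one_pow]
  have hg := mc_unitgen hyp hr
  rw [zpow_natCast, ← mem_powers_iff_mem_zpowers] at hg
  obtain ⟨k, hk⟩ := hg
  change ((b ^ p ^ n) ^ r) ^ k = b ^ p ^ n at hk
  have hpow : ∀ k : ℕ, ∃ c : ℤ, (b ^ (p ^ n * r) * a ^ i) ^ k = b ^ (p ^ n * r * k) * a ^ c := by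
    intro k
    induction k with
    | zero => exact ⟨0, by simp⟩
    | succ k ih =>
      obtain ⟨c, hc⟩ := ih
      obtain ⟨σ, hσ⟩ := h.swap (p ^ n * r)
      refine ⟨c * (1 + p * σ) + i, ?_⟩
      rw [pow_succ, hc, zpow_add, mul_add, pow_add, mul_one]
      have := hσ c
      calc b ^ (p ^ n * r * k) * a ^ c * (b ^ (p ^ n * r) * a ^ i)
          = b ^ (p ^ n * r * k) * (a ^ c * b ^ (p ^ n * r)) * a ^ i := by group
        _ = _ := by rw [this]; group
  obtain ⟨c, hc⟩ := hpow (k * r')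
  have hb' : b ^ (p ^ n * r * (k * r')) = b ^ (p ^ n * r') := by
    rw [← mul_assoc, pow_mul _ _ r', pow_mul _ _ k, pow_mul _ _ r, hk, pow_mul]
  rw [hb'] at hc
  set v0 := b ^ (p ^ n * r) * a ^ i
  set v := b ^ (p ^ n * r') * a ^ i' with hvdef
  have h3 : (v0 ^ (k * r'))⁻¹ * v = a ^ (i' - c) := by
    rw [hc, hvdef, sub_eq_neg_add, zpow_add, zpow_neg]; group
  have h4 : ((v0 ^ (k * r'))⁻¹ * v) ^ p = 1 := by
    have : (v0 ^ (k * r'))⁻¹ * v ∈ h.Om hp hodd 1 := by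
      refine Subgroup.mul_mem _ (Subgroup.inv_mem _ (Subgroup.pow_mem _ ?_ _)) ?_
      · exact h.mem_Om.mpr ⟨hv0', by rw [pow_one]; exact hv01'⟩
      · exact h.mem_Om.mpr ⟨hv', by rw [pow_one]; exact hv1'⟩
    have := (h.mem_Om.mp this).2
    rwa [pow_one] at this
  obtain ⟨l, hl⟩ := h.memL hp (⟨i' - c, h3.symm⟩ : (v0 ^ (k * r'))⁻¹ * v ∈ zpowers a) h4
  change (a ^ p ^ m) ^ l = _ at hl
  exact ⟨k * r', l, by rw [hl]; group⟩

theorem mc_char {G : Type*} [Group G] {S Q : Subgroup G} (hQ : Q ≤ S)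
    (hc : Subgroup.Characteristic (Q.subgroupOf S)) :
    normalizer (S : Set G) ≤ normalizer (Q : Set G) := by
  have key : ∀ g ∈ normalizer (S : Set G), ∀ x ∈ Q, g * x * g⁻¹ ∈ Q := by
    intro g hg x hx
    let φ : MulAut S := S.normalizerMonoidHom ⟨g, hg⟩
    have h1 := hc.fixed φ
    have h2 : (⟨x, hQ hx⟩ : S) ∈ Q.subgroupOf S := hx
    rw [← h1] at h2
    exact h2
  intro g hg
  rw [Subgroup.mem_normalizer_iff]
  intro x
  refine ⟨key g hg x, fun hx => ?_⟩
  have := key g⁻¹ (Subgroup.inv_mem _ hg) _ hx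
  simpa [mul_assoc] using this

theorem mc_invmul {G : Type*} [Group G] {g z f x : G} {k : ℕ} {l : ℤ} (hef : z * f = f * z)
    (i1 : g * z * g⁻¹ = z⁻¹) (i2 : g * f * g⁻¹ = f⁻¹) (hx : x = f ^ k * z ^ l) :
    g * x * g⁻¹ = x⁻¹ := by
  have e1 : g * x * g⁻¹ = (g * f ^ k * g⁻¹) * (g * z ^ l * g⁻¹) := by rw [hx]; group
  rw [e1, ← conj_pow, ← conj_zpow, i1, i2, hx, mul_inv_rev, inv_pow, inv_zpow]
  have c : Commute (z ^ l) (f ^ k) := (Commute.pow_right (show Commute z f from hef) k).zpow_left l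
  exact (c.inv_inv).eq.symm

theorem mc_Q {G : Type*} [Group G] [Finite G] {p : ℕ} [hp : Fact p.Prime] (hodd : Odd p)
    (S : Sylow p G) {a b : G} {ρ m n : ℕ} (h : MC p (S : Subgroup G) a b ρ (m + 1) n)
    (hnab : a * b ≠ b * a) (Q : Subgroup G) (hQ : Q ≤ (S : Subgroup G))
    (hSN : (S : Subgroup G) ≤ normalizer (Q : Set G)) :
    ∀ g ∈ normalizer (Q : Set G), ∃ x ∈ normalizer ((S : Subgroup G) : Set G),
      x⁻¹ * g ∈ centralizer (Q : Set G) := by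
  set z := a ^ p ^ m with hz
  obtain ⟨V, hV⟩ : ∃ V : Subgroup G, ∀ x, x ∈ V ↔ x ∈ Q ∧ x ^ p = 1 := by
    refine ⟨Q ⊓ h.Om hp.out hodd 1, fun x => ?_⟩
    rw [Subgroup.mem_inf, h.mem_Om, pow_one]
    exact ⟨fun e => ⟨e.1, e.2.2⟩, fun e => ⟨e.1, hQ e.1, e.2⟩⟩
  have hVS : ∀ x ∈ V, x ∈ (S : Subgroup G) := fun x hx => hQ ((hV x).mp hx).1
  have hNV : ∀ g ∈ normalizer (Q : Set G), ∀ x ∈ V, g * x * g⁻¹ ∈ V := by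
    intro g hg x hx
    rw [hV] at hx ⊢
    exact ⟨(Subgroup.mem_normalizer_iff.mp hg x).mp hx.1, by rw [conj_pow, hx.2]; group⟩
  have hNV' : ∀ g ∈ normalizer (Q : Set G), ∀ x ∈ V, g⁻¹ * x * g ∈ V := by
    intro g hg x hx
    have := hNV g⁻¹ (Subgroup.inv_mem _ hg) x hx
    rwa [inv_inv] at this
  have hNN : normalizer (Q : Set G) ≤ normalizer (V : Set G) := by
    intro g hg
    rw [Subgroup.mem_normalizer_iff]
    intro x
    refine ⟨hNV g hg x, fun hx => ?_⟩
    have := hNV' g hg _ hx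
    simpa [mul_assoc] using this
  by_cases hA : ∀ s ∈ (S : Subgroup G), ∀ v ∈ V, s * v * s⁻¹ = v
  · refine mc_finish hodd S h Q hQ (normalizer (Q : Set G) ⊓ centralizer (V : Set G)) inf_le_left
      ?_ ?_ ?_
    · intro x hx u hu
      exact ⟨Subgroup.mul_mem _ (Subgroup.mul_mem _ hx hu.1) (Subgroup.inv_mem _ hx),
        mc_conj_cent (hNN hx) hu.2⟩
    · intro s hs
      exact ⟨hSN hs, mc_mem_cent (hA s hs)⟩
    · intro q e _ _ g hg _ x hx hx1
      have := Subgroup.mem_centralizer_iff.mp hg.2 x ((hV x).mpr ⟨hx, hx1⟩)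
      rw [← this]; group
  push Not at hA
  obtain ⟨s0, hs0, v0, hv0, hne⟩ := hA
  have hcomL : ∀ s ∈ (S : Subgroup G), ∀ v ∈ V, v⁻¹ * (s * v * s⁻¹) ∈ zpowers z := by
    intro s hs v hv
    apply h.memL hp.out
    · have := h.comm_mem (Subgroup.inv_mem _ (hVS v hv)) hs
      convert this using 1
      group
    · exact ((hV _).mp (V.mul_mem (V.inv_mem hv) (hNV s (hSN hs) v hv))).2
  have hz1 : z ≠ 1 := by
    intro e
    have := h.zord hp.out
    rw [← hz, e, orderOf_one] at this
    exact hp.out.one_lt.ne this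
  have hgen : ∀ l : ℤ, z ^ l ≠ 1 → z ∈ zpowers (z ^ l) := by
    intro l hl
    apply mc_unitgen (p := p) (M := 1) (by rw [pow_one]; exact h.zp)
    refine ((Nat.prime_iff_prime_int.mp hp.out).coprime_iff_not_dvd.mpr ?_).symm
    rintro ⟨c, rfl⟩
    apply hl
    rw [zpow_mul, zpow_natCast, h.zp, one_zpow]
  have hzV : z ∈ V := by
    have h1 := hcomL s0 hs0 v0 hv0
    have h2 : v0⁻¹ * (s0 * v0 * s0⁻¹) ∈ V := V.mul_mem (V.inv_mem hv0) (hNV s0 (hSN hs0) v0 hv0)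
    obtain ⟨l, hl⟩ := h1
    change z ^ l = _ at hl
    have h3 : z ^ l ≠ 1 := by
      intro e
      rw [e] at hl
      exact hne (inv_mul_eq_one.mp hl.symm).symm
    rw [← hl] at h2
    exact (zpowers_le.mpr h2) (hgen l h3)
  have hLV : zpowers z ≤ V := zpowers_le.mpr hzV
  have hfixL : ∀ u : G, u * z * u⁻¹ = z → ∀ l ∈ zpowers z, u * l * u⁻¹ = l := by
    rintro u hu _ ⟨l, rfl⟩
    change u * z ^ l * u⁻¹ = z ^ l
    rw [← conj_zpow, hu]
  by_cases hB : ∀ g ∈ normalizer (Q : Set G), g * z * g⁻¹ ∈ zpowers z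
  · have hBL : ∀ g ∈ normalizer (Q : Set G), ∀ l ∈ zpowers z, g * l * g⁻¹ ∈ zpowers z := by
      rintro g hg _ ⟨l, rfl⟩
      change g * z ^ l * g⁻¹ ∈ zpowers z
      rw [← conj_zpow]
      exact Subgroup.zpow_mem _ (hB g hg) l
    let U : Subgroup G :=
      { carrier := {x | x ∈ normalizer (Q : Set G) ∧ x * z * x⁻¹ = z ∧
          ∀ v ∈ V, v⁻¹ * (x * v * x⁻¹) ∈ zpowers z}
        one_mem' := ⟨Subgroup.one_mem _, by group, fun v _ => by
          have : v⁻¹ * (1 * v * 1⁻¹) = 1 := by group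
          rw [this]; exact Subgroup.one_mem _⟩
        mul_mem' := by
          rintro x y ⟨hx, hxz, hxv⟩ ⟨hy, hyz, hyv⟩
          refine ⟨Subgroup.mul_mem _ hx hy, ?_, fun v hv => ?_⟩
          · calc x * y * z * (x * y)⁻¹ = x * (y * z * y⁻¹) * x⁻¹ := by group
              _ = z := by rw [hyz, hxz]
          · have e : v⁻¹ * (x * y * v * (x * y)⁻¹)
                = (v⁻¹ * (x * v * x⁻¹)) * (x * (v⁻¹ * (y * v * y⁻¹)) * x⁻¹) := by group
            rw [e, hfixL x hxz _ (hyv v hv)]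
            exact Subgroup.mul_mem _ (hxv v hv) (hyv v hv)
        inv_mem' := by
          rintro x ⟨hx, hxz, hxv⟩
          refine ⟨Subgroup.inv_mem _ hx, ?_, fun v hv => ?_⟩
          · nth_rw 1 [← hxz]; group
          · have := Subgroup.inv_mem _ (hxv _ (hNV' x hx v hv))
            convert this using 1
            group }
    have hUdef : ∀ x, x ∈ U ↔ x ∈ normalizer (Q : Set G) ∧ x * z * x⁻¹ = z ∧
          ∀ v ∈ V, v⁻¹ * (x * v * x⁻¹) ∈ zpowers z := fun x => Iff.rfl
    refine mc_finish hodd S h Q hQ U (fun x hx => hx.1) ?_ ?_ ?_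
    · rintro x hx u ⟨hu, huz, huv⟩
      refine ⟨Subgroup.mul_mem _ (Subgroup.mul_mem _ hx hu) (Subgroup.inv_mem _ hx), ?_, ?_⟩
      · have h1 := hfixL u huz _ (hB x⁻¹ (Subgroup.inv_mem _ hx))
        calc x * u * x⁻¹ * z * (x * u * x⁻¹)⁻¹ = x * (u * (x⁻¹ * z * x⁻¹⁻¹) * u⁻¹) * x⁻¹ := by group
          _ = z := by rw [h1]; group
      · intro v hv
        have := hBL x hx _ (huv _ (hNV' x hx v hv))
        convert this using 1
        group
    · intro s hs
      exact ⟨hSN hs, h.zcent hs, hcomL s hs⟩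
    · rintro q e hq hqp g ⟨hg, hgz, hgv⟩ ho x hx hx1
      have hPL : IsPGroup p (zpowers z) := by
        refine (h.isP hp.out hodd 1).to_le (zpowers_le.mpr ?_)
        exact h.mem_Om.mpr ⟨h.zS, by rw [pow_one]; exact h.zp⟩
      obtain ⟨w, hw, hw2⟩ := mc_fix hp.out hq hqp g ho (zpowers z) hPL
        (fun w hw => by rw [hfixL g hgz w hw]; exact hw) x (hgv x ((hV x).mpr ⟨hx, hx1⟩))
      have : g * (x * w) * g⁻¹ = (g * x * g⁻¹) * (g * w * g⁻¹) := by group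
      rw [this, hfixL g hgz w hw] at hw2
      exact mul_right_cancel hw2
  exfalso
  push Not at hB
  obtain ⟨k0, hk0, hf⟩ := hB
  have hmove : ∀ f ∈ V, f ∉ zpowers z → f⁻¹ * (s0 * f * s0⁻¹) ≠ 1 := by
    intro f hfV hfL e
    rw [inv_mul_eq_one] at e
    obtain ⟨k, l, hkl⟩ := h.omgen hp.out hodd (hVS f hfV) ((hV f).mp hfV).2 hfL (hVS v0 hv0)
      ((hV v0).mp hv0).2
    apply hne
    have c1 : Commute s0 f := by
      have := e.symm
      rwa [mul_inv_eq_iff_eq_mul] at this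
    have c2 : Commute s0 z := by
      have := h.zcent hs0
      rwa [mul_inv_eq_iff_eq_mul] at this
    have c3 : Commute s0 v0 := by
      rw [hkl]
      exact (c1.pow_right k).mul_right (c2.zpow_right l)
    rw [c3.eq]; group
  set f := k0 * z * k0⁻¹ with hfdef
  have hfV : f ∈ V := hNV k0 hk0 z hzV
  have hfp : f ^ p = 1 := ((hV f).mp hfV).2
  have hef : z * f = f * z := by
    have := h.zcent (hVS f hfV)
    rw [mul_inv_eq_iff_eq_mul] at this
    exact this.symm
  obtain ⟨κ, hu1, hu2⟩ := mc_zpow_adj hp.out h.zp hef (h.zcent hs0) (hcomL s0 hs0 f hfV)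
    (by group) (hmove f hfV hf) 1
  -- the other one
  set f' := k0⁻¹ * z * k0 with hf'def
  have hf'V : f' ∈ V := hNV' k0 hk0 z hzV
  have hf'L : f' ∉ zpowers z := by
    rintro ⟨l, hl⟩
    change z ^ l = f' at hl
    have h1 : z ^ l ≠ 1 := by
      intro e
      rw [e] at hl
      apply hz1
      have : z = k0 * f' * k0⁻¹ := by rw [hf'def]; group
      rw [this, ← hl]; group
    obtain ⟨r, hr⟩ := hgen l h1
    change (z ^ l) ^ r = z at hr
    apply hf
    refine ⟨r, ?_⟩
    change z ^ r = f
    rw [hfdef]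
    nth_rw 2 [← hr]
    rw [hl, ← conj_zpow]
    congr 1
    rw [hf'def]; group
  have hw1 := hcomL s0 hs0 f' hf'V
  have hw2 := hmove f' hf'V hf'L
  obtain ⟨r, hr⟩ := hw1
  change z ^ r = _ at hr
  have hwf : f ^ r = k0 * (f'⁻¹ * (s0 * f' * s0⁻¹)) * k0⁻¹ := by
    rw [hfdef, conj_zpow, hr]
  obtain ⟨κ', hv1, hv2⟩ := mc_zpow_adj (s := k0 * s0 * k0⁻¹) (e := f) (f := z) (w := f ^ r)
    hp.out hfp hef.symm
    (by
      have := h.zcent hs0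
      calc k0 * s0 * k0⁻¹ * f * (k0 * s0 * k0⁻¹)⁻¹ = k0 * (s0 * z * s0⁻¹) * k0⁻¹ := by
            rw [hfdef]; group
        _ = _ := by rw [this])
    ⟨r, rfl⟩
    (by rw [hwf, hf'def]; group)
    (by
      intro e
      rw [e] at hwf
      apply hw2
      exact conj_eq_one_iff.mp hwf.symm)
    (-1)
  rw [zpow_neg_one] at hv1
  rw [zpow_one] at hu1
  obtain ⟨i1, i2⟩ := mc_inverter hef hu2 hu1 hv2 hv1
  refine mc_no_inverter hodd S h hnab ((s0 ^ κ * (k0 * s0 * k0⁻¹) ^ κ' * s0 ^ κ) * (s0 ^ κ * (k0 * s0 * k0⁻¹) ^ κ' * s0 ^ κ))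
    (fun x hx hx1 => ?_)
  · obtain ⟨k, l, hkl⟩ := h.omgen hp.out hodd (hVS f hfV) hfp hf hx hx1
    exact mc_invmul hef i1 i2 hkl

theorem mc_quot {G : Type*} [Group G] [Finite G] {p : ℕ} [hp : Fact p.Prime] (hodd : Odd p)
    (S : Sylow p G) {a b : G} {ρ m n : ℕ} (h : MC p (S : Subgroup G) a b ρ (m + 1) n)
    (hnab : a * b ≠ b * a) :
    IsCyclic (Subgroup.normalizer ((S : Subgroup G) : Set G) ⧸
        (((S : Subgroup G) ⊔ Subgroup.centralizer ((S : Subgroup G) : Set G)).subgroupOf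
          (Subgroup.normalizer ((S : Subgroup G) : Set G)))) ∧
      Nat.card (Subgroup.normalizer ((S : Subgroup G) : Set G) ⧸
        (((S : Subgroup G) ⊔ Subgroup.centralizer ((S : Subgroup G) : Set G)).subgroupOf
          (Subgroup.normalizer ((S : Subgroup G) : Set G)))) ∣ (p - 1) := by
  set z := a ^ p ^ m with hz
  have hSn : ∀ g ∈ normalizer ((S : Subgroup G) : Set G), ∀ x ∈ (S : Subgroup G), g * x * g⁻¹ ∈ (S : Subgroup G) :=
    fun g hg x hx => (Subgroup.mem_normalizer_iff.mp hg x).mp hx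
  have hL0 : ∀ g ∈ normalizer ((S : Subgroup G) : Set G), ∀ x ∈ zpowers z, g * x * g⁻¹ ∈ zpowers z := by
    rintro g hg _ ⟨l, rfl⟩
    change g * z ^ l * g⁻¹ ∈ zpowers z
    rw [← conj_zpow]
    refine Subgroup.zpow_mem _ ?_ l
    apply h.commL hp.out hnab
    · exact mc_norm_comm (hSn g hg) _ (h.zcomm hp.out hnab)
    · rw [conj_pow, h.zp]; group
  have hNL : normalizer ((S : Subgroup G) : Set G) ≤ normalizer ((zpowers z : Subgroup G) : Set G) := by
    intro g hg
    rw [Subgroup.mem_normalizer_iff]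
    intro x
    refine ⟨hL0 g hg x, fun hx => ?_⟩
    have := hL0 g⁻¹ (Subgroup.inv_mem _ hg) _ hx
    simpa [mul_assoc] using this
  let χ : normalizer ((S : Subgroup G) : Set G) →* MulAut (zpowers z) :=
    (zpowers z).normalizerMonoidHom.comp (Subgroup.inclusion hNL)
  have hχ : ∀ g x, ((χ g x : zpowers z) : G) = g * x * (g : G)⁻¹ := fun g x => rfl
  have hmemker : ∀ g, g ∈ χ.ker ↔ (g : G) * z * (g : G)⁻¹ = z := by
    intro g
    rw [MonoidHom.mem_ker]
    constructor
    · intro e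
      have := hχ g ⟨z, mem_zpowers z⟩
      rw [e] at this
      exact this.symm
    · intro e
      ext ⟨_, l, rfl⟩
      rw [hχ]
      change (g : G) * z ^ l * (g : G)⁻¹ = z ^ l
      rw [← conj_zpow, e]
  have hker : ((S : Subgroup G) ⊔ Subgroup.centralizer ((S : Subgroup G) : Set G)).subgroupOf
          (Subgroup.normalizer ((S : Subgroup G) : Set G)) = χ.ker := by
    have hC : ∀ g, g ∈ centralizer ({z} : Set G) ↔ g * z * g⁻¹ = z := by
      intro g
      rw [mem_centralizer_singleton_iff, mul_inv_eq_iff_eq_mul]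
    ext g
    rw [hmemker, Subgroup.mem_subgroupOf]
    constructor
    · intro hg
      rw [← hC]
      have : (S : Subgroup G) ⊔ centralizer ((S : Subgroup G) : Set G) ≤ centralizer ({z} : Set G) := by
        refine sup_le (fun s hs => (hC s).mpr (h.zcent hs)) (Subgroup.centralizer_le ?_)
        rintro _ rfl
        exact h.zS
      exact this hg
    · intro hg
      refine mc_pgrp S (normalizer ((S : Subgroup G) : Set G) ⊓ centralizer ({z} : Set G)) _ ?_ ?_
        ⟨g.2, (hC _).mpr hg⟩
      · exact fun s hs => ⟨le_normalizer hs, (hC s).mpr (h.zcent hs)⟩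
      · intro q e hq hqp x hx ho
        exact mc_mem_cent (h.partA hp.out hodd S.isPGroup' hnab hq hqp x ho (hSn x hx.1)
          ((hC x).mp hx.2))
  have hcard : Nat.card (zpowers z) = p := by rw [Nat.card_zpowers]; exact h.zord hp.out
  let E := (QuotientGroup.quotientMulEquivOfEq hker)
  let A : MulAut (zpowers z) ≃* (ZMod (Nat.card (zpowers z)))ˣ := IsCyclic.mulAutMulEquiv _
  have hex : ∃ Φ : (Subgroup.normalizer ((S : Subgroup G) : Set G) ⧸
        (((S : Subgroup G) ⊔ Subgroup.centralizer ((S : Subgroup G) : Set G)).subgroupOf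
          (Subgroup.normalizer ((S : Subgroup G) : Set G)))) →* (ZMod (Nat.card (zpowers z)))ˣ,
      Function.Injective Φ :=
    ⟨(A.toMonoidHom.comp (QuotientGroup.kerLift χ)).comp E.toMonoidHom,
      (A.injective.comp (QuotientGroup.kerLift_injective χ)).comp E.injective⟩
  rw [hcard] at hex
  obtain ⟨Φ, hΦ⟩ := hex
  have hcyc : IsCyclic (ZMod p)ˣ := inferInstance
  refine ⟨isCyclic_of_injective Φ hΦ, ?_⟩
  have := Subgroup.card_dvd_of_injective Φ hΦ
  rwa [Nat.card_eq_fintype_card (α := (ZMod p)ˣ), ZMod.card_units] at this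

theorem stmt15 (p : ℕ) [Fact p.Prime] (hodd : Odd p) {G : Type*} [Group G] [Fintype G]
    (S : Sylow p G) (hsplit : IsSplitMetacyclic (S : Subgroup G))
    (hnab : ∃ a b : (S : Subgroup G), a * b ≠ b * a) :
    (IsCyclic (Subgroup.normalizer ((S : Subgroup G) : Set G) ⧸
        (((S : Subgroup G) ⊔ Subgroup.centralizer ((S : Subgroup G) : Set G)).subgroupOf
          (Subgroup.normalizer ((S : Subgroup G) : Set G)))) ∧
      Nat.card (Subgroup.normalizer ((S : Subgroup G) : Set G) ⧸
        (((S : Subgroup G) ⊔ Subgroup.centralizer ((S : Subgroup G) : Set G)).subgroupOf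
          (Subgroup.normalizer ((S : Subgroup G) : Set G)))) ∣ (p - 1)) ∧
    ∀ Q : Subgroup G, Q ≠ ⊥ → Q ≤ (S : Subgroup G) →
      Subgroup.Characteristic (Q.subgroupOf (S : Subgroup G)) →
      ((Subgroup.normalizer ((S : Subgroup G) : Set G) : Set G) * (Subgroup.centralizer (Q : Set G) : Set G) =
          (Subgroup.normalizer (Q : Set G) : Set G)) ∧
      ∀ g ∈ Subgroup.normalizer (Q : Set G), ∃ n ∈ Subgroup.normalizer ((S : Subgroup G) : Set G),
        n⁻¹ * g ∈ Subgroup.centralizer (Q : Set G) := by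
  obtain ⟨a, b, ρ, m, n, h⟩ := mc_exists (S : Subgroup G) S.isPGroup' hsplit
  have hab : a * b ≠ b * a := by
    intro e
    obtain ⟨x, y, hxy⟩ := hnab
    exact hxy (Subtype.ext (h.comm_of e x.2 y.2))
  have hm : m ≠ 0 := by
    rintro rfl
    have := h.pa
    rw [pow_zero, pow_one] at this
    exact hab (by rw [this]; group)
  obtain ⟨m, rfl⟩ := Nat.exists_eq_succ_of_ne_zero hm
  refine ⟨mc_quot hodd S h hab, ?_⟩
  intro Q _ hQ hchar
  have hN := mc_char hQ hchar
  have key := mc_Q hodd S h hab Q hQ (le_normalizer.trans hN)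
  refine ⟨?_, key⟩
  ext g
  constructor
  · rintro ⟨x, hx, c, hc, rfl⟩
    exact Subgroup.mul_mem _ (hN hx) (mc_cent_le hc)
  · intro hg
    obtain ⟨x, hx, hc⟩ := key g hg
    exact ⟨x, hx, _, hc, by group⟩
end

section
/- Let p be an odd prime, let G be a finite group, and let S be a Sylow p-subgroup of G that is split metacyclic, with E = Ω1(S) not contained in Z(S). Then for every subgroup Q of E of order p with Q not contained in Z(S), one has N_G(Q) = C_G(Q). -/
open Subgroup

theorem pw_step {H : Type*} [Group H] {p : ℕ} (hodd : Odd p) (c y : H) (R : ℤ)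
    (hR : (p : ℤ) ∣ R - 1) (hy : y * c * y⁻¹ = c ^ R) (i : ℤ) :
    ∃ u : ℤ, (p : ℤ) ∣ u - 1 ∧ (c ^ i * y) ^ p = c ^ (i * p * u) * y ^ p := by
  have hyi : ∀ a : ℤ, y * c ^ a = c ^ (a * R) * y := by
    intro a
    have : y * c ^ a * y⁻¹ = c ^ (R * a) := by
      rw [zpow_mul, ← hy, conj_zpow]
    rw [mul_comm a, ← this]; group
  have key : ∀ q : ℕ, (c ^ i * y) ^ q = c ^ (i * ∑ t ∈ Finset.range q, R ^ t) * y ^ q := by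
    intro q
    induction q with
    | zero => simp
    | succ q ih =>
      rw [pow_succ', ih, geom_sum_succ, pow_succ' y q]
      calc c ^ i * y * (c ^ (i * ∑ t ∈ Finset.range q, R ^ t) * y ^ q)
          = c ^ i * (y * c ^ (i * ∑ t ∈ Finset.range q, R ^ t)) * y ^ q := by group
        _ = _ := by
          rw [hyi, ← mul_assoc, ← zpow_add, mul_assoc]
          congr 2
          ring
  obtain ⟨b, hb⟩ := hR
  have h1 := odd_sq_dvd_geom_sum₂_sub (R := ℤ) (a := 1) (b := b) hodd
  have hR' : (1 : ℤ) + p * b = R := by rw [← hb]; ring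
  simp only [one_pow, mul_one, hR'] at h1
  obtain ⟨d, hd⟩ := h1
  refine ⟨1 + p * d, ⟨d, by ring⟩, ?_⟩
  rw [key p]
  congr 2
  have : ∑ t ∈ Finset.range p, R ^ t = p + p ^ 2 * d := by linarith
  rw [this]; ring

theorem pw_iter {H : Type*} [Group H] {p : ℕ} (hodd : Odd p) (c y : H) (R : ℤ)
    (hR : (p : ℤ) ∣ R - 1) (hy : ∀ j : ℕ, y ^ j * c * (y ^ j)⁻¹ = c ^ (R ^ j)) (i : ℤ) (n : ℕ) :
    ∃ u : ℤ, (p : ℤ) ∣ u - 1 ∧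
      (c ^ i * y) ^ (p ^ n) = c ^ (i * (p : ℤ) ^ n * u) * y ^ (p ^ n) := by
  induction n with
  | zero => exact ⟨1, by simp, by simp⟩
  | succ n ih =>
    obtain ⟨u, hu, h⟩ := ih
    have hR2 : (p : ℤ) ∣ R ^ (p ^ n) - 1 := by
      have := sub_dvd_pow_sub_pow R 1 (p ^ n)
      rw [one_pow] at this
      exact hR.trans this
    obtain ⟨v, hv, h2⟩ := pw_step hodd c (y ^ (p ^ n)) _ hR2 (hy _) (i * (p : ℤ) ^ n * u)
    refine ⟨u * v, ?_, ?_⟩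
    · have : u * v - 1 = u * (v - 1) + (u - 1) := by ring
      rw [this]; exact dvd_add (hv.mul_left _) hu
    · rw [pow_succ, pow_mul, h, h2, ← pow_mul]
      congr 2
      ring

theorem cyc_mem {H : Type*} [Group H] [Finite H] [IsCyclic H] {p : ℕ} [hp : Fact p.Prime]
    (a b : H) (ha : orderOf a = p) (hb : b ^ p = 1) : b ∈ Subgroup.zpowers a := by
  classical
  have := Fintype.ofFinite H
  have h1 := IsCyclic.card_pow_eq_one_le (α := H) hp.out.pos
  have h2 : (Finset.univ.filter (· ∈ Subgroup.zpowers a)).card = p := by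
    rw [← Fintype.card_subtype]
    rw [← ha, ← Fintype.card_zpowers]
  have h3 : Finset.univ.filter (· ∈ Subgroup.zpowers a) ⊆
      Finset.univ.filter (fun x : H => x ^ p = 1) := by
    intro x hx
    simp only [Finset.mem_filter, Finset.mem_univ, true_and] at hx ⊢
    obtain ⟨k, rfl⟩ := hx
    simp only
    rw [← zpow_natCast, ← zpow_mul, mul_comm, zpow_mul, zpow_natCast, ← ha, pow_orderOf_eq_one,
      one_zpow]
  have h4 := Finset.eq_of_subset_of_card_le h3 (by rw [h2]; exact h1)
  have : b ∈ Finset.univ.filter (fun x : H => x ^ p = 1) := by simp [hb]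
  rw [← h4] at this
  simpa using this

theorem struct_lemma {H : Type*} [Group H] [Finite H] {p : ℕ} [hp : Fact p.Prime] (hodd : Odd p)
    (hpg : IsPGroup p H) (hs : IsSplitMetacyclic H)
    (e₀ x₀ : H) (he₀ : e₀ ^ p = 1) (hx₀ : ¬ Commute x₀ e₀) :
    ∃ (z : H) (N : ℕ), z ^ p = 1 ∧ (∀ x, Commute x z) ∧ (∀ x, x ^ N ∈ Subgroup.zpowers z) ∧
      (∀ e : H, e ^ p = 1 → ∃ f : ℤ, ∀ x : H, x * e * x⁻¹ * e⁻¹ = (x ^ N) ^ f) ∧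
      (∀ e : H, e ^ p = 1 → (∀ x, Commute x e) → e ∈ Subgroup.zpowers z) ∧
      (∀ a b : H, a ^ p = 1 → b ^ p = 1 → Commute a b) := by
  obtain ⟨C, K, hCn, hC, hK, hCK, hsup⟩ := hs
  have hpp : Prime (p : ℤ) := Nat.prime_iff_prime_int.mp hp.out
  obtain ⟨c, hcgen⟩ := Subgroup.isCyclic_iff_exists_zpowers_eq_top C |>.mp hC
  obtain ⟨k, hkgen⟩ := Subgroup.isCyclic_iff_exists_zpowers_eq_top K |>.mp hK
  have hcC : c ∈ C := hcgen ▸ Subgroup.mem_zpowers c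
  have hkK : k ∈ K := hkgen ▸ Subgroup.mem_zpowers k
  have hKpow : ∀ y ∈ K, ∃ j : ℕ, k ^ j = y := by
    intro y hy
    rw [← hkgen] at hy
    exact mem_powers_iff_mem_zpowers.mpr hy
  have hform0 : ∀ x : H, ∃ i : ℤ, ∃ y ∈ K, c ^ i * y = x := by
    intro x
    have : x ∈ C ⊔ K := hsup ▸ Subgroup.mem_top x
    obtain ⟨a, ha, y, hy, rfl⟩ := (Subgroup.mem_sup_of_normal_left).mp this
    rw [← hcgen] at ha
    obtain ⟨i, rfl⟩ := ha
    exact ⟨i, y, hy, rfl⟩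
  have hKcomm : ∀ y ∈ K, ∀ y' ∈ K, Commute y y' := by
    intro y hy y' hy'
    obtain ⟨a, rfl⟩ := hKpow y hy
    obtain ⟨b, rfl⟩ := hKpow y' hy'
    exact (Commute.refl k).pow_pow a b
  -- order of c
  obtain ⟨m, hm⟩ := (IsPGroup.iff_orderOf.mp hpg) c
  have hm0 : m ≠ 0 := by
    rintro rfl
    have hc1 : c = 1 := by simpa using hm
    apply hx₀
    obtain ⟨i, y, hy, rfl⟩ := hform0 x₀
    obtain ⟨i', y', hy', rfl⟩ := hform0 e₀
    simpa [hc1] using hKcomm y hy y' hy'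
  obtain ⟨n, rfl⟩ := Nat.exists_eq_succ_of_ne_zero hm0
  have hcz : ∀ a : ℤ, c ^ a = 1 ↔ (p : ℤ) ^ (n + 1) ∣ a := by
    intro a
    rw [← orderOf_dvd_iff_zpow_eq_one, hm]; push_cast; rfl
  -- r
  obtain ⟨r, hr⟩ : ∃ r : ℤ, c ^ r = k * c * k⁻¹ := by
    have := hCn.conj_mem c hcC k
    rw [← hcgen] at this
    exact this
  have hrj : ∀ j : ℕ, k ^ j * c * (k ^ j)⁻¹ = c ^ (r ^ j) := by
    intro j
    induction j with
    | zero => simp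
    | succ j ih =>
      calc k ^ (j+1) * c * (k ^ (j+1))⁻¹ = k * (k ^ j * c * (k ^ j)⁻¹) * k⁻¹ := by
            rw [pow_succ']; group
        _ = c ^ (r ^ (j+1)) := by
          rw [ih, ← conj_zpow, ← hr, ← zpow_mul, pow_succ']
  have hr1 : (p : ℤ) ∣ r - 1 := by
    obtain ⟨t, ht⟩ := hpg k
    have h1 := hrj (p ^ t)
    rw [ht] at h1
    have h2 : c ^ (r ^ (p ^ t) - 1) = 1 := by
      rw [zpow_sub, ← h1]; simp
    rw [hcz] at h2
    have h3 : (p : ℤ) ∣ r ^ (p ^ t) - 1 := (dvd_pow_self _ (by omega)).trans h2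
    rw [← ZMod.intCast_zmod_eq_zero_iff_dvd] at h3 ⊢
    push_cast at h3 ⊢
    rwa [ZMod.pow_card_pow] at h3
  have hKr : ∀ y ∈ K, ∃ R : ℤ, (p : ℤ) ∣ R - 1 ∧ ∀ j : ℕ, y ^ j * c * (y ^ j)⁻¹ = c ^ (R ^ j) := by
    intro y hy
    obtain ⟨a, rfl⟩ := hKpow y hy
    refine ⟨r ^ a, ?_, fun j => ?_⟩
    · have := sub_dvd_pow_sub_pow r 1 a
      rw [one_pow] at this
      exact hr1.trans this
    · rw [← pow_mul, hrj, pow_mul]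
  set N := p ^ n with hN
  set z := c ^ N with hz
  have hzp : z ^ p = 1 := by
    rw [hz, ← pow_mul, hN, ← pow_succ, ← hm, pow_orderOf_eq_one]
  have hcN : ∀ a : ℤ, c ^ (a * N) = z ^ a := by
    intro a
    rw [mul_comm, zpow_mul, zpow_natCast]
  have hzmod : ∀ a b : ℤ, (p : ℤ) ∣ a - b → z ^ a = z ^ b := by
    intro a b ⟨d, hd⟩
    have : a = b + p * d := by linarith
    rw [this, zpow_add, zpow_mul, zpow_natCast, hzp]; simp
  have hzK : ∀ y ∈ K, Commute y z := by
    intro y hy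
    obtain ⟨R, hR, hyR⟩ := hKr y hy
    have h1 : y * z * y⁻¹ = z := by
      have h2 := hyR 1
      simp only [pow_one] at h2
      rw [hz, ← conj_pow, h2, ← zpow_natCast, ← zpow_mul, hcN, hzmod R 1 hR, zpow_one]
    rw [Commute, SemiconjBy]
    exact mul_inv_eq_iff_eq_mul.mp h1
  have hzc : Commute c z := (Commute.refl c).pow_right N
  have hzcent : ∀ x, Commute x z := by
    intro x
    obtain ⟨i, y, hy, rfl⟩ := hform0 x
    exact (hzc.zpow_left i).mul_left (hzK y hy)
  -- order p analysis
  have hop : ∀ i : ℤ, ∀ y ∈ K, (c ^ i * y) ^ p = 1 → y ^ p = 1 ∧ (p : ℤ) ^ n ∣ i := by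
    intro i y hy h
    obtain ⟨R, hR, hyR⟩ := hKr y hy
    obtain ⟨u, hu, h2⟩ := pw_step hodd c y R hR (by simpa using hyR 1) i
    rw [h] at h2
    have h3 : c ^ (i * p * u) = (y ^ p)⁻¹ := eq_inv_of_mul_eq_one_left h2.symm
    have h4 : c ^ (i * p * u) ∈ C ⊓ K :=
      ⟨C.zpow_mem hcC _, h3 ▸ K.inv_mem (K.pow_mem hy _)⟩
    rw [hCK, Subgroup.mem_bot] at h4
    refine ⟨by rw [h4] at h3; simpa using h3.symm, ?_⟩
    rw [hcz] at h4
    have h5 : (p : ℤ) ^ n ∣ i * u := by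
      have : i * p * u = i * u * p := by ring
      rw [this, pow_succ] at h4
      exact (mul_dvd_mul_iff_right hpp.ne_zero).mp h4
    refine IsCoprime.dvd_of_dvd_mul_right ?_ h5
    apply IsCoprime.pow_left
    obtain ⟨d, hd⟩ := hu
    exact ⟨-d, 1, by linarith⟩
  have hform : ∀ e : H, e ^ p = 1 → ∃ a : ℤ, ∃ y ∈ K, y ^ p = 1 ∧ z ^ a * y = e := by
    intro e he
    obtain ⟨i, y, hy, rfl⟩ := hform0 e
    obtain ⟨h1, d, rfl⟩ := hop i y hy he
    refine ⟨d, y, hy, h1, ?_⟩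
    rw [← hcN, hN]; push_cast; rw [mul_comm d]
  have hcommE : ∀ a b : H, a ^ p = 1 → b ^ p = 1 → Commute a b := by
    intro a b ha hb
    obtain ⟨i, y, hy, -, rfl⟩ := hform a ha
    obtain ⟨j, y', hy', -, rfl⟩ := hform b hb
    exact (((hzcent _).symm.zpow_left i)).mul_left
      (((hzcent y).zpow_right j).mul_right (hKcomm y hy y' hy'))
  -- faithful
  have hfaith : ∀ y ∈ K, Commute y c → y = 1 := by
    intro y hy hyc
    by_contra hne
    obtain ⟨t, ht⟩ := (IsPGroup.iff_orderOf.mp hpg) y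
    have ht0 : t ≠ 0 := by
      rintro rfl
      exact hne (by simpa using ht)
    obtain ⟨s, rfl⟩ := Nat.exists_eq_succ_of_ne_zero ht0
    have hord : orderOf (y ^ (p ^ s)) = p := by
      rw [orderOf_pow_of_dvd (pow_ne_zero _ hp.out.ne_zero) (by rw [ht]; exact pow_dvd_pow _ (by omega)), ht,
        Nat.pow_div (by omega) hp.out.pos]
      simp
    apply hx₀
    obtain ⟨a, y', hy', hy'p, rfl⟩ := hform e₀ he₀
    have hmem := cyc_mem (H := K) (p := p) ⟨y ^ (p ^ s), K.pow_mem hy _⟩ ⟨y', hy'⟩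
      (by rw [Subgroup.orderOf_mk]; exact hord) (by ext; simpa using hy'p)
    obtain ⟨l, hl⟩ := hmem
    have hl' : (y ^ (p ^ s)) ^ l = y' := by
      have := congrArg Subtype.val hl
      simpa using this
    have hy'c : Commute c y' := by
      rw [← hl']; exact ((hyc.symm).pow_right _).zpow_right l
    obtain ⟨i, w, hw, rfl⟩ := hform0 x₀
    exact ((hzcent _).zpow_right a).mul_right ((hy'c.zpow_left i).mul_left (hKcomm _ hw _ hy'))
  have hkN : k ^ N = 1 := by
    apply hfaith _ (K.pow_mem hkK _)
    have h1 := hrj N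
    have h2 : c ^ (r ^ N - 1) = 1 := by
      rw [hcz]
      have := dvd_sub_pow_of_dvd_sub hr1 n
      rwa [one_pow] at this
    rw [zpow_sub, zpow_one, mul_inv_eq_one] at h2
    rw [h2] at h1
    exact mul_inv_eq_iff_eq_mul.mp h1
  have hxN : ∀ i : ℤ, ∀ y ∈ K, (c ^ i * y) ^ N = z ^ i := by
    intro i y hy
    obtain ⟨R, hR, hyR⟩ := hKr y hy
    obtain ⟨u, hu, h2⟩ := pw_iter hodd c y R hR hyR i n
    obtain ⟨j, rfl⟩ := hKpow y hy
    rw [← hN] at h2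
    rw [h2, ← pow_mul, mul_comm j, pow_mul, hkN, one_pow, mul_one]
    have : i * (p : ℤ) ^ n * u = (i * u) * N := by rw [hN]; push_cast; ring
    rw [this, hcN]
    apply hzmod
    have : i * u - i = i * (u - 1) := by ring
    rw [this]; exact hu.mul_left _
  refine ⟨z, N, hzp, hzcent, ?_, ?_, ?_, hcommE⟩
  · intro x
    obtain ⟨i, y, hy, rfl⟩ := hform0 x
    rw [hxN i y hy]; exact ⟨i, rfl⟩
  · intro e he
    obtain ⟨a, y, hy, hyp, rfl⟩ := hform e he
    obtain ⟨R, hR, hyR⟩ := hKr y hy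
    have hyR1 : y * c * y⁻¹ = c ^ R := by simpa using hyR 1
    have hcy : ∀ i : ℤ, c ^ i * y * (c ^ i)⁻¹ * y⁻¹ = c ^ (i * (1 - R)) := by
      intro i
      have : y * (c ^ i)⁻¹ * y⁻¹ = c ^ (R * (-i)) := by
        rw [zpow_mul, ← hyR1, conj_zpow, zpow_neg]
      calc c ^ i * y * (c ^ i)⁻¹ * y⁻¹ = c ^ i * (y * (c ^ i)⁻¹ * y⁻¹) := by group
        _ = _ := by rw [this, ← zpow_add]; congr 1; ring
    have h1 : (c ^ (1 - R) * y) ^ p = 1 := by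
      have : c ^ (1 - R) * y = c * y * c⁻¹ := by
        have := hcy 1
        rw [one_mul, zpow_one] at this
        rw [← this]; group
      rw [this, conj_pow, hyp]; simp
    obtain ⟨-, l, hl⟩ := hop _ y hy h1
    refine ⟨l, fun x => ?_⟩
    obtain ⟨i, w, hw, rfl⟩ := hform0 x
    rw [hxN i w hw, ← zpow_mul, ← hcN (i * l)]
    have h2 : i * l * N = i * (1 - R) := by rw [hl, hN]; push_cast; ring
    rw [h2, ← hcy]
    have hw1 : w * y * w⁻¹ = y := by rw [(hKcomm w hw y hy).eq]; group
    have hz1 : ∀ g : H, g * (z ^ a) = z ^ a * g := fun g => ((hzcent g).zpow_right a).eq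
    calc c ^ i * w * (z ^ a * y) * (c ^ i * w)⁻¹ * (z ^ a * y)⁻¹
        = (c ^ i * w * z ^ a) * (y * w⁻¹ * (c ^ i)⁻¹ * y⁻¹ * (z ^ a)⁻¹) := by group
      _ = z ^ a * (c ^ i * (w * y * w⁻¹) * (c ^ i)⁻¹ * y⁻¹) * (z ^ a)⁻¹ := by
        rw [hz1]; group
      _ = _ := by rw [hw1, ← hz1]; group
  · intro e he hcent
    obtain ⟨a, y, hy, hyp, rfl⟩ := hform e he
    have : Commute y c := by
      have h1 := (hcent c)
      have h2 : Commute c ((z ^ a)⁻¹ * (z ^ a * y)) :=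
        Commute.mul_right ((hzcent c).zpow_right a).inv_right h1
      rw [inv_mul_cancel_left] at h2
      exact h2.symm
    rw [hfaith y hy this, mul_one]
    exact ⟨a, rfl⟩

theorem conj_into {G : Type*} [Group G] [Finite G] {p : ℕ} [hp : Fact p.Prime]
    (L P R : Subgroup G) (hPL : P ≤ L) (hP : IsPGroup p P)
    (hmax : ∀ T : Subgroup G, IsPGroup p T → P ≤ T → T ≤ L → T ≤ P)
    (hRL : R ≤ L) (hR : IsPGroup p R) : ∃ m ∈ L, ∀ x ∈ R, m * x * m⁻¹ ∈ P := by
  let P' : Sylow p L :=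
    { toSubgroup := P.subgroupOf L
      isPGroup' := hP.comap_subtype
      is_maximal' := by
        intro Q hQ hle
        refine le_antisymm ?_ hle
        intro x hx
        have := hmax (Q.map L.subtype) (hQ.map _) (by
          intro y hy
          exact ⟨⟨y, hPL hy⟩, hle (by simpa [Subgroup.mem_subgroupOf] using hy), rfl⟩)
          (by rintro _ ⟨y, -, rfl⟩; exact y.2)
        exact this ⟨x, hx, rfl⟩ }
  obtain ⟨R', hR'⟩ := (hR.comap_subtype (K := L)).exists_le_sylow
  obtain ⟨m, hm⟩ := MulAction.exists_smul_eq L R' P'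
  refine ⟨m, m.2, fun x hx => ?_⟩
  have h1 : (⟨x, hRL hx⟩ : L) ∈ R' := hR' (show x ∈ R from hx)
  have h2 : m * ⟨x, hRL hx⟩ * m⁻¹ ∈ m • R' :=
    Subgroup.smul_mem_pointwise_smul _ (MulAut.conj m) R'.toSubgroup h1
  rw [hm] at h2
  exact h2

theorem zpow_prime_mem {G : Type*} [Group G] {p : ℕ} [hp : Fact p.Prime] (z : G) (hz : z ^ p = 1)
    (l : ℤ) (hl : z ^ l ≠ 1) : ∃ d : ℤ, z ^ (l * d) = z := by
  have hnd : ¬ (p : ℤ) ∣ l := by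
    rintro ⟨d, rfl⟩
    apply hl; rw [zpow_mul, zpow_natCast, hz, one_zpow]
  have hcop : IsCoprime (p : ℤ) l :=
    (Nat.prime_iff_prime_int.mp hp.out).coprime_iff_not_dvd.mpr hnd
  obtain ⟨a, b, hab⟩ := hcop
  refine ⟨b, ?_⟩
  have : l * b = 1 - p * a := by linarith
  rw [this, zpow_sub, zpow_mul, zpow_natCast, hz]; simp

/-- The stabiliser of the chain `1 ≤ ⟨z⟩ ≤ E`. -/
def chainStab {G : Type*} [Group G] (E : Subgroup G) (z : G) : Subgroup G where
  carrier := {x | x * z * x⁻¹ = z ∧ ∀ e ∈ E, x * e * x⁻¹ * e⁻¹ ∈ Subgroup.zpowers z}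
  one_mem' := by
    refine ⟨by simp, fun e _ => ?_⟩
    simp
  mul_mem' := by
    rintro a b ⟨ha, ha'⟩ ⟨hb, hb'⟩
    refine ⟨?_, fun e he => ?_⟩
    · calc a * b * z * (a * b)⁻¹ = a * (b * z * b⁻¹) * a⁻¹ := by group
        _ = z := by rw [hb, ha]
    · obtain ⟨l, hl⟩ := hb' e he
      simp only at hl
      have h1 : a * z ^ l * a⁻¹ = z ^ l := by rw [← conj_zpow, ha]
      have : a * b * e * (a * b)⁻¹ * e⁻¹ = (a * z ^ l * a⁻¹) * (a * e * a⁻¹ * e⁻¹) := by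
        rw [hl]; group
      rw [this, h1]
      exact mul_mem ⟨l, rfl⟩ (ha' e he)
  inv_mem' := by
    rintro a ⟨ha, ha'⟩
    have hz : a⁻¹ * z * a = z := by
      nth_rewrite 1 [← ha]; group
    refine ⟨by simpa using hz, fun e he => ?_⟩
    obtain ⟨l, hl⟩ := ha' e he
    simp only at hl
    have h1 : a⁻¹ * z ^ (-l) * a = z ^ (-l) := by
      have := conj_zpow (a := a⁻¹) (b := z) (i := -l)
      rw [inv_inv] at this
      rw [← this, hz]
    have : a⁻¹ * e * a⁻¹⁻¹ * e⁻¹ = a⁻¹ * z ^ (-l) * a := by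
      rw [zpow_neg, hl]; group
    rw [this, h1]
    exact ⟨_, rfl⟩

theorem core {G : Type*} [Group G] [Finite G] {p : ℕ} [hp : Fact p.Prime] (hodd : Odd p)
    (S : Sylow p G) (E : Subgroup G) (hE : ∀ e, e ∈ E ↔ e ∈ S ∧ e ^ p = 1)
    (z : G) (N : ℕ) (hzS : z ∈ S) (hzp : z ^ p = 1) (hzc : ∀ x ∈ S, Commute x z)
    (hN : ∀ x ∈ S, x ^ N ∈ Subgroup.zpowers z)
    (hf : ∀ e ∈ E, ∃ f : ℤ, ∀ x ∈ S, x * e * x⁻¹ * e⁻¹ = (x ^ N) ^ f)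
    (hcent : ∀ e ∈ E, (∀ x ∈ S, Commute x e) → e ∈ Subgroup.zpowers z)
    (hab : ∀ a ∈ E, ∀ b ∈ E, Commute a b)
    (Q : Subgroup G) (hQE : Q ≤ E) (hQcard : Nat.card Q = p)
    (hQZ : ¬ Q ≤ Subgroup.zpowers z) :
    Subgroup.normalizer (Q : Set G) ≤ Subgroup.centralizer (Q : Set G) := by
  have hzE : z ∈ E := (hE z).mpr ⟨hzS, hzp⟩
  have hSmax : ∀ T : Subgroup G, IsPGroup p T → (S : Subgroup G) ≤ T → T ≤ (S : Subgroup G) :=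
    fun T hT hle => (S.is_maximal' hT hle).le
  have hSE : ∀ x ∈ S, ∀ e ∈ E, x * e * x⁻¹ ∈ E := by
    intro x hx e he
    rw [hE] at he ⊢
    refine ⟨S.mul_mem (S.mul_mem hx he.1) (S.inv_mem hx), ?_⟩
    rw [conj_pow, he.2]; simp
  have hSnE : ∀ x ∈ S, x ∈ Subgroup.normalizer (E : Set G) := fun x hx =>
    Subgroup.mem_normalizer_fintype (hSE x hx)
  have hcommz : ∀ x ∈ S, ∀ e ∈ E, x * e * x⁻¹ * e⁻¹ ∈ Subgroup.zpowers z := by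
    intro x hx e he
    obtain ⟨f, hf⟩ := hf e he
    rw [hf x hx]
    exact Subgroup.zpow_mem _ (hN x hx) f
  set M := chainStab E z with hM
  have hSM : (S : Subgroup G) ≤ M := by
    intro x hx
    exact ⟨by rw [(hzc x hx).eq]; group, hcommz x hx⟩
  -- (A)
  have hA : ∀ h : G, (∀ x ∈ S, h * x * h⁻¹ ∈ S) → ∀ e ∈ E,
      h * e * h⁻¹ * e⁻¹ ∈ Subgroup.zpowers z := by
    intro h hh e he
    have hn : h ∈ Subgroup.normalizer ((S : Subgroup G) : Set G) :=
      Subgroup.mem_normalizer_fintype hh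
    have hh' : ∀ x ∈ S, h⁻¹ * x * h ∈ S := fun x hx =>
      (Subgroup.mem_normalizer_iff''.mp hn x).mp hx
    have heE : h * e * h⁻¹ ∈ E := by
      rw [hE] at he ⊢
      refine ⟨hh e he.1, ?_⟩
      rw [conj_pow, he.2]; simp
    apply hcent _ (E.mul_mem heE (E.inv_mem he))
    intro x hx
    obtain ⟨f, hf⟩ := hf e he
    have h1 : x * (h * e * h⁻¹) * x⁻¹ * (h * e * h⁻¹)⁻¹ = (x ^ N) ^ f := by
      have h2 := hf _ (hh' x hx)
      have h3 : (h⁻¹ * x * h) ^ N = h⁻¹ * x ^ N * h := by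
        have := conj_pow (a := h⁻¹) (b := x) (i := N)
        rwa [inv_inv] at this
      have h4 : (h⁻¹ * x ^ N * h) ^ f = h⁻¹ * (x ^ N) ^ f * h := by
        have := conj_zpow (a := h⁻¹) (b := x ^ N) (i := f)
        rwa [inv_inv] at this
      rw [h3, h4] at h2
      calc _ = h * (h⁻¹ * x * h * e * (h⁻¹ * x * h)⁻¹ * e⁻¹) * h⁻¹ := by group
        _ = _ := by rw [h2]; group
    have h5 := hf x hx
    set e' := h * e * h⁻¹ with he'
    have h6 : x * e' * x⁻¹ * e'⁻¹ = x * e * x⁻¹ * e⁻¹ := by rw [h1, h5]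
    -- x e' x⁻¹ = d e', x e x⁻¹ = d e
    set d := x * e * x⁻¹ * e⁻¹ with hd
    have h7 : x * e' * x⁻¹ = d * e' := by rw [← h6]; group
    have h8 : x * e * x⁻¹ = d * e := by rw [hd]; group
    have hdE : d ∈ E := by
      exact E.mul_mem (hSE x hx e he) (E.inv_mem he)
    have h9 : x * (e' * e⁻¹) * x⁻¹ = e' * e⁻¹ := by
      calc x * (e' * e⁻¹) * x⁻¹ = (x * e' * x⁻¹) * (x * e * x⁻¹)⁻¹ := by group
        _ = d * (e' * e⁻¹) * d⁻¹ := by rw [h7, h8]; group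
        _ = e' * e⁻¹ := by
          rw [(hab d hdE _ (E.mul_mem heE (E.inv_mem he))).eq]; group
    exact mul_inv_eq_iff_eq_mul.mp h9
  -- (B)
  have hB : ∀ h ∈ Subgroup.normalizer (E : Set G),
      h ∈ Subgroup.normalizer ((Subgroup.zpowers z : Subgroup G) : Set G) →
      ∀ e ∈ E, h * e * h⁻¹ * e⁻¹ ∈ Subgroup.zpowers z := by
    intro h hhE hhz e he
    let R : Subgroup G := (S : Subgroup G).map (MulAut.conj h).toMonoidHom
    have hRM : R ≤ M := by
      rintro _ ⟨x, hx, rfl⟩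
      have hx' : x ∈ S := hx
      refine ⟨?_, fun a ha => ?_⟩
      · obtain ⟨l, hl⟩ := (Subgroup.mem_normalizer_iff''.mp hhz z).mp (Subgroup.mem_zpowers z)
        simp only at hl
        have h1 : x * z ^ l * x⁻¹ = z ^ l := by
          rw [((hzc x hx').zpow_right l).eq]; group
        simp only [MulEquiv.toMonoidHom_eq_coe, MonoidHom.coe_coe, MulAut.conj_apply]
        calc h * x * h⁻¹ * z * (h * x * h⁻¹)⁻¹ = h * (x * (h⁻¹ * z * h) * x⁻¹) * h⁻¹ := by group
          _ = z := by rw [← hl, h1, hl]; group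
      · have ha' : h⁻¹ * a * h ∈ E := (Subgroup.mem_normalizer_iff''.mp hhE a).mp ha
        have h1 := hcommz x hx' _ ha'
        have h2 := (Subgroup.mem_normalizer_iff.mp hhz _).mp h1
        simp only [MulEquiv.toMonoidHom_eq_coe, MonoidHom.coe_coe, MulAut.conj_apply]
        convert h2 using 1
        group
    obtain ⟨m, hm, hmR⟩ := conj_into M (S : Subgroup G) R hSM S.isPGroup'
      (fun T hT hle _ => hSmax T hT hle) hRM (S.isPGroup'.map _)
    have h1 := hA (m * h) (fun x hx => by
      have := hmR _ ⟨x, hx, rfl⟩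
      simp only [MulEquiv.toMonoidHom_eq_coe, MonoidHom.coe_coe, MulAut.conj_apply] at this
      have h0 : m * h * x * (m * h)⁻¹ = m * (h * x * h⁻¹) * m⁻¹ := by group
      rw [h0]; exact this) e he
    have h2 := hm.2 _ ((Subgroup.mem_normalizer_iff.mp hhE e).mp he)
    have h3 := Subgroup.mul_mem _ (Subgroup.inv_mem _ h2) h1
    convert h3 using 1
    group
  -- realisation of transvections
  have hT : ∀ e ∈ E, e ∉ Subgroup.zpowers z → ∀ l : ℤ, ∃ s ∈ S, s * e * s⁻¹ = z ^ l * e := by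
    intro e he hne l
    have : ∃ x ∈ S, ¬ Commute x e := by
      by_contra hcon
      push Not at hcon
      exact hne (hcent e he hcon)
    obtain ⟨x, hx, hxe⟩ := this
    obtain ⟨a, ha⟩ := hcommz x hx e he
    simp only at ha
    have hane : z ^ a ≠ 1 := by
      intro h0
      rw [h0] at ha
      exact hxe (by
        have : x * e * x⁻¹ = e := (mul_inv_eq_one.mp ha.symm)
        exact mul_inv_eq_iff_eq_mul.mp this)
    obtain ⟨d, hd⟩ := zpow_prime_mem z hzp a hane
    have hxc : ∀ t : ℕ, x ^ t * e * (x ^ t)⁻¹ = z ^ (a * t) * e := by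
      intro t
      induction t with
      | zero => simp
      | succ t ih =>
        have hc : x * z ^ (a * t) = z ^ (a * t) * x := ((hzc x hx).zpow_right _).eq
        calc x ^ (t + 1) * e * (x ^ (t + 1))⁻¹ = x * (x ^ t * e * (x ^ t)⁻¹) * x⁻¹ := by
              rw [pow_succ']; group
          _ = (x * z ^ (a * t)) * e * x⁻¹ := by rw [ih]; group
          _ = z ^ (a * t) * (x * e * x⁻¹ * e⁻¹) * e := by rw [hc]; group
          _ = _ := by
            rw [← ha, ← zpow_add]; congr 2; push_cast; ring
    -- a natural exponent
    obtain ⟨t, ht⟩ : ∃ t : ℕ, z ^ (a * t) = z ^ l := by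
      have h1 : z ^ l ∈ Subgroup.zpowers (z ^ a) := ⟨d * l, by
        simp only
        rw [← zpow_mul, ← mul_assoc, zpow_mul, hd]⟩
      rw [← mem_powers_iff_mem_zpowers] at h1
      obtain ⟨t, ht⟩ := h1
      exact ⟨t, by rw [zpow_mul, zpow_natCast]; exact ht⟩
    exact ⟨x ^ t, S.pow_mem hx t, by rw [hxc, ht]⟩
  -- (Case II is impossible)
  have hI : ∀ g ∈ Subgroup.normalizer (E : Set G),
      g ∈ Subgroup.normalizer ((Subgroup.zpowers z : Subgroup G) : Set G) := by
    intro g hg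
    by_contra hcon
    have hz' : g * z * g⁻¹ ∉ Subgroup.zpowers z := by
      intro h0
      apply hcon
      apply Subgroup.mem_normalizer_fintype
      rintro _ ⟨l, rfl⟩
      simp only
      rw [← conj_zpow]
      exact Subgroup.zpow_mem _ h0 l
    have hz'' : g⁻¹ * z * g ∉ Subgroup.zpowers z := by
      intro h0
      apply hcon
      rw [← inv_inv g]
      apply Subgroup.inv_mem
      apply Subgroup.mem_normalizer_fintype
      rintro _ ⟨l, rfl⟩
      simp only
      rw [← conj_zpow, inv_inv]
      exact Subgroup.zpow_mem _ h0 l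
    set z' := g * z * g⁻¹ with hz'def
    have hz'E : z' ∈ E := (Subgroup.mem_normalizer_iff.mp hg z).mp hzE
    have hz''E : g⁻¹ * z * g ∈ E := (Subgroup.mem_normalizer_iff''.mp hg z).mp hzE
    obtain ⟨s, hs, hsz'⟩ := hT z' hz'E hz' 1
    obtain ⟨u, hu, huz⟩ := hT _ hz''E hz'' (-1)
    rw [zpow_one] at hsz'
    have hsz : s * z * s⁻¹ = z := by rw [(hzc s hs).eq]; group
    set v := g * u * g⁻¹ with hv
    have hvz : v * z * v⁻¹ = z'⁻¹ * z := by
      calc v * z * v⁻¹ = g * (u * (g⁻¹ * z * g) * u⁻¹) * g⁻¹ := by rw [hv]; group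
        _ = z'⁻¹ * z := by rw [huz, hz'def]; group
    have hvz' : v * z' * v⁻¹ = z' := by
      calc v * z' * v⁻¹ = g * (u * z) * u⁻¹ * g⁻¹ := by rw [hv, hz'def]; group
        _ = z' := by rw [(hzc u hu).eq, hz'def]; group
    have hzz : z * z' = z' * z := (hab z hzE z' hz'E).eq
    set w := s * v * s with hw
    have hwz : w * z * w⁻¹ = z'⁻¹ := by
      calc w * z * w⁻¹ = s * (v * (s * z * s⁻¹) * v⁻¹) * s⁻¹ := by rw [hw]; group
        _ = s * (z'⁻¹ * z) * s⁻¹ := by rw [hsz, hvz]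
        _ = (s * z' * s⁻¹)⁻¹ * (s * z * s⁻¹) := by group
        _ = z'⁻¹ := by rw [hsz', hsz]; group
    have hwz' : w * z' * w⁻¹ = z := by
      calc w * z' * w⁻¹ = s * (v * (s * z' * s⁻¹) * v⁻¹) * s⁻¹ := by rw [hw]; group
        _ = s * ((v * z * v⁻¹) * (v * z' * v⁻¹)) * s⁻¹ := by rw [hsz']; group
        _ = s * (z'⁻¹ * (z * z')) * s⁻¹ := by rw [hvz, hvz']; group
        _ = z := by rw [hzz, inv_mul_cancel_left, hsz]
    have hwE : w ∈ Subgroup.normalizer (E : Set G) := by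
      have hvE : v ∈ Subgroup.normalizer (E : Set G) :=
        Subgroup.mul_mem _ (Subgroup.mul_mem _ hg (hSnE u hu)) (Subgroup.inv_mem _ hg)
      exact Subgroup.mul_mem _ (Subgroup.mul_mem _ (hSnE s hs) hvE) (hSnE s hs)
    have hw2z : (w * w) * z * (w * w)⁻¹ = z⁻¹ := by
      calc (w * w) * z * (w * w)⁻¹ = w * (w * z * w⁻¹) * w⁻¹ := by group
        _ = (w * z' * w⁻¹)⁻¹ := by rw [hwz]; group
        _ = z⁻¹ := by rw [hwz']
    have hw2z' : (w * w) * z' * (w * w)⁻¹ = z'⁻¹ := by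
      calc (w * w) * z' * (w * w)⁻¹ = w * (w * z' * w⁻¹) * w⁻¹ := by group
        _ = z'⁻¹ := by rw [hwz', hwz]
    have hw2n : w * w ∈ Subgroup.normalizer ((Subgroup.zpowers z : Subgroup G) : Set G) := by
      apply Subgroup.mem_normalizer_fintype
      rintro _ ⟨l, rfl⟩
      simp only
      rw [← conj_zpow, hw2z]
      exact Subgroup.zpow_mem _ (Subgroup.inv_mem _ (Subgroup.mem_zpowers z)) l
    have h1 := hB (w * w) (Subgroup.mul_mem _ hwE hwE) hw2n z' hz'E
    rw [hw2z'] at h1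
    apply hz'
    obtain ⟨q, hq⟩ := hodd
    have hz'p : z' ^ p = 1 := ((hE z').mp hz'E).2
    have h2 : z' = (z'⁻¹ * z'⁻¹) ^ q * 1 * ((z'⁻¹ * z'⁻¹) ^ q)⁻¹ * (((z'⁻¹ * z'⁻¹) ^ q)) * z' ^ p := by
      rw [hq]
      have : z'⁻¹ * z'⁻¹ = (z' ^ 2)⁻¹ := by rw [pow_two]; group
      rw [this, inv_pow, ← pow_mul, pow_succ]
      group
    rw [h2, hz'p]
    simp only [mul_one, mul_inv_cancel, one_mul]
    exact Subgroup.pow_mem _ h1 q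
  -- P
  set P : Subgroup G := (S : Subgroup G) ⊓ Subgroup.centralizer (Q : Set G) with hPdef
  have hQab : ∀ e ∈ E, e ∈ P := by
    intro e he
    refine ⟨((hE e).mp he).1, ?_⟩
    refine Subgroup.mem_centralizer_iff.mpr ?_
    intro q hq
    exact (hab q (hQE hq) e he).eq
  have hPp : IsPGroup p P := S.isPGroup'.to_le inf_le_left
  have hNP : ∀ h : G, (∀ x ∈ P, h * x * h⁻¹ ∈ P) → h ∈ Subgroup.normalizer (E : Set G) := by
    intro h hh
    apply Subgroup.mem_normalizer_fintype
    intro e he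
    have h1 := hh e (hQab e he)
    rw [SetLike.mem_coe, hE]
    refine ⟨h1.1, ?_⟩
    rw [conj_pow, ((hE e).mp he).2]; simp
  -- p-elements normalising P and centralising Q lie in M
  have hPmax : ∀ T : Subgroup G, IsPGroup p T → P ≤ T →
      T ≤ Subgroup.centralizer (Q : Set G) → T ≤ P := by
    intro T hTp hPT hTQ
    by_contra hcon
    have hlt : P.subgroupOf T < ⊤ := by
      rw [lt_top_iff_ne_top, Ne, Subgroup.subgroupOf_eq_top]
      exact hcon
    have := hTp.isNilpotent
    have hlt2 := Group.normalizerCondition_of_isNilpotent (G := T) _ hlt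
    set T1 : Subgroup G := (Subgroup.normalizer ((P.subgroupOf T : Subgroup T) : Set T)).map T.subtype
      with hT1
    have hT1T : T1 ≤ T := by rintro _ ⟨y, -, rfl⟩; exact y.2
    have hT1p : IsPGroup p T1 := hTp.to_le hT1T
    have hPT1 : P ≤ T1 := fun x hx => ⟨⟨x, hPT hx⟩, hlt2.le (show x ∈ P from hx), rfl⟩
    have hT1M : T1 ≤ M := by
      rintro _ ⟨x, hx, rfl⟩
      have hxP : ∀ a ∈ P, (x : G) * a * (x : G)⁻¹ ∈ P := by
        intro a ha
        exact (Subgroup.mem_normalizer_iff.mp hx ⟨a, hPT ha⟩).mp ha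
      have hxE := hNP x hxP
      have hxz := hI x hxE
      refine ⟨?_, hB x hxE hxz⟩
      obtain ⟨l, hl⟩ := (Subgroup.mem_normalizer_iff.mp hxz z).mp (Subgroup.mem_zpowers z)
      simp only at hl
      obtain ⟨t, ht⟩ := hTp x
      have ht' : (x : G) ^ p ^ t = 1 := by
        have := congrArg Subtype.val ht
        simpa using this
      have hpow : ∀ j : ℕ, (x : G) ^ j * z * ((x : G) ^ j)⁻¹ = z ^ (l ^ j) := by
        intro j
        induction j with
        | zero => simp
        | succ j ih =>
          calc (x : G) ^ (j+1) * z * ((x : G) ^ (j+1))⁻¹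
              = x * ((x : G) ^ j * z * ((x : G) ^ j)⁻¹) * (x : G)⁻¹ := by rw [pow_succ']; group
            _ = z ^ (l ^ (j+1)) := by
              rw [ih, ← conj_zpow, ← hl, ← zpow_mul, pow_succ']
      have h1 := hpow (p ^ t)
      rw [ht'] at h1
      simp only [one_mul, inv_one, mul_one] at h1
      change (x : G) * z * (x : G)⁻¹ = z
      rw [← hl]
      have h2 : (p : ℤ) ∣ l - l ^ (p ^ t) := by
        rw [← ZMod.intCast_zmod_eq_zero_iff_dvd]
        push_cast
        rw [ZMod.pow_card_pow, sub_self]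
      obtain ⟨d, hd⟩ := h2
      have h3 : l = l ^ (p ^ t) + p * d := by linarith
      rw [h3, zpow_add, ← h1, zpow_mul, zpow_natCast, hzp]; simp
    obtain ⟨m, hm, hmT⟩ := conj_into M (S : Subgroup G) T1 hSM S.isPGroup'
      (fun T hT hle _ => hSmax T hT hle) hT1M hT1p
    -- conjugating T1 by m lands in P
    have hmP : T1.map (MulAut.conj m).toMonoidHom ≤ P := by
      rintro _ ⟨x, hx, rfl⟩
      simp only [MulEquiv.toMonoidHom_eq_coe, MonoidHom.coe_coe, MulAut.conj_apply]
      refine ⟨hmT x hx, ?_⟩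
      refine Subgroup.mem_centralizer_iff.mpr ?_
      intro q hq
      have hqE : q ∈ E := hQE hq
      obtain ⟨l, hl⟩ := (M.inv_mem hm).2 q hqE
      simp only [inv_inv] at hl
      have hxq : q * x = x * q :=
        Subgroup.mem_centralizer_iff.mp (hTQ (hT1T hx)) q hq
      have hxz : x * z = z * x := mul_inv_eq_iff_eq_mul.mp (hT1M hx).1
      have hxzl : x * z ^ l = z ^ l * x := (Commute.zpow_right (show Commute x z from hxz) l).eq
      have h1 : m⁻¹ * q * m = z ^ l * q := by rw [hl]; group
      have h2 : x * (m⁻¹ * q * m) = (m⁻¹ * q * m) * x := by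
        rw [h1, ← mul_assoc, hxzl, mul_assoc, ← hxq, mul_assoc]
      calc q * (m * x * m⁻¹) = m * ((m⁻¹ * q * m) * x) * m⁻¹ := by group
        _ = m * x * m⁻¹ * q := by rw [← h2]; group
    have hc1 : Nat.card T1 ≤ Nat.card P := by
      have h1 := Subgroup.card_le_of_le hmP
      rwa [Subgroup.card_map_of_injective (MulAut.conj m).injective] at h1
    have hPT1' : P = T1 := Subgroup.eq_of_le_of_card_ge hPT1 hc1
    apply hlt2.not_ge
    intro x hx
    have : (x : G) ∈ T1 := ⟨x, hx, rfl⟩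
    rw [← hPT1'] at this
    exact this
  -- conclusion
  intro g hg
  have hgL : ∀ x ∈ Subgroup.centralizer (Q : Set G), g * x * g⁻¹ ∈ Subgroup.centralizer (Q : Set G) := by
    intro x hx
    rw [Subgroup.mem_centralizer_iff] at hx ⊢
    intro q hq
    have h1 := hx _ ((Subgroup.mem_normalizer_iff''.mp hg q).mp hq)
    calc q * (g * x * g⁻¹) = g * ((g⁻¹ * q * g) * x) * g⁻¹ := by group
      _ = _ := by rw [h1]; group
  obtain ⟨m, hm, hmP⟩ := conj_into (Subgroup.centralizer (Q : Set G)) P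
    (P.map (MulAut.conj g).toMonoidHom) inf_le_right hPp hPmax
    (by rintro _ ⟨x, hx, rfl⟩; exact hgL x hx.2) (hPp.map _)
  have hhE := hNP (m * g) (fun x hx => by
    have := hmP _ ⟨x, hx, rfl⟩
    simp only [MulEquiv.toMonoidHom_eq_coe, MonoidHom.coe_coe, MulAut.conj_apply] at this
    convert this using 1
    group)
  have hfin := hB _ hhE (hI _ hhE)
  have hinter : ∀ q ∈ Q, q ∈ Subgroup.zpowers z → q = 1 := by
    intro q hq hqz
    by_contra hne
    apply hQZ
    have h1 : Subgroup.zpowers q = Q := by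
      apply Subgroup.eq_of_le_of_card_ge
      · rwa [Subgroup.zpowers_le]
      · rw [hQcard, Nat.card_zpowers]
        have : orderOf q = p := orderOf_eq_prime ((hE q).mp (hQE hq)).2 hne
        exact this.ge
    rw [← h1, Subgroup.zpowers_le]
    exact hqz
  rw [Subgroup.mem_centralizer_iff]
  intro q hq
  have hgq : g * q * g⁻¹ ∈ Q := (Subgroup.mem_normalizer_iff.mp hg q).mp hq
  have h1 := hfin q (hQE hq)
  have h2 : m * g * q * (m * g)⁻¹ = g * q * g⁻¹ := by
    have h3 := Subgroup.mem_centralizer_iff.mp hm _ hgq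
    calc m * g * q * (m * g)⁻¹ = (m * (g * q * g⁻¹)) * m⁻¹ := by group
      _ = _ := by rw [← h3]; group
  rw [h2] at h1
  have h4 := hinter _ (Q.mul_mem hgq (Q.inv_mem hq)) h1
  have h5 : g * q * g⁻¹ = q := mul_inv_eq_one.mp h4
  exact (mul_inv_eq_iff_eq_mul.mp h5).symm

theorem stmt16 (p : ℕ) [Fact p.Prime] (hodd : Odd p) {G : Type*} [Group G] [Fintype G]
    (S : Sylow p G) (hsplit : IsSplitMetacyclic (S : Subgroup G))
    (hE : ¬omega1 p (S : Subgroup G) ≤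
      (S : Subgroup G) ⊓ Subgroup.centralizer ((S : Subgroup G) : Set G))
    (Q : Subgroup G) (hQE : Q ≤ omega1 p (S : Subgroup G)) (hQcard : Nat.card Q = p)
    (hQZ : ¬Q ≤ (S : Subgroup G) ⊓ Subgroup.centralizer ((S : Subgroup G) : Set G)) :
    Subgroup.normalizer (Q : Set G) = Subgroup.centralizer (Q : Set G) := by
  have hES : omega1 p (S : Subgroup G) ≤ (S : Subgroup G) := by
    rw [omega1, Subgroup.closure_le]
    exact fun x hx => hx.1
  have hQp : ∀ q ∈ Q, q ^ p = 1 := by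
    intro q hq
    have : (⟨q, hq⟩ : Q) ^ Nat.card Q = 1 := pow_card_eq_one'
    rw [hQcard] at this
    simpa using congrArg Subtype.val this
  have hex : ∃ q ∈ Q, ∃ x ∈ S, ¬ Commute x q := by
    by_contra hcon
    push Not at hcon
    apply hQZ
    intro q hq
    refine ⟨hES (hQE hq), ?_⟩
    refine Subgroup.mem_centralizer_iff.mpr ?_
    intro x hx
    exact (hcon q hq x hx).eq
  obtain ⟨q, hq, x, hx, hqx⟩ := hex
  have hqS : q ∈ (S : Subgroup G) := hES (hQE hq)
  obtain ⟨z, N, hzp, hzc, hN, hf, hcent, hab⟩ :=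
    struct_lemma (H := (S : Subgroup G)) hodd S.isPGroup' hsplit ⟨q, hqS⟩ ⟨x, hx⟩
      (by ext; simpa using hQp q hq) (fun h => hqx (congrArg Subtype.val h.eq))
  have hcomm : ∀ a b : G, a ∈ S → a ^ p = 1 → b ∈ S → b ^ p = 1 → Commute a b := by
    intro a b ha hap hb hbp
    have := hab ⟨a, ha⟩ ⟨b, hb⟩ (by ext; simpa using hap) (by ext; simpa using hbp)
    exact congrArg Subtype.val this.eq
  have hmem : ∀ e, e ∈ omega1 p (S : Subgroup G) ↔ e ∈ S ∧ e ^ p = 1 := by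
    intro e
    constructor
    · intro he
      refine ⟨hES he, ?_⟩
      have : e ∈ (S : Subgroup G) ∧ e ^ p = 1 := by
        rw [omega1] at he
        induction he using Subgroup.closure_induction with
        | mem x hx => exact hx
        | one => exact ⟨one_mem _, one_pow _⟩
        | mul a b _ _ ha hb =>
          exact ⟨mul_mem ha.1 hb.1, by
            rw [(hcomm a b ha.1 ha.2 hb.1 hb.2).mul_pow, ha.2, hb.2, one_mul]⟩
        | inv a _ ha => exact ⟨inv_mem ha.1, by rw [inv_pow, ha.2, inv_one]⟩
      exact this.2
    · intro he
      exact Subgroup.subset_closure he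
  have hzmem : ∀ y : (S : Subgroup G), y ∈ Subgroup.zpowers z → (y : G) ∈ Subgroup.zpowers (z : G) := by
    rintro _ ⟨l, rfl⟩
    exact ⟨l, by simp⟩
  apply le_antisymm
  · refine core hodd S (omega1 p (S : Subgroup G)) hmem (z : G) N z.2
      (by simpa using congrArg Subtype.val hzp)
      (fun x hx => congrArg Subtype.val (hzc ⟨x, hx⟩).eq)
      (fun x hx => by simpa using hzmem _ (hN ⟨x, hx⟩)) ?_ ?_ ?_ Q hQE hQcard ?_
    · intro e he
      obtain ⟨heS, hep⟩ := (hmem e).mp he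
      obtain ⟨f, hf⟩ := hf ⟨e, heS⟩ (by ext; simpa using hep)
      exact ⟨f, fun x hx => by simpa using congrArg Subtype.val (hf ⟨x, hx⟩)⟩
    · intro e he hx
      obtain ⟨heS, hep⟩ := (hmem e).mp he
      exact hzmem _ (hcent ⟨e, heS⟩ (by ext; simpa using hep)
        (fun x => Subtype.ext (hx x x.2).eq))
    · intro a ha b hb
      obtain ⟨h1, h2⟩ := (hmem a).mp ha
      obtain ⟨h3, h4⟩ := (hmem b).mp hb
      exact hcomm a b h1 h2 h3 h4
    · intro hle
      obtain ⟨l, hl⟩ := hle hq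
      apply hqx
      simp only at hl
      rw [← hl]
      exact Commute.zpow_right (congrArg Subtype.val (hzc ⟨x, hx⟩).eq) l
  · intro g hg
    rw [Subgroup.mem_centralizer_iff] at hg
    apply Subgroup.mem_normalizer_fintype
    intro n hn
    rw [← hg n hn]
    simpa using hn
end
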